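/- arXiv:2010.09972 — 3 statements merged into one kernel-verified Lean document; each statement's English description precedes it below -/
import Mathlib

section
/- Let s > 7/2 and suppose (ξ_k)_{k≥1} satisfies Σ_{k≥1} ‖ξ_k‖_{H^σ} < ∞ for every σ ≥ 0. Define, for θ ∈ H^s(𝕋), g(θ) = −(𝓗θ) ∂_x θ + ½ Σ_{k=1}^∞ 𝓛²_{ξ_k} θ. Then there is a constant C > 0 (depending on s and (ξ_k)) such that for all θ, ρ ∈ H^s(𝕋): 2 (g(θ) − g(ρ), θ − ρ)_{H^{s-2}} + Σ_{k=1}^∞ ‖𝓛_{ξ_k}(θ − ρ)‖²_{H^{s-2}} ≤ C (1 + ‖θ‖²_{H^s} + ‖ρ‖²_{H^s}) ‖θ − ρ‖²_{H^{s-2}}. -/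
noncomputable section
open scoped BigOperators

/-- A (complex-valued) function on the torus `𝕋 = ℝ/2πℤ`, represented by its sequence of
Fourier coefficients `f̂ : ℤ → ℂ`. -/
abbrev FC := ℤ → ℂ

namespace FC

/-- The Sobolev weight `(1+k²)^s`. -/
def wt (s : ℝ) (k : ℤ) : ℝ := (1 + (k : ℝ) ^ 2) ^ s

/-- `c` represents a function belonging to the Sobolev space `H^s(𝕋)`. -/
def memHs (s : ℝ) (c : FC) : Prop := Summable fun k : ℤ => wt s k * ‖c k‖ ^ 2

/-- The `H^s(𝕋)` norm: `‖f‖²_{H^s} = Σ_{k∈ℤ} (1+k²)^s |f̂(k)|²`. -/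
def hsNorm (s : ℝ) (c : FC) : ℝ := Real.sqrt (∑' k : ℤ, wt s k * ‖c k‖ ^ 2)

/-- The `H^s(𝕋)` inner product `(f,g)_{H^s} = Σ_{k∈ℤ} (1+k²)^s f̂(k) conj(ĝ(k))`
(its real part; the sum is real for real-valued functions). -/
def hsInner (s : ℝ) (c d : FC) : ℝ :=
  (∑' k : ℤ, ((wt s k : ℂ) * (c k * (starRingEnd ℂ) (d k)))).re

/-- `c` represents a real-valued function (conjugate-symmetric coefficients). -/
def isReal (c : FC) : Prop := ∀ k : ℤ, c (-k) = (starRingEnd ℂ) (c k)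

/-- The derivative `∂ₓ`, i.e. the Fourier multiplier `ik`. -/
def D1 (c : FC) : FC := fun k => Complex.I * (k : ℂ) * c k

/-- The pointwise product of functions, i.e. convolution of Fourier coefficients. -/
def mul (c d : FC) : FC := fun k => ∑' j : ℤ, c j * d (k - j)

/-- The represented function, evaluated at `x ∈ ℝ`. -/
def eval (c : FC) (x : ℝ) : ℂ := ∑' k : ℤ, c k * Complex.exp (Complex.I * (k : ℂ) * (x : ℂ))

/-- The `L^∞` norm (supremum of the represented periodic function over ℝ). -/
def linfty (c : FC) : ℝ := ⨆ x : ℝ, ‖eval c x‖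

/-- The `W^{1,∞}` norm. -/
def w1infty (c : FC) : ℝ := linfty c + linfty (D1 c)

/-- A Fourier multiplier operator with real symbol `m`. -/
def mult (m : ℤ → ℝ) (c : FC) : FC := fun k => (m k : ℂ) * c k

/-- The operator `(1-∂ₓ²)⁻¹`, i.e. the Fourier multiplier `(1+k²)⁻¹`. -/
def helmInv : FC → FC := mult fun k => (1 + (k : ℝ) ^ 2)⁻¹

/-- The operator `1-∂ₓ²`, i.e. the Fourier multiplier `1+k²`. -/
def helm : FC → FC := mult fun k => 1 + (k : ℝ) ^ 2

/-- The operator `T̃_ε = (1-ε²∂ₓ²)⁻¹`, i.e. the Fourier multiplier `(1+ε²k²)⁻¹`. -/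
def T (ε : ℝ) : FC → FC := mult fun k => (1 + ε ^ 2 * (k : ℝ) ^ 2)⁻¹

/-- The periodic Hilbert transform, i.e. the Fourier multiplier `-i·sgn(k)`. -/
def hilbert (c : FC) : FC := fun k => -Complex.I * (Int.sign k : ℂ) * c k

/-- The Friedrichs-type mollifier `J_ε`, the Fourier multiplier `ĵ(εk)`. -/
def Jmol (jhat : ℝ → ℝ) (ε : ℝ) : FC → FC := mult fun k => jhat (ε * (k : ℝ))

/-- The generalized Lie derivative `𝓛_ξ f = ξ ∂ₓ f + (∂ₓ ξ) f`. -/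
def lie (ξ c : FC) : FC := mul ξ (D1 c) + mul (D1 ξ) c

/-- `𝓛²_ξ f = 𝓛_ξ (𝓛_ξ f)`. -/
def lie2 (ξ c : FC) : FC := lie ξ (lie ξ c)

/-- The coefficientwise sum `Σ_{k∈ℕ} F k` of a sequence of functions. -/
def tsumFC (F : ℕ → FC) : FC := fun m => ∑' k : ℕ, F k m

/-- The norm on the product space `H^{s₁}×H^{s₂}`. -/
def pairNorm (s₁ s₂ : ℝ) (c d : FC) : ℝ := Real.sqrt (hsNorm s₁ c ^ 2 + hsNorm s₂ d ^ 2)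

/-- The inner product on the product space `H^{s₁}×H^{s₂}`:
`((c₁,d₁),(c₂,d₂)) ↦ (c₁,c₂)_{H^{s₁}} + (d₁,d₂)_{H^{s₂}}`. -/
def pairInner (s₁ s₂ : ℝ) (c₁ d₁ c₂ d₂ : FC) : ℝ := hsInner s₁ c₁ c₂ + hsInner s₂ d₁ d₂

end FC

/-- The singular drift of the stochastic CCF model:
`g(θ) = −(𝓗θ) ∂ₓθ + ½ Σ_k 𝓛²_{ξ_k} θ`. -/
def gCCF (ξ : ℕ → FC) (θ : FC) : FC :=
  -(FC.mul (FC.hilbert θ) (FC.D1 θ)) + (1 / 2 : ℝ) • FC.tsumFC fun k => FC.lie2 (ξ k) θ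

namespace CCFP

def jb (p x : ℝ) : ℝ := (1 + x ^ 2) ^ p

lemma wt_eq (p : ℝ) (k : ℤ) : FC.wt p k = jb p k := rfl

lemma base_pos (x : ℝ) : 0 < 1 + x ^ 2 := by positivity
lemma base_ge (x : ℝ) : 1 ≤ 1 + x ^ 2 := by nlinarith [sq_nonneg x]

lemma jb_pos (p x : ℝ) : 0 < jb p x := Real.rpow_pos_of_pos (base_pos x) p

lemma jb_nonneg (p x : ℝ) : 0 ≤ jb p x := (jb_pos p x).le

lemma jb_add (p q x : ℝ) : jb (p + q) x = jb p x * jb q x :=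
  Real.rpow_add (base_pos x) p q

lemma jb_one (x : ℝ) : jb 1 x = 1 + x ^ 2 := Real.rpow_one _

lemma jb_mono {p q : ℝ} (h : p ≤ q) (x : ℝ) : jb p x ≤ jb q x :=
  Real.rpow_le_rpow_of_exponent_le (base_ge x) h

lemma jb_ge_one {p : ℝ} (h : 0 ≤ p) (x : ℝ) : 1 ≤ jb p x :=
  Real.one_le_rpow (base_ge x) h

lemma jb_half_sq (p x : ℝ) : jb (p / 2) x * jb (p / 2) x = jb p x := by
  rw [← jb_add]; congr 1; ring

lemma abs_le_jb (x : ℝ) : |x| ≤ jb (1 / 2) x := by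
  unfold jb
  rw [← Real.sqrt_eq_rpow]
  apply Real.abs_le_sqrt
  linarith

lemma jb_le_abs {p : ℝ} (hp : 0 ≤ p) {x y : ℝ} (h : |x| ≤ |y|) : jb p x ≤ jb p y := by
  apply Real.rpow_le_rpow (base_pos x).le _ hp
  have := sq_le_sq.mpr h
  linarith

lemma peet3 {p k j a b y : ℝ} (hp : 0 ≤ p) (h1 : |y - j| ≤ |a| + |b|) (h2 : |y - k| ≤ |a| + |b|) :
    jb p y ≤ 4 ^ p * (jb p a * jb p b) * (jb (p / 2) k * jb (p / 2) j) := by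
  have key : ∀ z : ℝ, |y - z| ≤ |a| + |b| →
      jb (p / 2) y ≤ 4 ^ (p / 2) * (jb (p / 2) a * jb (p / 2) b) * jb (p / 2) z := by
    intro z hz
    unfold jb
    rw [← Real.mul_rpow (base_pos a).le (base_pos b).le, ← Real.mul_rpow (by norm_num) (by positivity),
      ← Real.mul_rpow (by positivity) (base_pos z).le]
    apply Real.rpow_le_rpow (base_pos y).le _ (by linarith)
    have hd : (y - z) ^ 2 ≤ (|a| + |b|) ^ 2 := by
      rw [← sq_abs (y - z)]
      exact pow_le_pow_left₀ (abs_nonneg _) hz 2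
    have e1 : (|a| + |b|) ^ 2 ≤ 2 * (a ^ 2 + b ^ 2) := by
      have := sq_nonneg (|a| - |b|)
      nlinarith [sq_abs a, sq_abs b]
    have e2 : 1 + (y - z) ^ 2 ≤ 2 * ((1 + a ^ 2) * (1 + b ^ 2)) := by
      nlinarith [mul_nonneg (sq_nonneg a) (sq_nonneg b)]
    have e3 : 1 + y ^ 2 ≤ 2 * (1 + (y - z) ^ 2) * (1 + z ^ 2) := by
      nlinarith [sq_nonneg (y - 2 * z), sq_nonneg ((y - z) * z)]
    have := base_pos z
    nlinarith
  have hk := key k h2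
  have hj := key j h1
  calc jb p y = jb (p / 2) y * jb (p / 2) y := (jb_half_sq p y).symm
    _ ≤ (4 ^ (p / 2) * (jb (p / 2) a * jb (p / 2) b) * jb (p / 2) k) *
        (4 ^ (p / 2) * (jb (p / 2) a * jb (p / 2) b) * jb (p / 2) j) :=
        mul_le_mul hk hj (jb_nonneg _ _) ((jb_nonneg _ _).trans hk)
    _ = _ := by
        rw [← jb_half_sq p a, ← jb_half_sq p b]
        have : (4 : ℝ) ^ p = 4 ^ (p / 2) * 4 ^ (p / 2) := by
          rw [← Real.rpow_add (by norm_num)]; congr 1; ring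
        rw [this]; ring

lemma peet2 {p k j a y : ℝ} (hp : 0 ≤ p) (hkj : k - j = a) (h : |y| ≤ max |k| |j|) :
    jb p y ≤ 2 ^ (p / 2) * jb (p / 2) a * (jb (p / 2) k * jb (p / 2) j) := by
  have key : ∀ u v : ℝ, (u - v) ^ 2 = a ^ 2 → jb (p / 2) u ≤ 2 ^ (p / 2) * jb (p / 2) a * jb (p / 2) v := by
    intro u v huv
    unfold jb
    rw [← Real.mul_rpow (by norm_num) (by positivity),
      ← Real.mul_rpow (by positivity) (base_pos v).le]
    apply Real.rpow_le_rpow (base_pos u).le _ (by linarith)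
    rw [← huv]
    nlinarith [sq_nonneg (u - 2 * v), sq_nonneg ((u - v) * v)]
  rcases le_max_iff.mp h with h | h
  · calc jb p y ≤ jb p k := jb_le_abs hp h
      _ = jb (p / 2) k * jb (p / 2) k := (jb_half_sq p k).symm
      _ ≤ jb (p / 2) k * (2 ^ (p / 2) * jb (p / 2) a * jb (p / 2) j) :=
        mul_le_mul_of_nonneg_left (key k j (by rw [hkj])) (jb_nonneg _ _)
      _ = _ := by ring
  · calc jb p y ≤ jb p j := jb_le_abs hp h
      _ = jb (p / 2) j * jb (p / 2) j := (jb_half_sq p j).symm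
      _ ≤ jb (p / 2) j * (2 ^ (p / 2) * jb (p / 2) a * jb (p / 2) k) :=
        mul_le_mul_of_nonneg_left (key j k (by rw [← hkj]; ring)) (jb_nonneg _ _)
      _ = _ := by ring

/-! Calculus -/

lemma jb_hasDeriv (p x : ℝ) : HasDerivAt (jb p) (2 * p * x * jb (p - 1) x) x := by
  have h : HasDerivAt (fun x : ℝ => 1 + x ^ 2) (2 * x) x := by
    simpa using (hasDerivAt_pow 2 x).const_add 1
  have := h.rpow_const (p := p) (Or.inl (base_pos x).ne')
  unfold jb
  convert this using 1
  ring

lemma sq_jb_le (p x : ℝ) : x ^ 2 * jb (p - 1) x ≤ jb p x := by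
  have : jb p x = jb 1 x * jb (p - 1) x := by rw [← jb_add]; congr 1; ring
  rw [this, jb_one]
  have := jb_pos (p - 1) x
  nlinarith

/-- mean value on a segment -/
lemma mvt {f f' : ℝ → ℝ} {x y C : ℝ} (hf : ∀ z, HasDerivAt f (f' z) z)
    (hb : ∀ z ∈ Set.uIcc x y, |f' z| ≤ C) : |f y - f x| ≤ C * |y - x| := by
  have := Convex.norm_image_sub_le_of_norm_hasDerivWithin_le (f := f) (f' := f') (C := C)
    (s := Set.uIcc x y) (x := x) (y := y)
    (fun z _ => (hf z).hasDerivWithinAt) (fun z hz => by simpa using hb z hz)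
    (convex_uIcc x y) Set.left_mem_uIcc Set.right_mem_uIcc
  simpa using this

def phi (r x : ℝ) : ℝ := x * jb r x
def psi (r x : ℝ) : ℝ := x * phi r x

lemma phi_hasDeriv (r x : ℝ) : HasDerivAt (phi r) (jb r x + 2 * r * (x ^ 2 * jb (r - 1) x)) x := by
  unfold phi
  have := (hasDerivAt_id x).mul (jb_hasDeriv r x)
  refine HasDerivAt.congr_deriv this ?_
  simp only [id]; ring

lemma phi'_bound {r : ℝ} (hr : 0 ≤ r) (x : ℝ) :
    |jb r x + 2 * r * (x ^ 2 * jb (r - 1) x)| ≤ (1 + 2 * r) * jb r x := by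
  have h := sq_jb_le r x
  have h0 : 0 ≤ x ^ 2 * jb (r - 1) x := mul_nonneg (sq_nonneg x) (jb_nonneg _ _)
  have := jb_nonneg r x
  rw [abs_of_nonneg (by positivity)]
  nlinarith

def psi1 (r x : ℝ) : ℝ := phi r x + x * (jb r x + 2 * r * (x ^ 2 * jb (r - 1) x))

lemma psi_hasDeriv (r x : ℝ) : HasDerivAt (psi r) (psi1 r x) x := by
  unfold psi psi1
  have := (hasDerivAt_id x).mul (phi_hasDeriv r x)
  refine HasDerivAt.congr_deriv this ?_
  simp only [id]; ring

lemma psi1_eq (r x : ℝ) : psi1 r x = 2 * (x * jb r x) + 2 * r * (x ^ 3 * jb (r - 1) x) := by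
  unfold psi1 phi; ring

def psi2 (r x : ℝ) : ℝ := 2 * (jb r x + 2 * r * (x ^ 2 * jb (r - 1) x)) +
  2 * r * (3 * (x ^ 2 * jb (r - 1) x) + 2 * (r - 1) * (x ^ 4 * jb (r - 2) x))

lemma psi1_hasDeriv (r x : ℝ) : HasDerivAt (psi1 r) (psi2 r x) x := by
  have e : psi1 r = fun x => 2 * (phi r x) + 2 * r * (x ^ 3 * jb (r - 1) x) := by
    funext x; rw [psi1_eq]; rfl
  rw [e]
  have h3 := ((hasDerivAt_pow 3 x).mul (jb_hasDeriv (r - 1) x)).const_mul (2 * r)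
  have := ((phi_hasDeriv r x).const_mul 2).add h3
  refine HasDerivAt.congr_deriv this ?_
  unfold psi2
  have : r - 1 - 1 = r - 2 := by ring
  rw [this]; push_cast; ring

lemma psi2_bound {r : ℝ} (hr : 1 ≤ r) (x : ℝ) :
    |psi2 r x| ≤ (2 + 10 * r + 4 * r * r) * jb r x := by
  have h := sq_jb_le r x
  have h0 : 0 ≤ x ^ 2 * jb (r - 1) x := mul_nonneg (sq_nonneg x) (jb_nonneg _ _)
  have h4 : x ^ 4 * jb (r - 2) x ≤ jb r x := by
    have := sq_jb_le (r - 1) x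
    have e : r - 1 - 1 = r - 2 := by ring
    rw [e] at this
    calc x ^ 4 * jb (r - 2) x = x ^ 2 * (x ^ 2 * jb (r - 2) x) := by ring
      _ ≤ x ^ 2 * jb (r - 1) x := mul_le_mul_of_nonneg_left this (sq_nonneg x)
      _ ≤ _ := h
  have h40 : 0 ≤ x ^ 4 * jb (r - 2) x := mul_nonneg (by positivity) (jb_nonneg _ _)
  have hj := jb_nonneg r x
  have hr1 : 0 ≤ r - 1 := by linarith
  unfold psi2
  rw [abs_of_nonneg (by positivity)]
  have t1 := mul_le_mul_of_nonneg_left h (show 0 ≤ 10 * r by linarith)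
  have t2 := mul_le_mul_of_nonneg_left h4 (show 0 ≤ 4 * r * (r - 1) by positivity)
  nlinarith [mul_nonneg (by linarith : (0:ℝ) ≤ r) hj]

/-- second difference -/
lemma psi_second_diff {r : ℝ} (hr : 1 ≤ r) {j a b Q : ℝ}
    (hQ : ∀ y, |y - j| ≤ |a| + |b| → |y - (j + a + b)| ≤ |a| + |b| → jb r y ≤ Q) :
    |psi r (j + a + b) + psi r j - psi r (j + a) - psi r (j + b)| ≤
      (2 + 10 * r + 4 * r * r) * Q * (|a| * |b|) := by
  have hin : ∀ x ∈ Set.uIcc j (j + b), ∀ y ∈ Set.uIcc x (x + a), jb r y ≤ Q := by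
    intro x hx y hy
    obtain ⟨t, ht, rfl⟩ : ∃ t ∈ Set.uIcc 0 b, x = j + t := by
      refine ⟨x - j, ?_, by ring⟩
      rw [Set.mem_uIcc] at hx ⊢
      rcases hx with h | h
      · left; constructor <;> linarith [h.1, h.2]
      · right; constructor <;> linarith [h.1, h.2]
    obtain ⟨u, hu, rfl⟩ : ∃ u ∈ Set.uIcc 0 a, y = j + t + u := by
      refine ⟨y - (j + t), ?_, by ring⟩
      rw [Set.mem_uIcc] at hy ⊢
      rcases hy with h | h
      · left; constructor <;> linarith [h.1, h.2]
      · right; constructor <;> linarith [h.1, h.2]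
    have A : ∀ c z : ℝ, z ∈ Set.uIcc 0 c → |z| ≤ |c| ∧ |z - c| ≤ |c| := by
      intro c z hz
      rw [Set.mem_uIcc] at hz
      rcases hz with h | h
      · rw [abs_of_nonneg h.1, abs_of_nonneg (h.1.trans h.2), abs_of_nonpos (by linarith [h.2])]
        constructor <;> linarith [h.1, h.2]
      · rw [abs_of_nonpos h.2, abs_of_nonpos (h.1.trans h.2), abs_of_nonneg (by linarith [h.1])]
        constructor <;> linarith [h.1, h.2]
    apply hQ
    · have : j + t + u - j = u + t := by ring
      rw [this]
      exact (abs_add_le _ _).trans (add_le_add (A a u hu).1 (A b t ht).1)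
    · have : j + t + u - (j + a + b) = (u - a) + (t - b) := by ring
      rw [this]
      exact (abs_add_le _ _).trans (add_le_add (A a u hu).2 (A b t ht).2)
  have hd : ∀ z, HasDerivAt (fun x => psi r (x + a) - psi r x) (psi1 r (z + a) - psi1 r z) z := by
    intro z
    have h1 : HasDerivAt (fun x => psi r (x + a)) (psi1 r (z + a)) z :=
      (psi_hasDeriv r (z + a)).comp_add_const z a
    exact h1.sub (psi_hasDeriv r z)
  have := mvt (x := j) (y := j + b) (C := (2 + 10 * r + 4 * r * r) * Q * |a|) hd (by
    intro z hz
    have := mvt (x := z) (y := z + a) (C := (2 + 10 * r + 4 * r * r) * Q) (psi1_hasDeriv r) (by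
      intro y hy
      refine (psi2_bound hr y).trans ?_
      exact mul_le_mul_of_nonneg_left (hin z hz y hy) (by positivity))
    simpa using this)
  have e : psi r (j + a + b) + psi r j - psi r (j + a) - psi r (j + b) =
    psi r (j + b + a) - psi r (j + b) - (psi r (j + a) - psi r j) := by
    rw [show j + b + a = j + a + b by ring]; ring
  rw [e]
  refine this.trans (le_of_eq ?_)
  rw [show j + b - j = b by ring]; ring

/-- The triple symbol bound. -/
lemma symbol3 {r : ℝ} (hr : 1 ≤ r) (k m j : ℝ) :
    |m * (phi r k + phi r j - 2 * phi r m) + (k + j - m) * (phi r k + phi r j - 2 * phi r (k + j - m))|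
     ≤ (8 * (2 + 10 * r + 4 * r * r) * 4 ^ r) *
      (jb (r + 1) (k - m) * jb (r + 1) (m - j) * (jb (r / 2) k * jb (r / 2) j)) := by
  obtain ⟨a, ha⟩ : ∃ a, a = k - m := ⟨_, rfl⟩
  obtain ⟨b, hb⟩ : ∃ b, b = m - j := ⟨_, rfl⟩
  have hk : k = j + a + b := by rw [ha, hb]; ring
  have hm : m = j + b := by rw [hb]; ring
  rw [← ha, ← hb]
  set Q := 4 ^ r * (jb r a * jb r b) * (jb (r / 2) k * jb (r / 2) j) with hQ
  have hQ0 : 0 ≤ Q := by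
    have := jb_nonneg r a; have := jb_nonneg r b; have := jb_nonneg (r/2) k
    have := jb_nonneg (r/2) j; positivity
  have hQb : ∀ y, |y - j| ≤ |a| + |b| → |y - (j + a + b)| ≤ |a| + |b| → jb r y ≤ Q := by
    intro y h1 h2
    rw [← hk] at h2
    exact peet3 (by linarith) h1 h2
  have s1 := psi_second_diff hr hQb
  have s2 : |phi r k - phi r j| ≤ (1 + 2 * r) * Q * |k - j| := by
    apply mvt (phi_hasDeriv r)
    intro z hz
    refine (phi'_bound (by linarith) z).trans ?_
    apply mul_le_mul_of_nonneg_left _ (by linarith)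
    have hab : |k - j| ≤ |a| + |b| := by
      rw [hk, show j + a + b - j = a + b by ring]; exact abs_add_le _ _
    apply hQb
    · exact (Set.abs_sub_left_of_mem_uIcc hz).trans hab
    · rw [← hk, abs_sub_comm]
      exact (Set.abs_sub_right_of_mem_uIcc hz).trans hab
  have id1 : m * (phi r k + phi r j - 2 * phi r m) + (k + j - m) * (phi r k + phi r j - 2 * phi r (k + j - m))
     = 2 * (psi r (j + a + b) + psi r j - psi r (j + a) - psi r (j + b)) - (k - j) * (phi r k - phi r j) := by
    rw [← hk, ← hm, show j + a = k + j - m by rw [ha]; ring]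
    unfold psi; ring
  rw [id1]
  have hB : jb (r + 1) a * jb (r + 1) b = (jb r a * jb r b) * ((1 + a ^ 2) * (1 + b ^ 2)) := by
    rw [jb_add, jb_add, jb_one, jb_one]; ring
  rw [hB]
  have hrhs : (8 * (2 + 10 * r + 4 * r * r) * 4 ^ r) *
      (jb r a * jb r b * ((1 + a ^ 2) * (1 + b ^ 2)) * (jb (r / 2) k * jb (r / 2) j))
      = (2 + 10 * r + 4 * r * r) * Q * (8 * ((1 + a ^ 2) * (1 + b ^ 2))) := by
    rw [hQ]; ring
  rw [hrhs]
  have hab1 : |a| * |b| ≤ (1 + a ^ 2) * (1 + b ^ 2) := by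
    rw [← sq_abs a, ← sq_abs b]
    nlinarith [sq_nonneg (|a| - |b|), mul_nonneg (sq_nonneg |a|) (sq_nonneg |b|), sq_nonneg |a|, sq_nonneg |b|]
  have hab2 : (k - j) ^ 2 ≤ 2 * ((1 + a ^ 2) * (1 + b ^ 2)) := by
    rw [hk, show j + a + b - j = a + b by ring]
    nlinarith [sq_nonneg (a - b), mul_nonneg (sq_nonneg a) (sq_nonneg b)]
  have hc0 : 0 ≤ (2 + 10 * r + 4 * r * r) * Q := by positivity
  calc _ ≤ |2 * (psi r (j + a + b) + psi r j - psi r (j + a) - psi r (j + b))| + |(k - j) * (phi r k - phi r j)| :=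
        abs_sub _ _
    _ ≤ 2 * ((2 + 10 * r + 4 * r * r) * Q * (|a| * |b|)) + |k - j| * ((1 + 2 * r) * Q * |k - j|) := by
        rw [abs_mul, abs_mul, abs_two]
        gcongr
    _ = (2 + 10 * r + 4 * r * r) * Q * (2 * (|a| * |b|)) + (1 + 2 * r) * Q * (k - j) ^ 2 := by
        rw [← sq_abs (k - j)]; ring
    _ ≤ (2 + 10 * r + 4 * r * r) * Q * (2 * (|a| * |b|)) + (2 + 10 * r + 4 * r * r) * Q * (k - j) ^ 2 := by
        have : (1 + 2 * r) * Q ≤ (2 + 10 * r + 4 * r * r) * Q :=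
          mul_le_mul_of_nonneg_right (by nlinarith) hQ0
        exact add_le_add le_rfl (mul_le_mul_of_nonneg_right this (sq_nonneg _))
    _ ≤ _ := by
        rw [← mul_add]
        apply mul_le_mul_of_nonneg_left _ hc0
        nlinarith [mul_pos (base_pos a) (base_pos b)]

/-- The double symbol bound. -/
lemma symbol2 {r : ℝ} (hr : 1 ≤ r) (k j : ℝ) :
    |j * jb r k - k * jb r j| ≤ ((2 * r + 1) * 2 ^ (r / 2)) *
      (jb ((r + 1) / 2) (k - j) * (jb (r / 2) k * jb (r / 2) j)) := by
  set Q := 2 ^ (r / 2) * jb (r / 2) (k - j) * (jb (r / 2) k * jb (r / 2) j) with hQ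
  have hQ0 : 0 ≤ Q := by
    have := jb_nonneg (r/2) (k-j); have := jb_nonneg (r/2) k
    have := jb_nonneg (r/2) j; positivity
  have hQb : ∀ y, |y| ≤ max |k| |j| → jb r y ≤ Q := fun y h => peet2 (by linarith) rfl h
  have s1 : |j * jb r k - j * jb r j| ≤ (2 * r * Q) * |k - j| := by
    apply mvt (f := fun x => j * jb r x) (fun z => (jb_hasDeriv r z).const_mul j)
    intro z hz
    have hzm : |z| ≤ max |k| |j| := by
      rw [Set.mem_uIcc] at hz
      rcases hz with h | h
      · rw [max_comm]; exact abs_le_max_abs_abs h.1 h.2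
      · exact abs_le_max_abs_abs h.1 h.2
    set y := max |k| |j| with hy
    have hy0 : 0 ≤ y := le_max_of_le_left (abs_nonneg k)
    have hr1 : jb (r - 1 / 2) z ≤ jb (r - 1 / 2) y := jb_le_abs (by linarith) (by rwa [abs_of_nonneg hy0])
    have hj : |j| ≤ jb (1 / 2) y :=
      (le_max_right |k| |j|).trans ((le_abs_self y).trans (abs_le_jb y))
    have hz1 : |z| * jb (r - 1) z ≤ jb (r - 1 / 2) z := by
      have : jb (r - 1 / 2) z = jb (1 / 2) z * jb (r - 1) z := by rw [← jb_add]; congr 1; ring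
      rw [this]
      exact mul_le_mul_of_nonneg_right (abs_le_jb z) (jb_nonneg _ _)
    have hr0 : 0 ≤ r := by linarith
    rw [show j * (2 * r * z * jb (r - 1) z) = (2 * r) * (j * (z * jb (r - 1) z)) by ring, abs_mul (2 * r), abs_mul j,
      abs_mul z, abs_of_nonneg (by positivity : 0 ≤ 2 * r), abs_of_nonneg (jb_nonneg _ _)]
    apply mul_le_mul_of_nonneg_left _ (by positivity)
    calc |j| * (|z| * jb (r - 1) z) ≤ jb (1 / 2) y * jb (r - 1 / 2) y :=
          mul_le_mul hj (hz1.trans hr1) (mul_nonneg (abs_nonneg _) (jb_nonneg _ _)) (jb_nonneg _ _)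
      _ = jb r y := by rw [← jb_add]; congr 1; ring
      _ ≤ Q := hQb y (by rw [abs_of_nonneg hy0])
  have s2 : |(k - j) * jb r j| ≤ Q * |k - j| := by
    rw [abs_mul, abs_of_nonneg (jb_nonneg _ _), mul_comm]
    exact mul_le_mul_of_nonneg_right (hQb j (le_max_right _ _)) (abs_nonneg _)
  have e : j * jb r k - k * jb r j = (j * jb r k - j * jb r j) - (k - j) * jb r j := by ring
  rw [e]
  have hr0 : 0 ≤ r := by linarith
  calc _ ≤ (2 * r * Q) * |k - j| + Q * |k - j| := (abs_sub _ _).trans (add_le_add s1 s2)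
    _ = (2 * r + 1) * Q * |k - j| := by ring
    _ ≤ (2 * r + 1) * Q * jb (1 / 2) (k - j) :=
        mul_le_mul_of_nonneg_left (abs_le_jb _) (by positivity)
    _ = _ := by
        rw [hQ, show (r + 1) / 2 = r / 2 + 1 / 2 by ring, jb_add]; ring

end CCFP
namespace CCFP

lemma coef3 {r : ℝ} (hr : 0 ≤ r) {k j a b y1 y2 y3 : ℝ}
    (h1 : |y1 - j| ≤ |a| + |b| ∧ |y1 - k| ≤ |a| + |b|)
    (h2 : |y2 - j| ≤ |a| + |b| ∧ |y2 - k| ≤ |a| + |b|)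
    (h3 : |y3 - j| ≤ |a| + |b| ∧ |y3 - k| ≤ |a| + |b|) :
    jb r y1 * |y2| * |y3| ≤ 4 ^ (r + 1) *
      (jb (r + 1) a * jb (r + 1) b * (jb ((r + 1) / 2) k * jb ((r + 1) / 2) j)) := by
  have e1 := peet3 hr h1.1 h1.2
  have e2 := (abs_le_jb y2).trans (peet3 (by norm_num) h2.1 h2.2)
  have e3 := (abs_le_jb y3).trans (peet3 (by norm_num) h3.1 h3.2)
  have hm := mul_le_mul (mul_le_mul e1 e2 (abs_nonneg _) ((jb_nonneg _ _).trans e1)) e3 (abs_nonneg _)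
    (mul_nonneg ((jb_nonneg _ _).trans e1) ((abs_nonneg _).trans e2))
  refine hm.trans (le_of_eq ?_)
  have f1 : ∀ x, jb (r + 1) x = jb r x * jb (1 / 2) x * jb (1 / 2) x := by
    intro x; rw [← jb_add, ← jb_add]; congr 1; ring
  have f2 : ∀ x, jb ((r + 1) / 2) x = jb (r / 2) x * jb (1 / 2 / 2) x * jb (1 / 2 / 2) x := by
    intro x; rw [← jb_add, ← jb_add]; congr 1; ring
  have f3 : (4 : ℝ) ^ (r + 1) = 4 ^ r * 4 ^ (1 / 2 : ℝ) * 4 ^ (1 / 2 : ℝ) := by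
    rw [← Real.rpow_add (by norm_num), ← Real.rpow_add (by norm_num)]; congr 1; ring
  rw [f1, f1, f2, f2, f3]; ring

lemma coef2 {r : ℝ} (hr : 0 ≤ r) (k j : ℝ) :
    jb r k * |j| ≤ 2 ^ ((r + 1) / 2) *
      (jb ((r + 1) / 2) (k - j) * (jb ((r + 1) / 2) k * jb ((r + 1) / 2) j)) := by
  set y := max |k| |j| with hy
  have hy0 : 0 ≤ y := le_max_of_le_left (abs_nonneg k)
  have h1 : jb r k ≤ jb r y := jb_le_abs hr (by rw [abs_of_nonneg hy0]; exact le_max_left _ _)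
  have h2 : |j| ≤ jb 1 y :=
    ((le_max_right |k| |j|).trans ((le_abs_self y).trans (abs_le_jb y))).trans (jb_mono (by norm_num) y)
  calc jb r k * |j| ≤ jb r y * jb 1 y := mul_le_mul h1 h2 (abs_nonneg _) (jb_nonneg _ _)
    _ = jb (r + 1) y := (jb_add _ _ _).symm
    _ ≤ _ := peet2 (k := k) (j := j) (by linarith) rfl (by rw [abs_of_nonneg hy0])
    _ = _ := by ring

lemma coef2' {r : ℝ} (hr : 0 ≤ r) (k j : ℝ) :
    jb r k * |k - j| ≤ 2 ^ (r / 2) *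
      (jb ((r + 1) / 2) (k - j) * (jb (r / 2) k * jb (r / 2) j)) := by
  have h1 := peet2 (k := k) (j := j) hr rfl (le_max_left |k| |j|)
  calc _ ≤ (2 ^ (r / 2) * jb (r / 2) (k - j) * (jb (r / 2) k * jb (r / 2) j)) * jb (1 / 2) (k - j) :=
        mul_le_mul h1 (abs_le_jb _) (abs_nonneg _) ((jb_nonneg _ _).trans h1)
    _ = _ := by rw [show (r + 1) / 2 = r / 2 + 1 / 2 by ring, jb_add]; ring

lemma summable_jb_neg_one : Summable fun k : ℤ => jb (-1) (k : ℝ) := by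
  have h : Summable fun k : ℤ => 1 / (k : ℝ) ^ 2 :=
    Real.summable_one_div_int_pow.mpr (by norm_num)
  refine (h.add (hasSum_ite_eq (0 : ℤ) (1 : ℝ)).summable).of_nonneg_of_le (fun k => jb_nonneg _ _) ?_
  intro k
  unfold jb
  rw [Real.rpow_neg_one]
  by_cases hk : k = 0
  · simp [hk]
  · simp only [hk, if_false, add_zero, one_div]
    have : (0 : ℝ) < (k : ℝ) ^ 2 := by positivity
    exact inv_anti₀ this (by linarith)

def c0 : ℝ := Real.sqrt (∑' k : ℤ, jb (-1) (k : ℝ))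

lemma c0_nonneg : 0 ≤ c0 := Real.sqrt_nonneg _

def bn (p : ℝ) (c : FC) : ℝ := ∑' a : ℤ, jb p (a : ℝ) * ‖c a‖

lemma bn_nonneg (p : ℝ) (c : FC) : 0 ≤ bn p c :=
  tsum_nonneg fun _ => mul_nonneg (jb_nonneg _ _) (norm_nonneg _)

lemma bn_bound {p q : ℝ} (hq : 2 * p + 1 = q) {c : FC} (hc : FC.memHs q c) :
    (Summable fun a : ℤ => jb p (a : ℝ) * ‖c a‖) ∧ bn p c ≤ c0 * FC.hsNorm q c := by
  have hf : ∀ a : ℤ, (jb (-1 / 2) (a : ℝ)) ^ (2 : ℝ) = jb (-1) (a : ℝ) := by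
    intro a; rw [Real.rpow_two, sq, ← jb_add]; congr 1; norm_num
  have hg : ∀ a : ℤ, (jb (q / 2) (a : ℝ) * ‖c a‖) ^ (2 : ℝ) = FC.wt q a * ‖c a‖ ^ 2 := by
    intro a; rw [Real.rpow_two, mul_pow, sq (jb _ _), jb_half_sq]; rfl
  have h := Real.inner_le_Lp_mul_Lq_tsum_of_nonneg (f := fun a : ℤ => jb (-1 / 2) (a : ℝ))
    (g := fun a : ℤ => jb (q / 2) (a : ℝ) * ‖c a‖) Real.HolderConjugate.two_two
    (fun a => jb_nonneg _ _) (fun a => mul_nonneg (jb_nonneg _ _) (norm_nonneg _))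
    (by simp only [hf]; exact summable_jb_neg_one) (by simp only [hg]; exact hc)
  have h' := Real.summable_mul_of_Lp_Lq_of_nonneg (f := fun a : ℤ => jb (-1 / 2) (a : ℝ))
    (g := fun a : ℤ => jb (q / 2) (a : ℝ) * ‖c a‖) Real.HolderConjugate.two_two
    (fun a => jb_nonneg _ _) (fun a => mul_nonneg (jb_nonneg _ _) (norm_nonneg _))
    (by simp only [hf]; exact summable_jb_neg_one) (by simp only [hg]; exact hc)
  have e : ∀ a : ℤ, jb (-1 / 2) (a : ℝ) * (jb (q / 2) (a : ℝ) * ‖c a‖) = jb p (a : ℝ) * ‖c a‖ := by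
    intro a; rw [← mul_assoc, ← jb_add]; congr 2; linarith
  simp only [e, hf, hg] at h h'
  refine ⟨h', h.trans (le_of_eq ?_)⟩
  rw [← Real.sqrt_eq_rpow, ← Real.sqrt_eq_rpow]
  rfl

/-- reindexing for double sums -/
def e2 : ℤ × ℤ ≃ ℤ × ℤ where
  toFun p := (p.1 - p.2, p.2)
  invFun p := (p.1 + p.2, p.2)
  left_inv p := by simp
  right_inv p := by simp

def e2' : ℤ × ℤ ≃ ℤ × ℤ where
  toFun p := (p.1 - p.2, p.1)
  invFun p := (p.2, p.2 - p.1)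
  left_inv p := by simp
  right_inv p := by simp

def e3 : ℤ × ℤ × ℤ ≃ ℤ × ℤ × ℤ where
  toFun p := (p.1 - p.2.1, p.2.1 - p.2.2, p.2.2)
  invFun p := (p.1 + p.2.1 + p.2.2, p.2.1 + p.2.2, p.2.2)
  left_inv p := by ext <;> simp
  right_inv p := by ext <;> simp

def e3' : ℤ × ℤ × ℤ ≃ ℤ × ℤ × ℤ where
  toFun p := (p.1 - p.2.1, p.2.1 - p.2.2, p.1)
  invFun p := (p.2.2, p.2.2 - p.1, p.2.2 - p.1 - p.2.1)
  left_inv p := by ext <;> simp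
  right_inv p := by ext <;> simp

lemma hasSum_mul_nn {ι κ : Type*} {f : ι → ℝ} {g : κ → ℝ} {s t : ℝ} (hf : HasSum f s) (hg : HasSum g t)
    (hf0 : ∀ i, 0 ≤ f i) (hg0 : ∀ i, 0 ≤ g i) : HasSum (fun p : ι × κ => f p.1 * g p.2) (s * t) :=
  hf.mul hg (hf.summable.mul_of_nonneg hg.summable hf0 hg0)

lemma schur2 {K X : ℤ → ℝ} {S N : ℝ} (hK0 : ∀ a, 0 ≤ K a) (hK : HasSum K S)
    (hX : HasSum (fun a => X a ^ 2) N) {F : ℤ × ℤ → ℂ} {C : ℝ} (hC : 0 ≤ C)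
    (hF : ∀ k j, ‖F (k, j)‖ ≤ C * (K (k - j) * (X k * X j))) :
    Summable F ∧ ‖∑' p, F p‖ ≤ C * (S * N) := by
  have h := hasSum_mul_nn hK hX hK0 (fun a => sq_nonneg _)
  have h1 := (e2.hasSum_iff).mpr h
  have h2 := (e2'.hasSum_iff).mpr h
  have h3 := ((h1.add h2).mul_left (1 / 2)).mul_left C
  have hb : ∀ p, ‖F p‖ ≤ C * ((1 / 2) * (((fun p : ℤ × ℤ => K p.1 * X p.2 ^ 2) ∘ e2) p +
      ((fun p : ℤ × ℤ => K p.1 * X p.2 ^ 2) ∘ e2') p)) := by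
    rintro ⟨k, j⟩
    refine (hF k j).trans (mul_le_mul_of_nonneg_left ?_ hC)
    simp only [Function.comp, e2, e2', Equiv.coe_fn_mk]
    have := mul_nonneg (hK0 (k - j)) (sq_nonneg (X k - X j))
    nlinarith
  refine ⟨Summable.of_norm_bounded h3.summable hb, (tsum_of_norm_bounded h3 hb).trans (le_of_eq ?_)⟩
  ring

lemma schur3 {K X : ℤ → ℝ} {S N : ℝ} (hK0 : ∀ a, 0 ≤ K a) (hK : HasSum K S)
    (hX : HasSum (fun a => X a ^ 2) N) {F : ℤ × ℤ × ℤ → ℂ} {C : ℝ} (hC : 0 ≤ C)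
    (hF : ∀ k m j, ‖F (k, m, j)‖ ≤ C * (K (k - m) * K (m - j) * (X k * X j))) :
    Summable F ∧ ‖∑' p, F p‖ ≤ C * (S ^ 2 * N) := by
  have h' := hasSum_mul_nn hK hX hK0 (fun a => sq_nonneg _)
  have h := hasSum_mul_nn hK h' hK0 (fun a => mul_nonneg (hK0 _) (sq_nonneg _))
  have h1 := (e3.hasSum_iff).mpr h
  have h2 := (e3'.hasSum_iff).mpr h
  have h3 := ((h1.add h2).mul_left (1 / 2)).mul_left C
  have hb : ∀ p, ‖F p‖ ≤ C * ((1 / 2) * (((fun p : ℤ × ℤ × ℤ => K p.1 * (K p.2.1 * X p.2.2 ^ 2)) ∘ e3) p +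
      ((fun p : ℤ × ℤ × ℤ => K p.1 * (K p.2.1 * X p.2.2 ^ 2)) ∘ e3') p)) := by
    rintro ⟨k, m, j⟩
    refine (hF k m j).trans (mul_le_mul_of_nonneg_left ?_ hC)
    simp only [Function.comp, e3, e3', Equiv.coe_fn_mk]
    have := mul_nonneg (mul_nonneg (hK0 (k - m)) (hK0 (m - j))) (sq_nonneg (X k - X j))
    nlinarith
  refine ⟨Summable.of_norm_bounded h3.summable hb, (tsum_of_norm_bounded h3 hb).trans (le_of_eq ?_)⟩
  ring

/-! Convolutions -/

lemma mul_swap (c d : FC) (k : ℤ) : FC.mul c d k = ∑' j : ℤ, c (k - j) * d j := by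
  unfold FC.mul
  rw [← (Equiv.subLeft k).tsum_eq]
  apply tsum_congr
  intro j
  simp

/-- polynomially weighted summability -/
lemma conv_summable {p A : ℝ} (hp : 0 ≤ p) {c d : FC} (hc : Summable fun a : ℤ => jb p (a : ℝ) * ‖c a‖)
    (hd : ∀ k : ℤ, ‖d k‖ ≤ A * jb p k) (k : ℤ) :
    (Summable fun j : ℤ => c (k - j) * d j) ∧
    ‖∑' j : ℤ, c (k - j) * d j‖ ≤ (2 ^ p * A * bn p c) * jb p k := by
  have hA : 0 ≤ A := by
    have := (norm_nonneg _).trans (hd 0)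
    exact nonneg_of_mul_nonneg_left this (jb_pos _ _)
  have h := ((Equiv.subLeft k).hasSum_iff.mpr hc.hasSum).mul_left (2 ^ p * A * jb p (k : ℝ))
  have hb : ∀ j : ℤ, ‖c (k - j) * d j‖ ≤ (2 ^ p * A * jb p (k : ℝ)) *
      (((fun a : ℤ => jb p (a : ℝ) * ‖c a‖) ∘ (Equiv.subLeft k)) j) := by
    intro j
    simp only [Function.comp, Equiv.subLeft_apply, norm_mul]
    have hj : jb p (j : ℝ) ≤ 2 ^ p * jb p ((k - j : ℤ) : ℝ) * jb p (k : ℝ) := by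
      unfold jb
      rw [← Real.mul_rpow (by norm_num) (by positivity), ← Real.mul_rpow (by positivity) (by positivity)]
      apply Real.rpow_le_rpow (by positivity) _ hp
      push_cast
      generalize (k : ℝ) = x
      generalize (j : ℝ) = y
      nlinarith [sq_nonneg (y - 2 * x), sq_nonneg ((x - y) * x)]
    calc ‖c (k - j)‖ * ‖d j‖ ≤ ‖c (k - j)‖ * (A * (2 ^ p * jb p ((k - j : ℤ) : ℝ) * jb p (k : ℝ))) :=
          mul_le_mul_of_nonneg_left ((hd j).trans (mul_le_mul_of_nonneg_left hj hA)) (norm_nonneg _)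
      _ = _ := by ring
  refine ⟨Summable.of_norm_bounded h.summable hb, (tsum_of_norm_bounded h hb).trans (le_of_eq ?_)⟩
  unfold bn; ring

end CCFP
namespace CCFP


lemma bn_mono {p q : ℝ} (hpq : p ≤ q) {c : FC} (hc : Summable fun a : ℤ => jb q (a : ℝ) * ‖c a‖) :
    (Summable fun a : ℤ => jb p (a : ℝ) * ‖c a‖) ∧ bn p c ≤ bn q c := by
  have hle : ∀ a : ℤ, jb p (a : ℝ) * ‖c a‖ ≤ jb q (a : ℝ) * ‖c a‖ := fun a =>
    mul_le_mul_of_nonneg_right (jb_mono hpq _) (norm_nonneg _)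
  have hs := hc.of_nonneg_of_le (fun a => mul_nonneg (jb_nonneg _ _) (norm_nonneg _)) hle
  exact ⟨hs, hs.tsum_le_tsum hle hc⟩

lemma norm_D1 (c : FC) (k : ℤ) : ‖FC.D1 c k‖ = |(k : ℝ)| * ‖c k‖ := by
  unfold FC.D1
  rw [norm_mul, norm_mul, Complex.norm_I, one_mul, Complex.norm_intCast]

lemma abs_jb_le {p : ℝ} (x : ℝ) : |x| * jb p x ≤ jb (p + 1) x := by
  rw [add_comm, jb_add]
  exact mul_le_mul_of_nonneg_right ((abs_le_jb x).trans (jb_mono (by norm_num) x)) (jb_nonneg _ _)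

lemma D1_summable {p : ℝ} {c : FC} (hc : Summable fun a : ℤ => jb (p + 1) (a : ℝ) * ‖c a‖) :
    Summable fun a : ℤ => jb p (a : ℝ) * ‖FC.D1 c a‖ := by
  refine hc.of_nonneg_of_le (fun a => mul_nonneg (jb_nonneg _ _) (norm_nonneg _)) fun a => ?_
  rw [norm_D1]
  have := mul_le_mul_of_nonneg_right (abs_jb_le (p := p) (a : ℝ)) (norm_nonneg (c a))
  linarith

lemma D1_bound {p A : ℝ} {d : FC} (hd : ∀ k : ℤ, ‖d k‖ ≤ A * jb p k) (k : ℤ) :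
    ‖FC.D1 d k‖ ≤ A * jb (p + 1) k := by
  have hA : 0 ≤ A := nonneg_of_mul_nonneg_left ((norm_nonneg _).trans (hd 0)) (jb_pos _ _)
  rw [norm_D1]
  calc _ ≤ |(k : ℝ)| * (A * jb p k) := mul_le_mul_of_nonneg_left (hd k) (abs_nonneg _)
    _ = A * (|(k : ℝ)| * jb p k) := by ring
    _ ≤ _ := mul_le_mul_of_nonneg_left (abs_jb_le _) hA

lemma lie_eq {p A : ℝ} (hp : 0 ≤ p) {ξ d : FC}
    (hξ : Summable fun a : ℤ => jb (p + 1) (a : ℝ) * ‖ξ a‖)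
    (hd : ∀ k : ℤ, ‖d k‖ ≤ A * jb p k) (k : ℤ) :
    FC.lie ξ d k = Complex.I * k * ∑' j : ℤ, ξ (k - j) * d j := by
  unfold FC.lie
  rw [Pi.add_apply, mul_swap, mul_swap]
  have h1 := (conv_summable (by linarith) hξ (D1_bound hd) k).1
  have h2 := (conv_summable hp (D1_summable hξ) hd k).1
  rw [← h1.tsum_add h2, ← tsum_mul_left]
  apply tsum_congr
  intro j
  unfold FC.D1
  push_cast
  ring

lemma lie_bound {p A : ℝ} (hp : 0 ≤ p) {ξ d : FC}
    (hξ : Summable fun a : ℤ => jb (p + 1) (a : ℝ) * ‖ξ a‖)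
    (hd : ∀ k : ℤ, ‖d k‖ ≤ A * jb p k) (k : ℤ) :
    ‖FC.lie ξ d k‖ ≤ (2 ^ p * A * bn p ξ) * jb (p + 1) k := by
  rw [lie_eq hp hξ hd]
  have h := (conv_summable hp (bn_mono (by linarith) hξ).1 hd k).2
  have := D1_bound (A := 2 ^ p * A * bn p ξ) (d := fun k => ∑' j : ℤ, ξ (k - j) * d j)
    (fun k => (conv_summable hp (bn_mono (by linarith) hξ).1 hd k).2) k
  exact this

lemma lie_sub {p A B : ℝ} (hp : 0 ≤ p) {ξ d e : FC}
    (hξ : Summable fun a : ℤ => jb (p + 1) (a : ℝ) * ‖ξ a‖)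
    (hd : ∀ k : ℤ, ‖d k‖ ≤ A * jb p k) (he : ∀ k : ℤ, ‖e k‖ ≤ B * jb p k) :
    FC.lie ξ (d - e) = FC.lie ξ d - FC.lie ξ e := by
  funext k
  have hde : ∀ k : ℤ, ‖(d - e) k‖ ≤ (A + B) * jb p k := by
    intro k
    rw [Pi.sub_apply, add_mul]
    exact (norm_sub_le _ _).trans (add_le_add (hd k) (he k))
  rw [Pi.sub_apply, lie_eq hp hξ hd, lie_eq hp hξ he, lie_eq hp hξ hde, ← mul_sub]
  have hξ' := (bn_mono (by linarith : p ≤ p + 1) hξ).1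
  rw [← (conv_summable hp hξ' hd k).1.tsum_sub (conv_summable hp hξ' he k).1]
  congr 1
  apply tsum_congr
  intro j
  rw [Pi.sub_apply]; ring

lemma b0 {A : ℝ} {v : FC} (hv : ∀ k, ‖v k‖ ≤ A) : ∀ k : ℤ, ‖v k‖ ≤ A * jb 0 k := by
  intro k; simpa [jb] using hv k

lemma lie_b {A : ℝ} {ξ v : FC} (hξ : Summable fun a : ℤ => jb 2 (a : ℝ) * ‖ξ a‖)
    (hv : ∀ k, ‖v k‖ ≤ A) (k : ℤ) : ‖FC.lie ξ v k‖ ≤ (A * bn 0 ξ) * jb 1 k := by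
  have := lie_bound le_rfl (bn_mono (by norm_num) hξ).1 (b0 hv) k
  simpa using this

lemma lie2_sub {A B : ℝ} {ξ d e : FC} (hξ : Summable fun a : ℤ => jb 2 (a : ℝ) * ‖ξ a‖)
    (hd : ∀ k, ‖d k‖ ≤ A) (he : ∀ k, ‖e k‖ ≤ B) :
    FC.lie2 ξ (d - e) = FC.lie2 ξ d - FC.lie2 ξ e := by
  unfold FC.lie2
  rw [lie_sub le_rfl (bn_mono (by norm_num) hξ).1 (b0 hd) (b0 he),
    lie_sub (p := 1) (by norm_num) (by norm_num; exact hξ) (lie_b hξ hd) (lie_b hξ he)]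

lemma lie2_bound {A : ℝ} {ξ v : FC} (hξ : Summable fun a : ℤ => jb 2 (a : ℝ) * ‖ξ a‖)
    (hv : ∀ k, ‖v k‖ ≤ A) (k : ℤ) : ‖FC.lie2 ξ v k‖ ≤ (2 * A * jb 2 k) * (bn 2 ξ) ^ 2 := by
  have hA : 0 ≤ A := (norm_nonneg _).trans (hv 0)
  have := lie_bound (p := 1) (by norm_num) (by norm_num; exact hξ) (lie_b hξ hv) k
  norm_num at this
  refine this.trans ?_
  have h0 := (bn_mono (by norm_num : (0:ℝ) ≤ 2) hξ).2
  have h1 := (bn_mono (by norm_num : (1:ℝ) ≤ 2) hξ).2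
  have := mul_le_mul h0 h1 (bn_nonneg _ _) (bn_nonneg _ _)
  have hj := jb_nonneg 2 (k : ℝ)
  calc _ = (2 * A * jb 2 k) * (bn 0 ξ * bn 1 ξ) := by ring
    _ ≤ _ := by
      rw [sq]; exact mul_le_mul_of_nonneg_left this (by positivity)

lemma lie2_eq {A : ℝ} {ξ v : FC} (hξ : Summable fun a : ℤ => jb 2 (a : ℝ) * ‖ξ a‖)
    (hv : ∀ k, ‖v k‖ ≤ A) (k : ℤ) : FC.lie2 ξ v k =
      Complex.I * k * ∑' m : ℤ, ξ (k - m) * (Complex.I * m * ∑' j : ℤ, ξ (m - j) * v j) := by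
  unfold FC.lie2
  rw [lie_eq (p := 1) (by norm_num) (by norm_num; exact hξ) (lie_b hξ hv)]
  congr 2
  funext m
  rw [lie_eq le_rfl (bn_mono (by norm_num) hξ).1 (b0 hv)]

lemma schur3n {K X : ℤ → ℝ} {S N : ℝ} (hK0 : ∀ a, 0 ≤ K a) (hK : HasSum K S)
    (hX : HasSum (fun a => X a ^ 2) N) {F : ℤ × ℤ × ℤ → ℂ} {C : ℝ} (hC : 0 ≤ C)
    (hF : ∀ k m j, ‖F (k, m, j)‖ ≤ C * (K (k - m) * K (m - j) * (X k * X j))) :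
    ∑' p, ‖F p‖ ≤ C * (S ^ 2 * N) := by
  have := (schur3 hK0 hK hX (F := fun p => ((‖F p‖ : ℝ) : ℂ)) hC (by
    intro k m j; simpa using hF k m j)).2
  rw [← Complex.ofReal_tsum, Complex.norm_real] at this
  exact (le_abs_self _).trans this

/-- swap first two -/
def s12 : ℤ × ℤ × ℤ ≃ ℤ × ℤ × ℤ where
  toFun p := (p.2.1, p.1, p.2.2)
  invFun p := (p.2.1, p.1, p.2.2)
  left_inv _ := rfl
  right_inv _ := rfl

/-- swap first and last -/
def s13 : ℤ × ℤ × ℤ ≃ ℤ × ℤ × ℤ where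
  toFun p := (p.2.2, p.2.1, p.1)
  invFun p := (p.2.2, p.2.1, p.1)
  left_inv _ := rfl
  right_inv _ := rfl

/-- reflect the middle index -/
def sm : ℤ × ℤ × ℤ ≃ ℤ × ℤ × ℤ where
  toFun p := (p.1, p.1 + p.2.2 - p.2.1, p.2.2)
  invFun p := (p.1, p.1 + p.2.2 - p.2.1, p.2.2)
  left_inv p := by ext <;> simp
  right_inv p := by ext <;> simp

def TT (ξ v : FC) (k m j : ℤ) : ℂ := ξ (k - m) * ξ (m - j) * (v j * starRingEnd ℂ (v k))

lemma TT_conj {ξ : FC} (h : FC.isReal ξ) (v : FC) (k m j : ℤ) : starRingEnd ℂ (TT ξ v k m j) = TT ξ v j m k := by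
  unfold TT
  simp only [map_mul, Complex.conj_conj]
  rw [← h, ← h, neg_sub, neg_sub]; ring

lemma TT_refl (ξ v : FC) (k m j : ℤ) : TT ξ v k (k + j - m) j = TT ξ v k m j := by
  unfold TT
  rw [show k - (k + j - m) = m - j by ring, show k + j - m - j = k - m by ring]; ring

lemma TT_norm (ξ v : FC) (k m j : ℤ) :
    ‖TT ξ v k m j‖ = ‖ξ (k - m)‖ * ‖ξ (m - j)‖ * (‖v k‖ * ‖v j‖) := by
  unfold TT
  simp only [norm_mul, RCLike.norm_conj]; ring

def F1 (r : ℝ) (ξ v : FC) (p : ℤ × ℤ × ℤ) : ℂ :=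
  ((-(jb r p.1 * p.1 * p.2.1) : ℝ) : ℂ) * TT ξ v p.1 p.2.1 p.2.2
def F2 (r : ℝ) (ξ v : FC) (p : ℤ × ℤ × ℤ) : ℂ :=
  (((jb r p.2.1 * p.2.1 * p.2.1) : ℝ) : ℂ) * TT ξ v p.1 p.2.1 p.2.2

lemma sym_bound {ξ v : FC} {q p C e : ℝ} {k m j : ℤ}
    (h : |e| ≤ C * (jb q ((k : ℝ) - m) * jb q ((m : ℝ) - j) * (jb p k * jb p j))) :
    ‖(e : ℂ) * TT ξ v k m j‖ ≤ C * ((fun a : ℤ => jb q (a : ℝ) * ‖ξ a‖) (k - m) *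
      (fun a : ℤ => jb q (a : ℝ) * ‖ξ a‖) (m - j) * ((fun a : ℤ => jb p (a : ℝ) * ‖v a‖) k *
      (fun a : ℤ => jb p (a : ℝ) * ‖v a‖) j)) := by
  rw [norm_mul, TT_norm, Complex.norm_real, Real.norm_eq_abs]
  have := mul_le_mul_of_nonneg_right h
    (by positivity : 0 ≤ ‖ξ (k - m)‖ * ‖ξ (m - j)‖ * (‖v k‖ * ‖v j‖))
  refine this.trans (le_of_eq ?_)
  push_cast
  ring

section energy
variable {r A : ℝ} {ξ v : FC} {N0 N1 : ℝ}

lemma X_hasSum {p N : ℝ} (h : HasSum (fun k : ℤ => FC.wt p k * ‖v k‖ ^ 2) N) :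
    HasSum (fun a : ℤ => (fun a : ℤ => jb (p / 2) (a : ℝ) * ‖v a‖) a ^ 2) N := by
  convert h using 2 with a
  rw [mul_pow, sq (jb _ _), jb_half_sq]; rfl

lemma hull (k m j : ℤ) :
    (|(k : ℝ) - j| ≤ |(k : ℝ) - m| + |(m : ℝ) - j| ∧ |(k : ℝ) - k| ≤ |(k : ℝ) - m| + |(m : ℝ) - j|) ∧
    (|(m : ℝ) - j| ≤ |(k : ℝ) - m| + |(m : ℝ) - j| ∧ |(m : ℝ) - k| ≤ |(k : ℝ) - m| + |(m : ℝ) - j|) := by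
  refine ⟨⟨?_, ?_⟩, ?_, ?_⟩
  · exact abs_sub_le _ _ _
  · rw [sub_self, abs_zero]; positivity
  · linarith [abs_nonneg ((k : ℝ) - m)]
  · rw [abs_sub_comm]; linarith [abs_nonneg ((m : ℝ) - j)]

lemma F1_bound (hr : 1 ≤ r) (k m j : ℤ) : ‖F1 r ξ v (k, m, j)‖ ≤ 4 ^ (r + 1) *
    ((fun a : ℤ => jb (r + 1) (a : ℝ) * ‖ξ a‖) (k - m) *
      (fun a : ℤ => jb (r + 1) (a : ℝ) * ‖ξ a‖) (m - j) *
      ((fun a : ℤ => jb ((r + 1) / 2) (a : ℝ) * ‖v a‖) k *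
      (fun a : ℤ => jb ((r + 1) / 2) (a : ℝ) * ‖v a‖) j)) := by
  apply sym_bound
  rw [abs_neg, abs_mul, abs_mul, abs_of_nonneg (jb_nonneg _ _)]
  exact coef3 (by linarith) (hull k m j).1 (hull k m j).1 (hull k m j).2

lemma F2_bound (hr : 1 ≤ r) (k m j : ℤ) : ‖F2 r ξ v (k, m, j)‖ ≤ 4 ^ (r + 1) *
    ((fun a : ℤ => jb (r + 1) (a : ℝ) * ‖ξ a‖) (k - m) *
      (fun a : ℤ => jb (r + 1) (a : ℝ) * ‖ξ a‖) (m - j) *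
      ((fun a : ℤ => jb ((r + 1) / 2) (a : ℝ) * ‖v a‖) k *
      (fun a : ℤ => jb ((r + 1) / 2) (a : ℝ) * ‖v a‖) j)) := by
  apply sym_bound
  rw [abs_mul, abs_mul, abs_of_nonneg (jb_nonneg _ _)]
  exact coef3 (by linarith) (hull k m j).2 (hull k m j).2 (hull k m j).2

lemma energy_f1 (hr : 1 ≤ r) (hξ : Summable fun a : ℤ => jb (r + 1) (a : ℝ) * ‖ξ a‖)
    (hv : ∀ k, ‖v k‖ ≤ A)
    (hN1 : HasSum (fun k : ℤ => FC.wt (r + 1) k * ‖v k‖ ^ 2) N1) :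
    (Summable fun k : ℤ => ‖(FC.wt r k : ℂ) * (FC.lie2 ξ v k * starRingEnd ℂ (v k))‖) ∧
    ∑' k : ℤ, ‖(FC.wt r k : ℂ) * (FC.lie2 ξ v k * starRingEnd ℂ (v k))‖ ≤ 4 ^ (r + 1) * (bn (r + 1) ξ ^ 2 * N1) ∧
    ∑' k : ℤ, (FC.wt r k : ℂ) * (FC.lie2 ξ v k * starRingEnd ℂ (v k)) = ∑' p, F1 r ξ v p := by
  have hK0 : ∀ a : ℤ, 0 ≤ jb (r + 1) (a : ℝ) * ‖ξ a‖ := fun a =>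
    mul_nonneg (jb_nonneg _ _) (norm_nonneg _)
  have hC : (0 : ℝ) ≤ 4 ^ (r + 1) := by positivity
  have hS := (schur3 hK0 hξ.hasSum (X_hasSum hN1) hC (F1_bound hr)).1
  have hSn := schur3n hK0 hξ.hasSum (X_hasSum hN1) hC (F1_bound hr)
  have hfib : ∀ k : ℤ, (FC.wt r k : ℂ) * (FC.lie2 ξ v k * starRingEnd ℂ (v k)) = ∑' q : ℤ × ℤ, F1 r ξ v (k, q) := by
    intro k
    rw [(hS.prod_factor k).tsum_prod, lie2_eq (bn_mono (by linarith) hξ).1 hv]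
    rw [← tsum_mul_left, ← tsum_mul_right, ← tsum_mul_left]
    apply tsum_congr
    intro m
    rw [← tsum_mul_left, ← tsum_mul_left, ← tsum_mul_left, ← tsum_mul_right, ← tsum_mul_left]
    apply tsum_congr
    intro j
    unfold F1 TT
    rw [wt_eq]
    push_cast
    linear_combination (jb r (k : ℝ) * k * ξ (k - m) * m * ξ (m - j) * v j * starRingEnd ℂ (v k) : ℂ) * Complex.I_mul_I
  have hle : ∀ k : ℤ, ‖(FC.wt r k : ℂ) * (FC.lie2 ξ v k * starRingEnd ℂ (v k))‖ ≤ ∑' q : ℤ × ℤ, ‖F1 r ξ v (k, q)‖ := by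
    intro k
    rw [hfib]
    exact norm_tsum_le_tsum_norm (hS.norm.prod_factor k)
  have hs1 : Summable fun k : ℤ => ‖(FC.wt r k : ℂ) * (FC.lie2 ξ v k * starRingEnd ℂ (v k))‖ :=
    hS.norm.prod.of_nonneg_of_le (fun _ => norm_nonneg _) hle
  refine ⟨hs1, ?_, ?_⟩
  · refine (hs1.tsum_le_tsum hle hS.norm.prod).trans ?_
    rw [← hS.norm.tsum_prod]
    exact hSn
  · rw [hS.tsum_prod]
    exact tsum_congr hfib

lemma energy_f2 (hr : 1 ≤ r) (hξ : Summable fun a : ℤ => jb (r + 1) (a : ℝ) * ‖ξ a‖)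
    (hreal : FC.isReal ξ) (hv : ∀ k, ‖v k‖ ≤ A)
    (hN1 : HasSum (fun k : ℤ => FC.wt (r + 1) k * ‖v k‖ ^ 2) N1) :
    ((FC.hsNorm r (FC.lie ξ v) ^ 2 : ℝ) : ℂ) = ∑' p, F2 r ξ v p := by
  have hK0 : ∀ a : ℤ, 0 ≤ jb (r + 1) (a : ℝ) * ‖ξ a‖ := fun a =>
    mul_nonneg (jb_nonneg _ _) (norm_nonneg _)
  have hC : (0 : ℝ) ≤ 4 ^ (r + 1) := by positivity
  have hS := (schur3 hK0 hξ.hasSum (X_hasSum hN1) hC (F2_bound hr)).1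
  unfold FC.hsNorm
  rw [Real.sq_sqrt (tsum_nonneg fun k => mul_nonneg (by rw [wt_eq]; exact jb_nonneg _ _) (sq_nonneg _)),
    Complex.ofReal_tsum, ← s12.tsum_eq, Summable.tsum_prod (f := fun c => F2 r ξ v (s12 c)) ((s12.summable_iff).mpr hS)]
  apply tsum_congr
  intro m
  rw [lie_eq le_rfl (bn_mono (by linarith) hξ).1 (b0 hv)]
  have hsm : Summable fun j : ℤ => ‖ξ (m - j) * v j‖ :=
    (conv_summable le_rfl (bn_mono (by linarith) hξ).1 (b0 hv) m).1.norm
  have hsm' : Summable fun j : ℤ => ‖starRingEnd ℂ (ξ (m - j) * v j)‖ := by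
    simpa only [RCLike.norm_conj] using hsm
  set Z := ∑' j : ℤ, ξ (m - j) * v j with hZ
  have e1 : starRingEnd ℂ Z * Z = ∑' q : ℤ × ℤ, starRingEnd ℂ (ξ (m - q.1) * v q.1) * (ξ (m - q.2) * v q.2) := by
    rw [hZ, Complex.conj_tsum, tsum_mul_tsum_of_summable_norm hsm' hsm]
  have e2 : ((FC.wt r m * ‖Complex.I * (m : ℂ) * Z‖ ^ 2 : ℝ) : ℂ) =
      (((jb r m * m * m) : ℝ) : ℂ) * (starRingEnd ℂ Z * Z) := by
    rw [norm_mul, norm_mul, Complex.norm_I, one_mul, mul_pow, Complex.norm_intCast, sq_abs, wt_eq,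
      Complex.conj_mul']
    push_cast; ring
  rw [e2, e1, ← tsum_mul_left]
  apply tsum_congr
  rintro ⟨k, j⟩
  simp only [s12, Equiv.coe_fn_mk, F2, TT, map_mul]
  rw [← hreal, neg_sub]
  ring

lemma energy (hr : 1 ≤ r) (hξ : Summable fun a : ℤ => jb (r + 1) (a : ℝ) * ‖ξ a‖)
    (hreal : FC.isReal ξ) (hv : ∀ k, ‖v k‖ ≤ A)
    (hN0 : HasSum (fun k : ℤ => FC.wt r k * ‖v k‖ ^ 2) N0)
    (hN1 : HasSum (fun k : ℤ => FC.wt (r + 1) k * ‖v k‖ ^ 2) N1) :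
    FC.hsNorm r (FC.lie ξ v) ^ 2 ≤ 4 ^ (r + 1) * (bn (r + 1) ξ ^ 2 * N1) ∧
    (∑' k : ℤ, (FC.wt r k : ℂ) * (FC.lie2 ξ v k * starRingEnd ℂ (v k))).re + FC.hsNorm r (FC.lie ξ v) ^ 2
      ≤ (8 * (2 + 10 * r + 4 * r * r) * 4 ^ r) * (bn (r + 1) ξ ^ 2 * N0) := by
  have hK0 : ∀ a : ℤ, 0 ≤ jb (r + 1) (a : ℝ) * ‖ξ a‖ := fun a =>
    mul_nonneg (jb_nonneg _ _) (norm_nonneg _)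
  have hC : (0 : ℝ) ≤ 4 ^ (r + 1) := by positivity
  have hS1 := (schur3 hK0 hξ.hasSum (X_hasSum hN1) hC (F1_bound hr)).1
  obtain ⟨hS2, hB2⟩ := schur3 hK0 hξ.hasSum (X_hasSum hN1) hC (F2_bound hr)
  rw [(energy_f1 hr hξ hv hN1).2.2]
  have hf2 := energy_f2 hr hξ hreal hv hN1
  constructor
  · rw [← hf2, Complex.norm_real] at hB2
    exact (le_abs_self _).trans hB2
  set h2 := FC.hsNorm r (FC.lie ξ v) ^ 2
  set S1 := ∑' p, F1 r ξ v p
  -- conj of first sum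
  have hH1 : HasSum (F1 r ξ v) S1 := hS1.hasSum
  have hH2 : HasSum (F2 r ξ v) (h2 : ℂ) := by rw [hf2]; exact hS2.hasSum
  have hH1c : HasSum (fun p => starRingEnd ℂ (F1 r ξ v (s13 p))) (starRingEnd ℂ S1) :=
    (Complex.hasSum_conj'.mpr ((s13.hasSum_iff).mpr hH1))
  have hG := (hH1.add hH1c).add (hH2.add hH2)
  have hG2 := hG.add ((sm.hasSum_iff).mpr hG)
  have hD : (0 : ℝ) ≤ 8 * (2 + 10 * r + 4 * r * r) * 4 ^ r := by positivity
  have hfin := (schur3 hK0 hξ.hasSum (X_hasSum hN0) hD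
    (F := fun p => (F1 r ξ v p + starRingEnd ℂ (F1 r ξ v (s13 p)) + (F2 r ξ v p + F2 r ξ v p)) +
      (((fun p => F1 r ξ v p + starRingEnd ℂ (F1 r ξ v (s13 p)) + (F2 r ξ v p + F2 r ξ v p)) ∘ sm) p)) (by
    intro k m j
    have hb := sym_bound (ξ := ξ) (v := v) (e := -((m : ℝ) * (phi r k + phi r j - 2 * phi r m) +
      ((k : ℝ) + j - m) * (phi r k + phi r j - 2 * phi r (k + j - m))))
      (by rw [abs_neg]; exact symbol3 hr k m j)
    refine le_trans (le_of_eq ?_) hb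
    congr 1
    simp only [Function.comp, sm, s13, Equiv.coe_fn_mk, F1, F2, map_mul, Complex.conj_ofReal,
      TT_conj hreal, TT_refl]
    unfold phi
    push_cast
    ring)).2
  rw [hG2.tsum_eq] at hfin
  have hz : S1 + starRingEnd ℂ S1 + ((h2 : ℂ) + h2) + (S1 + starRingEnd ℂ S1 + ((h2 : ℂ) + h2)) =
      ((4 * (S1.re + h2) : ℝ) : ℂ) := by
    rw [Complex.add_conj]; push_cast; ring
  rw [hz, Complex.norm_real, Real.norm_eq_abs] at hfin
  have h4 := (abs_le.mp hfin).2
  have hp : 0 ≤ N0 := hN0.nonneg fun k => mul_nonneg (by rw [wt_eq]; exact jb_nonneg _ _) (sq_nonneg _)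
  have hq : 0 ≤ 8 * (2 + 10 * r + 4 * r * r) * 4 ^ r * (bn (r + 1) ξ ^ 2 * N0) := by positivity
  have h5 : 4 * (S1.re + h2) ≤ 8 * (2 + 10 * r + 4 * r * r) * 4 ^ r * (bn (r + 1) ξ ^ 2 * N0) := h4
  linarith

end energy

end CCFP
namespace CCFP


lemma hilbert_norm_le (c : FC) (k : ℤ) : ‖FC.hilbert c k‖ ≤ ‖c k‖ := by
  unfold FC.hilbert
  rw [norm_mul, norm_mul, norm_neg, Complex.norm_I, one_mul]
  refine mul_le_of_le_one_left (norm_nonneg _) ?_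
  rw [Complex.norm_intCast]
  rcases lt_trichotomy k 0 with h | h | h
  · simp [Int.sign_eq_neg_one_of_neg h]
  · simp [h]
  · simp [Int.sign_eq_one_of_pos h]

lemma hilbert_real {c : FC} (h : FC.isReal c) : FC.isReal (FC.hilbert c) := by
  intro k
  unfold FC.hilbert
  rw [h k, Int.sign_neg]
  simp only [map_mul, map_neg, Complex.conj_I, map_intCast]
  push_cast; ring

section nonlin
variable {r : ℝ} {u v : FC} {N0 N1 : ℝ}

lemma nonlinA (hr : 1 ≤ r) (hu : Summable fun a : ℤ => jb ((r + 1) / 2) (a : ℝ) * ‖u a‖)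
    (hN0 : HasSum (fun k : ℤ => FC.wt r k * ‖v k‖ ^ 2) N0) :
    (Summable fun k : ℤ => (FC.wt r k : ℂ) * (FC.mul (FC.hilbert v) (FC.D1 u) k * starRingEnd ℂ (v k))) ∧
    ‖∑' k : ℤ, (FC.wt r k : ℂ) * (FC.mul (FC.hilbert v) (FC.D1 u) k * starRingEnd ℂ (v k))‖ ≤
      2 ^ (r / 2) * (bn ((r + 1) / 2) u * N0) := by
  have hK0 : ∀ a : ℤ, 0 ≤ jb ((r + 1) / 2) (a : ℝ) * ‖u a‖ := fun a =>
    mul_nonneg (jb_nonneg _ _) (norm_nonneg _)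
  obtain ⟨hS, hB⟩ := schur2 hK0 hu.hasSum (X_hasSum hN0) (C := 2 ^ (r / 2)) (by positivity)
    (F := fun p : ℤ × ℤ => (FC.wt r p.1 : ℂ) *
      (FC.hilbert v p.2 * FC.D1 u (p.1 - p.2) * starRingEnd ℂ (v p.1))) (by
    intro k j
    simp only [norm_mul, RCLike.norm_conj, norm_D1, Complex.norm_real, Real.norm_eq_abs, wt_eq]
    rw [abs_of_nonneg (jb_nonneg _ _)]
    have h := coef2' (r := r) (by linarith) (k : ℝ) j
    push_cast
    calc _ ≤ jb r (k : ℝ) * (‖v j‖ * (|(k : ℝ) - j| * ‖u (k - j)‖) * ‖v k‖) := by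
          have := hilbert_norm_le v j
          have := jb_nonneg r (k : ℝ)
          gcongr
      _ = (jb r (k : ℝ) * |(k : ℝ) - j|) * (‖v j‖ * ‖u (k - j)‖ * ‖v k‖) := by ring
      _ ≤ _ := mul_le_mul_of_nonneg_right h (by positivity)
      _ = _ := by ring)
  have hfib : ∀ k : ℤ, (FC.wt r k : ℂ) * (FC.mul (FC.hilbert v) (FC.D1 u) k * starRingEnd ℂ (v k)) =
      ∑' j : ℤ, (FC.wt r k : ℂ) * (FC.hilbert v j * FC.D1 u (k - j) * starRingEnd ℂ (v k)) := by
    intro k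
    unfold FC.mul
    rw [tsum_mul_left, tsum_mul_right]
  simp only [hfib]
  refine ⟨hS.prod, ?_⟩
  rw [hS.tsum_prod] at hB
  exact hB

lemma nonlinB (hr : 1 ≤ r) (hu : Summable fun a : ℤ => jb ((r + 1) / 2) (a : ℝ) * ‖u a‖)
    (hreal : FC.isReal u)
    (hN0 : HasSum (fun k : ℤ => FC.wt r k * ‖v k‖ ^ 2) N0)
    (hN1 : HasSum (fun k : ℤ => FC.wt (r + 1) k * ‖v k‖ ^ 2) N1) :
    (Summable fun k : ℤ => (FC.wt r k : ℂ) * (FC.mul u (FC.D1 v) k * starRingEnd ℂ (v k))) ∧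
    |2 * (∑' k : ℤ, (FC.wt r k : ℂ) * (FC.mul u (FC.D1 v) k * starRingEnd ℂ (v k))).re| ≤
      ((2 * r + 1) * 2 ^ (r / 2)) * (bn ((r + 1) / 2) u * N0) := by
  have hK0 : ∀ a : ℤ, 0 ≤ jb ((r + 1) / 2) (a : ℝ) * ‖u a‖ := fun a =>
    mul_nonneg (jb_nonneg _ _) (norm_nonneg _)
  obtain ⟨F, hF⟩ : ∃ F : ℤ × ℤ → ℂ, F = fun p : ℤ × ℤ => (FC.wt r p.1 : ℂ) *
      (u (p.1 - p.2) * FC.D1 v p.2 * starRingEnd ℂ (v p.1)) := ⟨_, rfl⟩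
  obtain ⟨hS, -⟩ := schur2 hK0 hu.hasSum (X_hasSum hN1) (C := 2 ^ ((r + 1) / 2)) (by positivity)
    (F := F) (by
    intro k j
    simp only [hF, norm_mul, RCLike.norm_conj, norm_D1, Complex.norm_real, Real.norm_eq_abs, wt_eq]
    rw [abs_of_nonneg (jb_nonneg _ _)]
    have h := coef2 (r := r) (by linarith) (k : ℝ) j
    push_cast
    calc _ = (jb r (k : ℝ) * |(j : ℝ)|) * (‖v j‖ * ‖u (k - j)‖ * ‖v k‖) := by ring
      _ ≤ _ := mul_le_mul_of_nonneg_right h (by positivity)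
      _ = _ := by ring)
  have hfib : ∀ k : ℤ, (FC.wt r k : ℂ) * (FC.mul u (FC.D1 v) k * starRingEnd ℂ (v k)) = ∑' j : ℤ, F (k, j) := by
    intro k
    simp only [mul_swap, hF]
    rw [tsum_mul_left, tsum_mul_right]
  simp only [hfib]
  refine ⟨hS.prod, ?_⟩
  rw [← hS.tsum_prod]
  have hH := hS.hasSum
  have hHc : HasSum (fun p : ℤ × ℤ => starRingEnd ℂ (F (p.2, p.1))) (starRingEnd ℂ (∑' p, F p)) :=
    Complex.hasSum_conj'.mpr ((Equiv.prodComm ℤ ℤ).hasSum_iff.mpr hH)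
  have hG := hH.add hHc
  obtain ⟨-, hB⟩ := schur2 hK0 hu.hasSum (X_hasSum hN0) (C := (2 * r + 1) * 2 ^ (r / 2))
    (by positivity) (F := fun p => F p + starRingEnd ℂ (F (p.2, p.1))) (by
    intro k j
    have e : F (k, j) + starRingEnd ℂ (F (j, k)) = Complex.I * (((j : ℝ) * jb r k - k * jb r j : ℝ) : ℂ) *
        (u (k - j) * (v j * starRingEnd ℂ (v k))) := by
      simp only [hF, wt_eq, FC.D1, map_mul, Complex.conj_ofReal, Complex.conj_conj, Complex.conj_I,
        map_intCast]
      rw [← hreal, neg_sub]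
      push_cast; ring
    simp only [e, norm_mul, RCLike.norm_conj, Complex.norm_I, Complex.norm_real, Real.norm_eq_abs]
    have h := symbol2 hr (k : ℝ) j
    push_cast
    calc _ = |(j : ℝ) * jb r k - k * jb r j| * (‖u (k - j)‖ * (‖v j‖ * ‖v k‖)) := by ring
      _ ≤ _ := mul_le_mul_of_nonneg_right h (by positivity)
      _ = _ := by ring)
  rw [hG.tsum_eq, Complex.add_conj, Complex.norm_real, Real.norm_eq_abs] at hB
  exact hB

end nonlin

lemma memHs_mono {p q : ℝ} (h : p ≤ q) {c : FC} (hc : FC.memHs q c) : FC.memHs p c :=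
  Summable.of_nonneg_of_le (fun k => mul_nonneg (by rw [wt_eq]; exact jb_nonneg _ _) (sq_nonneg _))
    (fun k => mul_le_mul_of_nonneg_right (by rw [wt_eq, wt_eq]; exact jb_mono h _) (sq_nonneg _)) hc

lemma memHs_sub {p : ℝ} {c d : FC} (hc : FC.memHs p c) (hd : FC.memHs p d) : FC.memHs p (c - d) := by
  refine Summable.of_nonneg_of_le (fun k => mul_nonneg (by rw [wt_eq]; exact jb_nonneg _ _) (sq_nonneg _))
    (fun k => ?_) ((Summable.add hc hd).mul_left 2)
  have h1 : ‖(c - d) k‖ ^ 2 ≤ 2 * (‖c k‖ ^ 2 + ‖d k‖ ^ 2) := by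
    have := norm_sub_le (c k) (d k)
    have h0 := norm_nonneg (c k - d k)
    rw [Pi.sub_apply]
    nlinarith [sq_nonneg (‖c k‖ - ‖d k‖)]
  have := mul_le_mul_of_nonneg_left h1 (by rw [wt_eq]; exact jb_nonneg _ _ : 0 ≤ FC.wt p k)
  linarith

lemma hsNorm_sq (p : ℝ) (c : FC) : FC.hsNorm p c ^ 2 = ∑' k : ℤ, FC.wt p k * ‖c k‖ ^ 2 :=
  Real.sq_sqrt (tsum_nonneg fun k => mul_nonneg (by rw [wt_eq]; exact jb_nonneg _ _) (sq_nonneg _))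

lemma hsNorm_nonneg (p : ℝ) (c : FC) : 0 ≤ FC.hsNorm p c := Real.sqrt_nonneg _

lemma bdd_of_bn {p : ℝ} (hp : 0 ≤ p) {c : FC} (hc : Summable fun a : ℤ => jb p (a : ℝ) * ‖c a‖) (k : ℤ) :
    ‖c k‖ ≤ bn p c := by
  have h1 : jb p (k : ℝ) * ‖c k‖ ≤ bn p c :=
    hc.le_tsum k (fun a _ => mul_nonneg (jb_nonneg _ _) (norm_nonneg _))
  have := mul_le_mul_of_nonneg_right (jb_ge_one hp (k : ℝ)) (norm_nonneg (c k))
  linarith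

lemma hilbert_summable {p : ℝ} {c : FC} (hc : Summable fun a : ℤ => jb p (a : ℝ) * ‖c a‖) :
    (Summable fun a : ℤ => jb p (a : ℝ) * ‖FC.hilbert c a‖) ∧ bn p (FC.hilbert c) ≤ bn p c := by
  have hle : ∀ a : ℤ, jb p (a : ℝ) * ‖FC.hilbert c a‖ ≤ jb p (a : ℝ) * ‖c a‖ := fun a =>
    mul_le_mul_of_nonneg_left (hilbert_norm_le _ _) (jb_nonneg _ _)
  have hs := hc.of_nonneg_of_le (fun a => mul_nonneg (jb_nonneg _ _) (norm_nonneg _)) hle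
  exact ⟨hs, hs.tsum_le_tsum hle hc⟩

lemma noise_swap {ι κ : Type*} {f : ι → κ → ℂ} {w z : κ → ℂ} {G : ℂ}
    (hs : ∀ k, Summable fun n => f n k)
    (hG : HasSum (fun q : ι × κ => w q.2 * (f q.1 q.2 * z q.2)) G) :
    HasSum (fun k => w k * ((∑' n, f n k) * z k)) G := by
  have h : HasSum (fun q : κ × ι => w q.1 * (f q.2 q.1 * z q.1)) G :=
    (Equiv.prodComm κ ι).hasSum_iff.mpr hG
  exact h.prod_fiberwise fun k => ((hs k).hasSum.mul_right (z k)).mul_left (w k)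

lemma D1_bdd {p : ℝ} (hp : 1 ≤ p) {c : FC} (hc : Summable fun a : ℤ => jb p (a : ℝ) * ‖c a‖) :
    ∀ k, ‖FC.D1 c k‖ ≤ bn 0 (FC.D1 c) * jb 0 k := by
  have h1 : Summable fun a : ℤ => jb 0 (a : ℝ) * ‖FC.D1 c a‖ :=
    D1_summable (bn_mono (by linarith) hc).1
  exact b0 (bdd_of_bn le_rfl h1)

lemma nl_diff {p : ℝ} (hp : 1 ≤ p) {θ ρ : FC} (hθ : Summable fun a : ℤ => jb p (a : ℝ) * ‖θ a‖)
    (hρ : Summable fun a : ℤ => jb p (a : ℝ) * ‖ρ a‖) (k : ℤ) :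
    FC.mul (FC.hilbert θ) (FC.D1 θ) k - FC.mul (FC.hilbert ρ) (FC.D1 ρ) k =
    FC.mul (FC.hilbert (θ - ρ)) (FC.D1 θ) k + FC.mul (FC.hilbert ρ) (FC.D1 (θ - ρ)) k := by
  have hHθ := (bn_mono (by linarith : (0:ℝ) ≤ p) (hilbert_summable hθ).1).1
  have hHρ := (bn_mono (by linarith : (0:ℝ) ≤ p) (hilbert_summable hρ).1).1
  have s1 := (conv_summable le_rfl hHθ (D1_bdd hp hθ) k).1
  have s2 := (conv_summable le_rfl hHρ (D1_bdd hp hρ) k).1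
  have s3 := (conv_summable le_rfl hHρ (D1_bdd hp hθ) k).1
  simp only [mul_swap]
  have e1 : ∑' j : ℤ, FC.hilbert (θ - ρ) (k - j) * FC.D1 θ j =
      ∑' j : ℤ, FC.hilbert θ (k - j) * FC.D1 θ j - ∑' j : ℤ, FC.hilbert ρ (k - j) * FC.D1 θ j := by
    rw [← s1.tsum_sub s3]
    apply tsum_congr; intro j
    simp only [FC.hilbert, Pi.sub_apply]; ring
  have e2 : ∑' j : ℤ, FC.hilbert ρ (k - j) * FC.D1 (θ - ρ) j =
      ∑' j : ℤ, FC.hilbert ρ (k - j) * FC.D1 θ j - ∑' j : ℤ, FC.hilbert ρ (k - j) * FC.D1 ρ j := by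
    rw [← s3.tsum_sub s2]
    apply tsum_congr; intro j
    simp only [FC.D1, Pi.sub_apply]; ring
  rw [e1, e2]; ring

end CCFP

/-- Let `s > 7/2` and `Σ_k ‖ξ_k‖_{H^σ} < ∞` for all `σ ≥ 0`.  Then there is
`C > 0` such that for all `θ, ρ ∈ H^s(𝕋)`:
`2 (g(θ)−g(ρ), θ−ρ)_{H^{s-2}} + Σ_k ‖𝓛_{ξ_k}(θ−ρ)‖²_{H^{s-2}}`
`≤ C (1 + ‖θ‖²_{H^s} + ‖ρ‖²_{H^s}) ‖θ−ρ‖²_{H^{s-2}}`. -/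
theorem statement5 (s : ℝ) (hs : 7 / 2 < s) (ξ : ℕ → FC)
    (hξmem : ∀ σ : ℝ, 0 ≤ σ → ∀ k : ℕ, FC.memHs σ (ξ k))
    (hξreal : ∀ k : ℕ, FC.isReal (ξ k))
    (hξsum : ∀ σ : ℝ, 0 ≤ σ → Summable fun k : ℕ => FC.hsNorm σ (ξ k)) :
    ∃ C > (0 : ℝ), ∀ θ ρ : FC,
      FC.memHs s θ → FC.memHs s ρ → FC.isReal θ → FC.isReal ρ →
      Summable (fun k : ℕ => FC.hsNorm (s - 2) (FC.lie (ξ k) (θ - ρ)) ^ 2) ∧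
      2 * FC.hsInner (s - 2) (gCCF ξ θ - gCCF ξ ρ) (θ - ρ)
          + ∑' k : ℕ, FC.hsNorm (s - 2) (FC.lie (ξ k) (θ - ρ)) ^ 2
        ≤ C * (1 + FC.hsNorm s θ ^ 2 + FC.hsNorm s ρ ^ 2)
            * FC.hsNorm (s - 2) (θ - ρ) ^ 2 := by

  obtain ⟨r, hr⟩ : ∃ r, r = s - 2 := ⟨_, rfl⟩
  have hr1 : 1 ≤ r := by linarith
  have hsr : s = r + 2 := by linarith
  rw [← hr]
  have hr3 : (3:ℝ) / 2 < r := by linarith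
  -- noise coefficients
  have hξb := fun n => CCFP.bn_bound (p := r + 1) (q := 2 * (r + 1) + 1) rfl
    (hξmem (2 * (r + 1) + 1) (by linarith) n)
  have hξ2 : ∀ n, Summable fun a : ℤ => CCFP.jb 2 (a : ℝ) * ‖ξ n a‖ := fun n =>
    (CCFP.bn_mono (by linarith) (hξb n).1).1
  have hβ1 : Summable fun n => CCFP.bn (r + 1) (ξ n) :=
    ((hξsum (2 * (r + 1) + 1) (by linarith)).mul_left CCFP.c0).of_nonneg_of_le
      (fun n => CCFP.bn_nonneg _ _) (fun n => (hξb n).2)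
  have hβ : Summable fun n => CCFP.bn (r + 1) (ξ n) ^ 2 := by
    refine (hβ1.mul_left (∑' n, CCFP.bn (r + 1) (ξ n))).of_nonneg_of_le (fun n => sq_nonneg _) fun n => ?_
    rw [sq]
    exact mul_le_mul_of_nonneg_right (hβ1.le_tsum n fun m _ => CCFP.bn_nonneg _ _) (CCFP.bn_nonneg _ _)
  set β := ∑' n, CCFP.bn (r + 1) (ξ n) ^ 2 with hβdef
  have hβ0 : 0 ≤ β := tsum_nonneg fun n => sq_nonneg _
  set E := 8 * (2 + 10 * r + 4 * r * r) * (4:ℝ) ^ r with hE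
  have hE0 : 0 ≤ E := by positivity
  set P := (2 * r + 1) * (2:ℝ) ^ (r / 2) with hP
  have hP0 : 0 ≤ P := by positivity
  have h2P : (2:ℝ) ^ (r / 2) ≤ P := by
    rw [hP]; exact le_mul_of_one_le_left (by positivity) (by linarith)
  have hc0 := CCFP.c0_nonneg
  refine ⟨E * β + 2 * P * CCFP.c0 + 1, by positivity, ?_⟩
  intro θ ρ hθ hρ hθr hρr
  obtain ⟨v, hv⟩ : ∃ v, v = θ - ρ := ⟨_, rfl⟩
  rw [← hv]
  have hvm : FC.memHs s v := by rw [hv]; exact CCFP.memHs_sub hθ hρ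
  have hN0 := (CCFP.memHs_mono (by linarith : r ≤ s) hvm).hasSum
  have hN1 := (CCFP.memHs_mono (by linarith : r + 1 ≤ s) hvm).hasSum
  rw [← CCFP.hsNorm_sq] at hN0 hN1
  set N0 := FC.hsNorm r v ^ 2
  set N1 := FC.hsNorm (r + 1) v ^ 2
  have hN0' : 0 ≤ N0 := sq_nonneg _
  have hN1' : 0 ≤ N1 := sq_nonneg _
  have hθb := CCFP.bn_bound (p := (r + 1) / 2) (q := s) (by linarith) hθ
  have hρb := CCFP.bn_bound (p := (r + 1) / 2) (q := s) (by linarith) hρ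
  have hvb := CCFP.bn_bound (p := (r + 1) / 2) (q := s) (by linarith) hvm
  have hp1 : 1 ≤ (r + 1) / 2 := by linarith
  have bθ := CCFP.bdd_of_bn (by linarith) hθb.1
  have bρ := CCFP.bdd_of_bn (by linarith) hρb.1
  have bv := CCFP.bdd_of_bn (by linarith) hvb.1
  have hen := fun n => CCFP.energy hr1 (hξb n).1 (hξreal n) bv hN0 hN1
  have hf1 := fun n => CCFP.energy_f1 hr1 (hξb n).1 bv hN1
  have hL : Summable (fun n : ℕ => FC.hsNorm r (FC.lie (ξ n) v) ^ 2) := by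
    refine ((hβ.mul_right N1).mul_left (4 ^ (r + 1))).of_nonneg_of_le (fun n => sq_nonneg _) fun n => ?_
    exact (hen n).1
  refine ⟨hL, ?_⟩
  -- decomposition of the drift
  have hl2s : ∀ w : FC, (∃ A, ∀ k, ‖w k‖ ≤ A) → ∀ k : ℤ, Summable fun n : ℕ => FC.lie2 (ξ n) w k := by
    rintro w ⟨A, hA⟩ k
    have hA0 : 0 ≤ A := (norm_nonneg _).trans (hA 0)
    refine Summable.of_norm_bounded (hβ.mul_left (2 * A * CCFP.jb 2 k)) fun n => ?_
    refine (CCFP.lie2_bound (hξ2 n) hA k).trans ?_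
    apply mul_le_mul_of_nonneg_left _ (mul_nonneg (by positivity) (CCFP.jb_nonneg _ _))
    exact pow_le_pow_left₀ (CCFP.bn_nonneg _ _) (CCFP.bn_mono (by linarith) (hξb n).1).2 2
  have hdec : ∀ k : ℤ, (gCCF ξ θ - gCCF ξ ρ) k =
      -(FC.mul (FC.hilbert v) (FC.D1 θ) k) - FC.mul (FC.hilbert ρ) (FC.D1 v) k
        + (1 / 2 : ℂ) * ∑' n : ℕ, FC.lie2 (ξ n) v k := by
    intro k
    have e1 : ∑' n : ℕ, FC.lie2 (ξ n) v k =
        ∑' n : ℕ, FC.lie2 (ξ n) θ k - ∑' n : ℕ, FC.lie2 (ξ n) ρ k := by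
      rw [← (hl2s θ ⟨_, bθ⟩ k).tsum_sub (hl2s ρ ⟨_, bρ⟩ k)]
      apply tsum_congr; intro n
      rw [hv, CCFP.lie2_sub (hξ2 n) bθ bρ]; rfl
    have e2 := CCFP.nl_diff hp1 hθb.1 hρb.1 k
    rw [← hv] at e2
    rw [e1]
    simp only [gCCF, Pi.sub_apply, Pi.add_apply, Pi.neg_apply, Pi.smul_apply, FC.tsumFC,
      Complex.real_smul]
    push_cast
    linear_combination -e2
  -- the noise sums
  have hdouble : Summable fun q : ℕ × ℤ =>
      (FC.wt r q.2 : ℂ) * (FC.lie2 (ξ q.1) v q.2 * (starRingEnd ℂ) (v q.2)) := by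
    apply Summable.of_norm
    rw [summable_prod_of_nonneg (fun q => norm_nonneg _)]
    refine ⟨fun n => (hf1 n).1, ?_⟩
    exact ((hβ.mul_right N1).mul_left (4 ^ (r + 1))).of_nonneg_of_le
      (fun n => tsum_nonneg fun k => norm_nonneg _) fun n => (hf1 n).2.1
  have hG1 := hdouble.hasSum
  have hGn : HasSum (fun n : ℕ => ∑' k : ℤ, (FC.wt r k : ℂ) * (FC.lie2 (ξ n) v k * (starRingEnd ℂ) (v k)))
      (∑' q : ℕ × ℤ, (FC.wt r q.2 : ℂ) * (FC.lie2 (ξ q.1) v q.2 * (starRingEnd ℂ) (v q.2))) :=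
    hG1.prod_fiberwise fun n => (hdouble.prod_factor n).hasSum
  have hGk : HasSum (fun k : ℤ => (FC.wt r k : ℂ) * ((∑' n : ℕ, FC.lie2 (ξ n) v k) * (starRingEnd ℂ) (v k)))
      (∑' q : ℕ × ℤ, (FC.wt r q.2 : ℂ) * (FC.lie2 (ξ q.1) v q.2 * (starRingEnd ℂ) (v q.2))) := by
    exact CCFP.noise_swap (f := fun n k => FC.lie2 (ξ n) v k) (w := fun k => (FC.wt r k : ℂ))
      (z := fun k => (starRingEnd ℂ) (v k)) (hl2s v ⟨_, bv⟩) hG1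
  set G := ∑' q : ℕ × ℤ, (FC.wt r q.2 : ℂ) * (FC.lie2 (ξ q.1) v q.2 * (starRingEnd ℂ) (v q.2))
  obtain ⟨hA, hAb⟩ := CCFP.nonlinA hr1 hθb.1 hN0
  obtain ⟨hHs, hHb⟩ := CCFP.hilbert_summable hρb.1
  obtain ⟨hB, hBb⟩ := CCFP.nonlinB hr1 hHs (CCFP.hilbert_real hρr) hN0 hN1
  have hinner : FC.hsInner r (gCCF ξ θ - gCCF ξ ρ) v =
      (-(∑' k : ℤ, (FC.wt r k : ℂ) * (FC.mul (FC.hilbert v) (FC.D1 θ) k * (starRingEnd ℂ) (v k)))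
       - (∑' k : ℤ, (FC.wt r k : ℂ) * (FC.mul (FC.hilbert ρ) (FC.D1 v) k * (starRingEnd ℂ) (v k)))
       + (1 / 2 : ℂ) * G).re := by
    unfold FC.hsInner
    congr 1
    rw [← ((hA.hasSum.neg.sub hB.hasSum).add (hGk.mul_left (1 / 2 : ℂ))).tsum_eq]
    apply tsum_congr; intro k
    rw [hdec]; ring
  set a := ∑' k : ℤ, (FC.wt r k : ℂ) * (FC.mul (FC.hilbert v) (FC.D1 θ) k * (starRingEnd ℂ) (v k))
  set b := ∑' k : ℤ, (FC.wt r k : ℂ) * (FC.mul (FC.hilbert ρ) (FC.D1 v) k * (starRingEnd ℂ) (v k))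
  have hre : FC.hsInner r (gCCF ξ θ - gCCF ξ ρ) v = -a.re - b.re + 1 / 2 * G.re := by
    rw [hinner, Complex.add_re, Complex.sub_re, Complex.neg_re,
      show (1 / 2 : ℂ) = ((1 / 2 : ℝ) : ℂ) by push_cast; rfl, Complex.re_ofReal_mul]
  have hnoise : G.re + ∑' n : ℕ, FC.hsNorm r (FC.lie (ξ n) v) ^ 2 ≤ E * (β * N0) :=
    hasSum_le (fun n => (hen n).2) ((Complex.hasSum_re hGn).add hL.hasSum)
      ((hβ.hasSum.mul_right N0).mul_left E)
  have ha1 : -a.re ≤ P * (CCFP.c0 * FC.hsNorm s θ * N0) := by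
    have h1 := (neg_le_abs a.re).trans ((Complex.abs_re_le_norm a).trans hAb)
    refine h1.trans ?_
    exact mul_le_mul h2P (mul_le_mul_of_nonneg_right hθb.2 hN0')
      (mul_nonneg (CCFP.bn_nonneg _ _) hN0') hP0
  have hb1 : -(2 * b.re) ≤ P * (CCFP.c0 * FC.hsNorm s ρ * N0) := by
    refine ((neg_le_abs _).trans hBb).trans ?_
    exact mul_le_mul_of_nonneg_left (mul_le_mul_of_nonneg_right (hHb.trans hρb.2) hN0') hP0
  rw [hre]
  set x := FC.hsNorm s θ
  set y := FC.hsNorm s ρ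
  have hx : 2 * x + y ≤ 2 * (1 + x ^ 2 + y ^ 2) := by nlinarith [sq_nonneg (x - 1), sq_nonneg (y - 1)]
  have hxy : 1 ≤ 1 + x ^ 2 + y ^ 2 := by nlinarith [sq_nonneg x, sq_nonneg y]
  have hPc : 0 ≤ P * CCFP.c0 * N0 := by positivity
  have t1 := mul_le_mul_of_nonneg_left hx hPc
  have t2 := mul_le_mul_of_nonneg_left hxy (show 0 ≤ E * β * N0 by positivity)
  have t3 : 0 ≤ (1 + x ^ 2 + y ^ 2) * N0 := by positivity
  calc _ = 2 * (-a.re) + -(2 * b.re) + (G.re + ∑' n : ℕ, FC.hsNorm r (FC.lie (ξ n) v) ^ 2) := by ring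
    _ ≤ 2 * (P * (CCFP.c0 * x * N0)) + P * (CCFP.c0 * y * N0) + E * (β * N0) := by linarith
    _ = P * CCFP.c0 * N0 * (2 * x + y) + E * β * N0 * 1 := by ring
    _ ≤ P * CCFP.c0 * N0 * (2 * (1 + x ^ 2 + y ^ 2)) + E * β * N0 * (1 + x ^ 2 + y ^ 2) := add_le_add t1 t2
    _ ≤ _ := by nlinarith
end
end

section
/- Let d ≥ 1 and s > d/2 + 1, and suppose (ξ_k)_{k≥1} is a sequence of vector fields ξ_k: 𝕋^d → ℝ^d with Σ_{k≥1} ‖ξ_k‖_{H^σ} < ∞ for every σ ≥ 0. Then there is a constant C > 0 (depending on s, d and (ξ_k)) such that for every scalar f ∈ H^{s+2}(𝕋^d): (D^s Σ_{k=1}^∞ 𝓛²_{ξ_k} f, D^s f)_{L²} + Σ_{k=1}^∞ ‖D^s 𝓛_{ξ_k} f‖²_{L²} ≤ C ‖f‖²_{H^s}. -/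
noncomputable section
open scoped BigOperators

/-- A (complex-valued) function on the torus `𝕋^d = (ℝ/2πℤ)^d`, represented by its
Fourier coefficients, indexed by the lattice `ℤ^d`. -/
abbrev FCd (d : ℕ) := (Fin d → ℤ) → ℂ

namespace FCd

variable {d : ℕ}

/-- The Sobolev weight `(1+|k|²)^s`. -/
def wt (s : ℝ) (k : Fin d → ℤ) : ℝ := (1 + ∑ i, ((k i : ℝ)) ^ 2) ^ s

/-- `c` represents a function belonging to the Sobolev space `H^s(𝕋^d)`. -/
def memHs (s : ℝ) (c : FCd d) : Prop := Summable fun k : Fin d → ℤ => wt s k * ‖c k‖ ^ 2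

/-- The `H^s(𝕋^d)` norm: `‖f‖²_{H^s} = Σ_{k∈ℤ^d} (1+|k|²)^s |f̂(k)|²`. -/
def hsNorm (s : ℝ) (c : FCd d) : ℝ := Real.sqrt (∑' k : Fin d → ℤ, wt s k * ‖c k‖ ^ 2)

/-- `(D^s f, D^s g)_{L²} = Σ_{k∈ℤ^d} (1+|k|²)^s f̂(k) conj(ĝ(k))`, where `D^s` is the
Fourier multiplier with symbol `(1+|k|²)^{s/2}` (its real part; the sum is real for
real-valued functions). -/
def hsInner (s : ℝ) (c e : FCd d) : ℝ :=
  (∑' k : Fin d → ℤ, ((wt s k : ℂ) * (c k * (starRingEnd ℂ) (e k)))).re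

/-- `c` represents a real-valued function (conjugate-symmetric coefficients). -/
def isReal (c : FCd d) : Prop := ∀ k : Fin d → ℤ, c (-k) = (starRingEnd ℂ) (c k)

/-- The partial derivative `∂ᵢ`, i.e. the Fourier multiplier `i kᵢ`. -/
def deriv (i : Fin d) (c : FCd d) : FCd d := fun k => Complex.I * (k i : ℂ) * c k

/-- The pointwise product of functions, i.e. convolution of Fourier coefficients. -/
def mul (c e : FCd d) : FCd d := fun k => ∑' j : Fin d → ℤ, c j * e (k - j)

/-- The generalized Lie derivative of a scalar function along a vector field:
`𝓛_ξ f = ξ·∇f + (div ξ) f`. -/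
def lie (ξ : Fin d → FCd d) (c : FCd d) : FCd d :=
  (∑ i, mul (ξ i) (deriv i c)) + mul (∑ i, deriv i (ξ i)) c

/-- `𝓛²_ξ f = 𝓛_ξ (𝓛_ξ f)`. -/
def lie2 (ξ : Fin d → FCd d) (c : FCd d) : FCd d := lie ξ (lie ξ c)

/-- The `H^s` norm of a vector field: `‖ξ‖² = Σᵢ ‖ξᵢ‖²_{H^s}`. -/
def vecNorm (s : ℝ) (ξ : Fin d → FCd d) : ℝ := Real.sqrt (∑ i, hsNorm s (ξ i) ^ 2)

/-- The coefficientwise sum `Σ_{k∈ℕ} F k` of a sequence of functions. -/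
def tsumFCd (F : ℕ → FCd d) : FCd d := fun m => ∑' k : ℕ, F k m

end FCd

namespace FCd
variable {d : ℕ}

lemma rpow_mvt (t r K : ℝ) (hr : 0 < r) (hK : ∀ c ∈ Set.uIcc 1 r, c ^ (t - 1) ≤ K) :
    |r ^ t - 1| ≤ |t| * K * |r - 1| := by
  have hpos : ∀ c ∈ Set.uIcc 1 r, 0 < c := by
    intro c hc
    rw [Set.mem_uIcc] at hc
    rcases hc with h | h <;> linarith
  have := Convex.norm_image_sub_le_of_norm_hasDerivWithin_le (𝕜 := ℝ) (f := fun x : ℝ => x ^ t)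
    (f' := fun x => t * x ^ (t - 1)) (s := Set.uIcc 1 r) (C := |t| * K) (x := 1) (y := r)
    (fun x hx => (Real.hasDerivAt_rpow_const (Or.inl (hpos x hx).ne')).hasDerivWithinAt)
    (fun x hx => by
      rw [Real.norm_eq_abs, abs_mul, abs_of_pos (Real.rpow_pos_of_pos (hpos x hx) _)]
      exact mul_le_mul_of_nonneg_left (hK x hx) (abs_nonneg t))
    (convex_uIcc 1 r) Set.left_mem_uIcc Set.right_mem_uIcc
  simpa using this

lemma mem_M {M r c : ℝ} (hM : 1 ≤ M) (h1 : M⁻¹ ≤ r) (h2 : r ≤ M) (hc : c ∈ Set.uIcc 1 r) :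
    M⁻¹ ≤ c ∧ c ≤ M := by
  have : M⁻¹ ≤ 1 := inv_le_one_of_one_le₀ hM
  rw [Set.mem_uIcc] at hc
  rcases hc with h | h <;> constructor <;> linarith

lemma rpow_bd {s M c : ℝ} (j : ℕ) (hs : 0 ≤ s) (hM : 1 ≤ M) (h1 : M⁻¹ ≤ c) (h2 : c ≤ M) :
    c ^ (s - j) ≤ M ^ s * M ^ j := by
  have hM0 : 0 < M := by linarith
  have hc : 0 < c := lt_of_lt_of_le (inv_pos.mpr hM0) h1
  rw [Real.rpow_sub hc, Real.rpow_natCast, div_eq_mul_inv, ← inv_pow]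
  have : c⁻¹ ≤ M := inv_le_of_inv_le₀ hM0 h1
  gcongr

lemma taylor1 {s M r : ℝ} (hs : 0 ≤ s) (hM : 1 ≤ M) (h1 : M⁻¹ ≤ r) (h2 : r ≤ M) :
    |r ^ s - 1| ≤ s * (M ^ s * M) * |r - 1| := by
  have hM0 : 0 < M := by linarith
  have hc : 0 < r := lt_of_lt_of_le (inv_pos.mpr hM0) h1
  have := rpow_mvt s r (M ^ s * M) hc (fun c hc => by
    have hm := mem_M hM h1 h2 hc
    have := rpow_bd 1 hs hM hm.1 hm.2
    simpa using this)
  rwa [abs_of_nonneg hs] at this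

lemma taylor2 {s M r : ℝ} (hs : 0 ≤ s) (hM : 1 ≤ M) (h1 : M⁻¹ ≤ r) (h2 : r ≤ M) :
    |r ^ s - 1 - s * (r - 1)| ≤ s * |s - 1| * (M ^ s * M ^ 2) * |r - 1| ^ 2 := by
  have hM0 : 0 < M := by linarith
  have hr : 0 < r := lt_of_lt_of_le (inv_pos.mpr hM0) h1
  have key : ∀ c ∈ Set.uIcc 1 r, ‖s * c ^ (s - 1) - s‖ ≤ s * |s - 1| * (M ^ s * M ^ 2) * |r - 1| := by
    intro c hc
    have hm := mem_M hM h1 h2 hc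
    have hc0 : 0 < c := lt_of_lt_of_le (inv_pos.mpr hM0) hm.1
    have h := rpow_mvt (s - 1) c (M ^ s * M ^ 2) hc0 (fun c' hc' => by
      have hm' := mem_M hM hm.1 hm.2 hc'
      have := rpow_bd 2 hs hM hm'.1 hm'.2
      rw [show s - 1 - 1 = s - (2 : ℕ) by push_cast; ring]
      exact this)
    have h3 : |c - 1| ≤ |r - 1| := Set.abs_sub_left_of_mem_uIcc hc
    have : s * c ^ (s - 1) - s = s * (c ^ (s - 1) - 1) := by ring
    rw [this, Real.norm_eq_abs, abs_mul, abs_of_nonneg hs]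
    calc s * |c ^ (s - 1) - 1| ≤ s * (|s - 1| * (M ^ s * M ^ 2) * |r - 1|) := by
          apply mul_le_mul_of_nonneg_left _ hs
          refine h.trans ?_
          gcongr
      _ = _ := by ring
  have hpos : ∀ c ∈ Set.uIcc 1 r, 0 < c := fun c hc =>
    lt_of_lt_of_le (inv_pos.mpr hM0) (mem_M hM h1 h2 hc).1
  have := Convex.norm_image_sub_le_of_norm_hasDerivWithin_le (𝕜 := ℝ)
    (f := fun x : ℝ => x ^ s - s * x)
    (f' := fun x => s * x ^ (s - 1) - s) (s := Set.uIcc 1 r) (x := 1) (y := r)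
    (fun x hx => (by
      have h := (Real.hasDerivAt_rpow_const (p := s) (Or.inl (hpos x hx).ne')).sub
        ((hasDerivAt_id x).const_mul s)
      rw [mul_one] at h
      exact h.hasDerivWithinAt)) key
    (convex_uIcc 1 r) Set.left_mem_uIcc Set.right_mem_uIcc
  simp only [Real.norm_eq_abs, Real.one_rpow] at this
  calc _ = |r ^ s - s * r - (1 - s * 1)| := by congr 1; ring
    _ ≤ _ := this
    _ = _ := by ring

lemma symbol_abs {J Q K x y : ℝ} {R1 R2 R3 : ℝ} {X Y a a' b b' : ℂ}
    (hJ : 1 ≤ J) (hQ : 1 ≤ Q) (hx : 0 ≤ x) (hy : 0 ≤ y)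
    (h1 : |R1| ≤ K) (h2 : |R2| ≤ K) (h3 : |R3| ≤ K)
    (d1 : |R1 - 1| * J ≤ K) (d2 : |R2 - 1| * J ≤ K) (d3 : |R3 - 1| * J ≤ K)
    (dd : |R3 - R1 - R2 + 1| * J ^ 2 ≤ K)
    (hX : ‖X‖ ≤ J * x) (hY : ‖Y‖ ≤ J * y) (ha : ‖a‖ ≤ Q * x) (ha' : ‖a'‖ ≤ Q * x)
    (hb : ‖b‖ ≤ Q * y) (hb' : ‖b'‖ ≤ Q * y) :
    ‖(X + a) * Y - 2 * ((X + a) * (Y + b') * R1) + (X + a + a') * (Y + b') * R3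
      + ((Y + b) * X - 2 * ((X + a') * (Y + b) * R2) + (Y + b + b') * (X + a') * R3)‖
      ≤ 24 * K * Q ^ 2 * x * y := by
  have hK : 0 ≤ K := (abs_nonneg _).trans h1
  have e : (X + a) * Y - 2 * ((X + a) * (Y + b') * R1) + (X + a + a') * (Y + b') * R3
      + ((Y + b) * X - 2 * ((X + a') * (Y + b) * R2) + (Y + b + b') * (X + a') * R3)
      = 2 * (X * Y * ((R3 - R1 - R2 + 1 : ℝ) : ℂ))
        + (Y * (a * ((R3 - 1 - 2 * (R1 - 1) : ℝ) : ℂ))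
          + Y * (a' * ((2 * (R3 - 1) - 2 * (R2 - 1) : ℝ) : ℂ))
          + X * (b * ((R3 - 1 - 2 * (R2 - 1) : ℝ) : ℂ))
          + X * (b' * ((2 * (R3 - 1) - 2 * (R1 - 1) : ℝ) : ℂ)))
        + (a * b' * ((R3 - 2 * R1 : ℝ) : ℂ) + a' * b' * ((2 * R3 : ℝ) : ℂ)
          + a' * b * ((R3 - 2 * R2 : ℝ) : ℂ)) := by
    push_cast; ring
  have hQ2 : 1 ≤ Q ^ 2 := one_le_pow₀ hQ
  have hQQ : Q ≤ Q ^ 2 := by nlinarith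
  have hKxy : 0 ≤ K * x * y := by positivity
  have t1 : ‖2 * (X * Y * ((R3 - R1 - R2 + 1 : ℝ) : ℂ))‖ ≤ 2 * (K * Q ^ 2 * x * y) := by
    rw [norm_mul, norm_mul, norm_mul, Complex.norm_real, Real.norm_eq_abs]
    simp only [Complex.norm_ofNat]
    have : ‖X‖ * ‖Y‖ * |R3 - R1 - R2 + 1| ≤ (J * x) * (J * y) * |R3 - R1 - R2 + 1| := by gcongr
    have h' : (J * x) * (J * y) * |R3 - R1 - R2 + 1| ≤ K * x * y := by
      calc _ = (|R3 - R1 - R2 + 1| * J ^ 2) * (x * y) := by ring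
        _ ≤ K * (x * y) := by gcongr
        _ = _ := by ring
    nlinarith
  have gen : ∀ (X a : ℂ) (x y : ℝ) (R : ℝ) (c : ℝ), 0 ≤ x → 0 ≤ y → ‖X‖ ≤ J * x → ‖a‖ ≤ Q * y →
      |R| * J ≤ c * K → 0 ≤ c → ‖X * (a * (R : ℂ))‖ ≤ c * (K * Q ^ 2 * x * y) := by
    intro X a x y R c hx hy hX ha hR hc
    rw [norm_mul, norm_mul, Complex.norm_real, Real.norm_eq_abs]
    calc ‖X‖ * (‖a‖ * |R|) ≤ (J * x) * (Q * y * |R|) := by gcongr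
      _ = (|R| * J) * (Q * x * y) := by ring
      _ ≤ c * K * (Q ^ 2 * x * y) := by gcongr
      _ = _ := by ring
  have gen2 : ∀ (X a : ℂ) (x y : ℝ) (R : ℝ) (c : ℝ), 0 ≤ x → 0 ≤ y → ‖X‖ ≤ Q * x → ‖a‖ ≤ Q * y →
      |R| ≤ c * K → 0 ≤ c → ‖X * a * (R : ℂ)‖ ≤ c * (K * Q ^ 2 * x * y) := by
    intro X a x y R c hx hy hX ha hR hc
    rw [norm_mul, norm_mul, Complex.norm_real, Real.norm_eq_abs]
    calc ‖X‖ * ‖a‖ * |R| ≤ (Q * x) * (Q * y) * (c * K) := by gcongr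
      _ = _ := by ring
  have hJ0 : 0 ≤ J := by linarith
  have db : ∀ u v c : ℝ, 0 ≤ c → |u| * J ≤ K → |v| * J ≤ K → |c * u - 2 * v| * J ≤ (c + 2) * K := by
    intro u v c hc hu hv
    have : |c * u - 2 * v| ≤ c * |u| + 2 * |v| := by
      refine (abs_sub _ _).trans ?_
      rw [abs_mul, abs_mul, abs_of_nonneg hc, abs_two]
    nlinarith
  have t2 := gen Y a y x _ 3 hy hx hY ha (by
    have := db _ _ 1 (by norm_num) d3 d1; rw [one_mul] at this; linarith) (by norm_num)
  have t3 := gen Y a' y x _ 4 hy hx hY ha' (by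
    have := db _ _ 2 (by norm_num) d3 d2; linarith) (by norm_num)
  have t4 := gen X b x y _ 3 hx hy hX hb (by
    have := db _ _ 1 (by norm_num) d3 d2; rw [one_mul] at this; linarith) (by norm_num)
  have t5 := gen X b' x y _ 4 hx hy hX hb' (by
    have := db _ _ 2 (by norm_num) d3 d1; linarith) (by norm_num)
  have ab : ∀ u v : ℝ, |u| ≤ K → |v| ≤ K → |u - 2 * v| ≤ 3 * K := by
    intro u v hu hv
    rw [abs_le] at *
    constructor <;> linarith
  have t6 := gen2 a b' x y _ 3 hx hy ha hb' (ab _ _ h3 h1) (by norm_num)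
  have t7 := gen2 a' b' x y (2 * R3) 2 hx hy ha' hb' (by
    rw [abs_mul, abs_two]; linarith) (by norm_num)
  have t8 := gen2 a' b x y _ 3 hx hy ha' hb (ab _ _ h3 h2) (by norm_num)
  rw [e]
  refine (norm_add_le _ _).trans ?_
  refine (add_le_add ((norm_add_le _ _).trans (add_le_add t1 (norm_add₃_le.trans (le_refl _)))) norm_add₃_le).trans ?_
  have := norm_add_le (Y * (a * ((R3 - 1 - 2 * (R1 - 1) : ℝ) : ℂ))) (Y * (a' * ((2 * (R3 - 1) - 2 * (R2 - 1) : ℝ) : ℂ)))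
  nlinarith

/-- the Japanese bracket squared -/
def q (k : Fin d → ℤ) : ℝ := 1 + ∑ i, ((k i : ℝ)) ^ 2

/-- dot product of a frequency with a complex vector -/
def dot (k : Fin d → ℤ) (x : Fin d → ℂ) : ℂ := ∑ i, (k i : ℂ) * x i

/-- sum norm -/
def nm (x : Fin d → ℂ) : ℝ := ∑ i, ‖x i‖

lemma nm_nonneg (x : Fin d → ℂ) : 0 ≤ nm x := Finset.sum_nonneg fun _ _ => norm_nonneg _

lemma wt_eq (s : ℝ) (k : Fin d → ℤ) : wt s k = q k ^ s := rfl

lemma one_le_q (k : Fin d → ℤ) : 1 ≤ q k := by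
  have : 0 ≤ ∑ i, ((k i : ℝ)) ^ 2 := Finset.sum_nonneg fun _ _ => sq_nonneg _
  unfold q; linarith

lemma q_pos (k : Fin d → ℤ) : 0 < q k := lt_of_lt_of_le one_pos (one_le_q k)

lemma wt_pos (s : ℝ) (k : Fin d → ℤ) : 0 < wt s k := Real.rpow_pos_of_pos (q_pos k) s

lemma q_neg (k : Fin d → ℤ) : q (-k) = q k := by simp [q]

lemma q_add (m τ : Fin d → ℤ) :
    q (m + τ) = q m + (2 * ∑ i, (m i : ℝ) * (τ i : ℝ) + (q τ - 1)) := by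
  simp only [q, Pi.add_apply, Int.cast_add, add_sq, Finset.sum_add_distrib, Finset.mul_sum]
  simp only [mul_assoc]
  ring

lemma cross_le (m τ : Fin d → ℤ) :
    |∑ i, (m i : ℝ) * (τ i : ℝ)| ≤ Real.sqrt (q m) * Real.sqrt (q τ) := by
  rw [← Real.sqrt_mul (q_pos m).le]
  apply Real.abs_le_sqrt
  have h := Finset.sum_mul_sq_le_sq_mul_sq Finset.univ (fun i => (m i : ℝ)) (fun i => (τ i : ℝ))
  have h1 : 0 ≤ ∑ i, ((m i : ℝ)) ^ 2 := Finset.sum_nonneg fun _ _ => sq_nonneg _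
  have h2 : 0 ≤ ∑ i, ((τ i : ℝ)) ^ 2 := Finset.sum_nonneg fun _ _ => sq_nonneg _
  unfold q
  nlinarith

lemma q_add_le (m τ : Fin d → ℤ) : q (m + τ) ≤ 2 * q m * q τ := by
  have h : ∑ i, (((m + τ) i : ℤ) : ℝ) ^ 2 ≤ 2 * ∑ i, ((m i : ℝ)) ^ 2 + 2 * ∑ i, ((τ i : ℝ)) ^ 2 := by
    rw [Finset.mul_sum, Finset.mul_sum, ← Finset.sum_add_distrib]
    refine Finset.sum_le_sum fun i _ => ?_
    simp only [Pi.add_apply, Int.cast_add]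
    nlinarith [sq_nonneg ((m i : ℝ) - τ i)]
  have h1 : 0 ≤ ∑ i, ((m i : ℝ)) ^ 2 := Finset.sum_nonneg fun _ _ => sq_nonneg _
  have h2 : 0 ≤ ∑ i, ((τ i : ℝ)) ^ 2 := Finset.sum_nonneg fun _ _ => sq_nonneg _
  unfold q
  nlinarith

lemma q_le_add (m τ : Fin d → ℤ) : q m ≤ 2 * q (m + τ) * q τ := by
  have := q_add_le (m + τ) (-τ)
  rwa [add_neg_cancel_right, q_neg] at this

lemma norm_dot_le (k : Fin d → ℤ) (x : Fin d → ℂ) : ‖dot k x‖ ≤ Real.sqrt (q k) * nm x := by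
  unfold dot nm
  refine (norm_sum_le _ _).trans ?_
  rw [Finset.mul_sum]
  refine Finset.sum_le_sum fun i _ => ?_
  rw [norm_mul]
  refine mul_le_mul_of_nonneg_right ?_ (norm_nonneg _)
  rw [Complex.norm_intCast]
  apply Real.abs_le_sqrt
  have := Finset.single_le_sum (f := fun i => ((k i : ℝ)) ^ 2) (fun _ _ => sq_nonneg _) (Finset.mem_univ i)
  unfold q
  linarith

lemma dot_add (k l : Fin d → ℤ) (x : Fin d → ℂ) : dot (k + l) x = dot k x + dot l x := by
  simp [dot, add_mul, Finset.sum_add_distrib]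

lemma ratio_bds (m τ : Fin d → ℤ) {Q : ℝ} (hQ : q τ ≤ 2 * Q) :
    (4 * Q)⁻¹ ≤ q (m + τ) / q m ∧ q (m + τ) / q m ≤ 4 * Q ∧
      |q (m + τ) / q m - 1| * Real.sqrt (q m) ≤ 6 * Q := by
  have hm := q_pos m
  have hm1 := one_le_q m
  have ht := one_le_q τ
  have hQ0 : 0 < Q := by linarith
  have hn := q_pos (m + τ)
  refine ⟨?_, ?_, ?_⟩
  · rw [inv_eq_one_div, div_le_div_iff₀ (by positivity) hm]
    have := q_le_add m τ
    nlinarith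
  · rw [div_le_iff₀ hm]
    have := q_add_le m τ
    nlinarith
  · have hs := Real.sq_sqrt hm.le
    have hs1 : 1 ≤ Real.sqrt (q m) := Real.one_le_sqrt.mpr hm1
    have hst : Real.sqrt (q τ) ≤ q τ := Real.sqrt_le_self_iff.mpr (Or.inr ht)
    have hst0 := Real.sqrt_nonneg (q τ)
    have e : q (m + τ) / q m - 1 = (q (m + τ) - q m) / q m := by field_simp
    rw [e, abs_div, abs_of_pos hm, div_mul_eq_mul_div, div_le_iff₀ hm]
    have h1 : |q (m + τ) - q m| ≤ 3 * q τ * Real.sqrt (q m) := by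
      rw [q_add, add_sub_cancel_left]
      refine (abs_add_le _ _).trans ?_
      rw [abs_mul, abs_two, abs_of_nonneg (by linarith : 0 ≤ q τ - 1)]
      have := cross_le m τ
      have : |∑ i, (m i : ℝ) * (τ i : ℝ)| ≤ Real.sqrt (q m) * q τ :=
        this.trans (mul_le_mul_of_nonneg_left hst (Real.sqrt_nonneg _))
      nlinarith
    calc |q (m + τ) - q m| * Real.sqrt (q m)
        ≤ 3 * q τ * Real.sqrt (q m) * Real.sqrt (q m) :=
          mul_le_mul_of_nonneg_right h1 (Real.sqrt_nonneg _)
      _ = 3 * q τ * q m := by rw [mul_assoc, ← sq, hs]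
      _ ≤ 6 * Q * q m := by nlinarith

/-- the symbol -/
def G (s : ℝ) (m α β : Fin d → ℤ) (x y : Fin d → ℂ) : ℂ :=
  dot (m + β) x * dot m y * (wt s m : ℂ)
    - 2 * (dot (m + β) x * dot (m + β) y * (wt s (m + β) : ℂ))
    + dot (m + β + α) x * dot (m + β) y * (wt s (m + β + α) : ℂ)

/-- constant -/
def Kc (s : ℝ) : ℝ := (1 + 8 * s + 108 * (s * |s - 1|)) * (4 : ℝ) ^ (s + 2)

lemma wt_ratio (s : ℝ) (m n : Fin d → ℤ) : wt s n = wt s m * (q n / q m) ^ s := by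
  rw [wt_eq, wt_eq, Real.div_rpow (q_pos n).le (q_pos m).le]
  have := Real.rpow_pos_of_pos (q_pos m) s
  field_simp

set_option maxHeartbeats 2000000 in
lemma G_sym_le {s : ℝ} (hs : 0 ≤ s) (m α β : Fin d → ℤ) (x y : Fin d → ℂ) :
    ‖G s m α β x y + G s m β α y x‖
      ≤ 24 * (Kc s * (q α * q β) ^ (s + 4)) * (q α * q β) ^ 2 * nm x * nm y * wt s m := by
  obtain ⟨Q, hQ⟩ : ∃ Q, Q = q α * q β := ⟨_, rfl⟩
  have hα := one_le_q α
  have hβ := one_le_q β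
  have hQα : q α ≤ Q := by rw [hQ]; nlinarith
  have hQβ : q β ≤ Q := by rw [hQ]; nlinarith
  have hQ1 : 1 ≤ Q := by linarith
  have hQn : q (β + α) ≤ 2 * Q := by rw [hQ]; have := q_add_le β α; linarith
  rw [← hQ]
  have b1 := ratio_bds m β (Q := Q) (by linarith)
  have b2 := ratio_bds m α (Q := Q) (by linarith)
  have b3 := ratio_bds m (β + α) (Q := Q) hQn
  rw [← add_assoc] at b3
  have hdd : |q (m + β + α) / q m - q (m + β) / q m - q (m + α) / q m + 1|
      * Real.sqrt (q m) ^ 2 ≤ 2 * Q := by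
    rw [Real.sq_sqrt (q_pos m).le]
    have hm := q_pos m
    have e : q (m + β + α) / q m - q (m + β) / q m - q (m + α) / q m + 1
        = (2 * ∑ i, (β i : ℝ) * (α i : ℝ)) / q m := by
      field_simp
      rw [add_assoc, q_add m (β + α), q_add m β, q_add m α, q_add β α]
      simp only [Pi.add_apply, Int.cast_add, mul_add, Finset.sum_add_distrib]
      ring
    rw [e, abs_div, abs_of_pos hm, div_mul_cancel₀ _ hm.ne', abs_mul, abs_two]
    have h1 := cross_le β α
    have h2 : Real.sqrt (q β) * Real.sqrt (q α) ≤ Q := by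
      rw [← Real.sqrt_mul (q_pos β).le, mul_comm, ← hQ]
      exact Real.sqrt_le_self_iff.mpr (Or.inr hQ1)
    linarith
  obtain ⟨r1, hr1⟩ : ∃ r, r = q (m + β) / q m := ⟨_, rfl⟩
  obtain ⟨r2, hr2⟩ : ∃ r, r = q (m + α) / q m := ⟨_, rfl⟩
  obtain ⟨r3, hr3⟩ : ∃ r, r = q (m + β + α) / q m := ⟨_, rfl⟩
  rw [← hr1, ← hr2, ← hr3] at hdd
  rw [← hr1] at b1
  rw [← hr2] at b2
  rw [← hr3] at b3
  obtain ⟨J, hJ⟩ : ∃ J, J = Real.sqrt (q m) := ⟨_, rfl⟩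
  have hJ1 : 1 ≤ J := by rw [hJ]; exact Real.one_le_sqrt.mpr (one_le_q m)
  rw [← hJ] at hdd b1 b2 b3
  have hM1 : 1 ≤ 4 * Q := by linarith
  have hKval : (1 + 8 * s + 108 * (s * |s - 1|)) * ((4 * Q) ^ s * (4 * Q) ^ 2 * Q ^ 2)
      = Kc s * Q ^ (s + 4) := by
    have hQ0 : 0 < Q := by linarith
    unfold Kc
    rw [Real.mul_rpow (by norm_num) hQ0.le, Real.rpow_add hQ0, Real.rpow_add (by norm_num : (0:ℝ) < 4)]
    norm_num
    ring
  obtain ⟨K, hK⟩ : ∃ K, K = Kc s * Q ^ (s + 4) := ⟨_, rfl⟩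
  rw [← hK]
  rw [← hK] at hKval
  obtain ⟨S, hS⟩ : ∃ S, S = (4 * Q) ^ s := ⟨_, rfl⟩
  have hS1 : 1 ≤ S := by rw [hS]; exact Real.one_le_rpow hM1 hs
  rw [← hS] at hKval
  have hs1 : 0 ≤ s * |s - 1| := mul_nonneg hs (abs_nonneg _)
  have hP1 : S ≤ S * (4 * Q) ^ 2 * Q ^ 2 := by
    have : 1 ≤ (4 * Q) ^ 2 * Q ^ 2 := one_le_mul_of_one_le_of_one_le (one_le_pow₀ hM1) (one_le_pow₀ hQ1)
    nlinarith
  have hP2 : S * (4 * Q) * Q ≤ S * (4 * Q) ^ 2 * Q ^ 2 := by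
    have h1 : 4 * Q ≤ (4 * Q) ^ 2 := by nlinarith
    have h2 : Q ≤ Q ^ 2 := by nlinarith
    gcongr
  have hP3 : Q ≤ S * (4 * Q) ^ 2 * Q ^ 2 := by
    have : Q ≤ S * (4 * Q) * Q := by
      have : 1 ≤ S * (4 * Q) := one_le_mul_of_one_le_of_one_le hS1 hM1
      nlinarith
    linarith
  obtain ⟨P, hP⟩ : ∃ P, P = S * (4 * Q) ^ 2 * Q ^ 2 := ⟨_, rfl⟩
  rw [← hP] at hKval hP1 hP2 hP3
  have hP0 : 0 ≤ P := by linarith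
  have hKval' : P + 8 * (s * P) + 108 * (s * |s - 1| * P) = K := by rw [← hKval]; ring
  have hsP := mul_nonneg hs hP0
  have hs1P := mul_nonneg hs1 hP0
  have B : ∀ r : ℝ, (4 * Q)⁻¹ ≤ r ∧ r ≤ 4 * Q ∧ |r - 1| * J ≤ 6 * Q →
      |r ^ s| ≤ K ∧ |r ^ s - 1| * J ≤ K ∧
        |r ^ s - 1 - s * (r - 1)| * J ^ 2 ≤ 36 * (s * |s - 1|) * P := by
    rintro r ⟨h1, h2, h3⟩
    have hr0 : 0 < r := lt_of_lt_of_le (inv_pos.mpr (by linarith)) h1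
    refine ⟨?_, ?_, ?_⟩
    · rw [abs_of_pos (Real.rpow_pos_of_pos hr0 s)]
      have : r ^ s ≤ S := by rw [hS]; gcongr
      linarith
    · have := taylor1 hs hM1 h1 h2
      rw [← hS] at this
      calc |r ^ s - 1| * J ≤ s * (S * (4 * Q)) * |r - 1| * J := by gcongr
        _ = s * (S * (4 * Q)) * (|r - 1| * J) := by ring
        _ ≤ s * (S * (4 * Q)) * (6 * Q) := by gcongr
        _ = 6 * s * (S * (4 * Q) * Q) := by ring
        _ ≤ 6 * s * P := by gcongr
        _ ≤ K := by linarith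
    · have := taylor2 hs hM1 h1 h2
      rw [← hS] at this
      calc |r ^ s - 1 - s * (r - 1)| * J ^ 2
          ≤ s * |s - 1| * (S * (4 * Q) ^ 2) * |r - 1| ^ 2 * J ^ 2 := by gcongr
        _ = s * |s - 1| * (S * (4 * Q) ^ 2) * (|r - 1| * J) ^ 2 := by ring
        _ ≤ s * |s - 1| * (S * (4 * Q) ^ 2) * (6 * Q) ^ 2 := by gcongr
        _ = 36 * (s * |s - 1|) * P := by rw [hP]; ring
  obtain ⟨B1, D1, T1⟩ := B r1 b1
  obtain ⟨B2, D2, T2⟩ := B r2 b2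
  obtain ⟨B3, D3, T3⟩ := B r3 b3
  have DD : |r3 ^ s - r1 ^ s - r2 ^ s + 1| * J ^ 2 ≤ K := by
    have e : r3 ^ s - r1 ^ s - r2 ^ s + 1 = s * (r3 - r1 - r2 + 1)
        + ((r3 ^ s - 1 - s * (r3 - 1)) - (r1 ^ s - 1 - s * (r1 - 1)) - (r2 ^ s - 1 - s * (r2 - 1))) := by
      ring
    have h : |r3 ^ s - r1 ^ s - r2 ^ s + 1| ≤ s * |r3 - r1 - r2 + 1|
        + (|r3 ^ s - 1 - s * (r3 - 1)| + |r1 ^ s - 1 - s * (r1 - 1)| + |r2 ^ s - 1 - s * (r2 - 1)|) := by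
      rw [e]
      refine (abs_add_le _ _).trans ?_
      rw [abs_mul, abs_of_nonneg hs]
      gcongr
      refine (abs_sub _ _).trans ?_
      gcongr
      exact abs_sub _ _
    have hJ2 : 0 ≤ J ^ 2 := sq_nonneg _
    have h5 := mul_le_mul_of_nonneg_right h hJ2
    have h6 : s * (|r3 - r1 - r2 + 1| * J ^ 2) ≤ s * (2 * P) := by
      apply mul_le_mul_of_nonneg_left _ hs; linarith
    linarith
  have sq1 : ∀ k : Fin d → ℤ, q k ≤ Q → ∀ x : Fin d → ℂ, ‖dot k x‖ ≤ Q * nm x := by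
    intro k hk x
    refine (norm_dot_le k x).trans ?_
    refine mul_le_mul_of_nonneg_right ?_ (nm_nonneg x)
    exact (Real.sqrt_le_self_iff.mpr (Or.inr (one_le_q k))).trans hk
  have main := symbol_abs hJ1 hQ1 (nm_nonneg x) (nm_nonneg y) B1 B2 B3 D1 D2 D3 DD
    (by rw [hJ]; exact norm_dot_le m x) (by rw [hJ]; exact norm_dot_le m y)
    (sq1 β hQβ x) (sq1 α hQα x) (sq1 α hQα y) (sq1 β hQβ y)
  have eq : G s m α β x y + G s m β α y x = (wt s m : ℂ) *
    ((dot m x + dot β x) * dot m y - 2 * ((dot m x + dot β x) * (dot m y + dot β y) * (r1 ^ s : ℝ))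
      + (dot m x + dot β x + dot α x) * (dot m y + dot β y) * (r3 ^ s : ℝ)
      + ((dot m y + dot α y) * dot m x - 2 * ((dot m x + dot α x) * (dot m y + dot α y) * (r2 ^ s : ℝ))
      + (dot m y + dot α y + dot β y) * (dot m x + dot α x) * (r3 ^ s : ℝ))) := by
    unfold G
    rw [add_right_comm m α β, wt_ratio s m (m + β), wt_ratio s m (m + α), wt_ratio s m (m + β + α),
      ← hr1, ← hr2, ← hr3]
    simp only [dot_add]
    push_cast
    ring
  rw [eq, norm_mul, Complex.norm_real, Real.norm_eq_abs, abs_of_pos (wt_pos s m), mul_comm]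
  exact mul_le_mul_of_nonneg_right main (wt_pos s m).le


lemma summable_int : Summable fun n : ℤ => (1 + (n : ℝ) ^ 2)⁻¹ := by
  have h1 : Summable fun n : ℤ => 1 / (n : ℝ) ^ 2 := Real.summable_one_div_int_pow.mpr (by norm_num)
  have h2 : Summable fun n : ℤ => if n = 0 then (1 : ℝ) else 0 := (hasSum_ite_eq 0 1).summable
  refine Summable.of_nonneg_of_le (fun n => by positivity) (fun n => ?_) (h1.add h2)
  by_cases hn : n = 0
  · simp [hn]
  · have : (0 : ℝ) < (n : ℝ) ^ 2 := by positivity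
    simp only [hn, if_false, add_zero, one_div]
    gcongr
    linarith

lemma summable_pi {f : ℤ → ℝ} (hf : Summable f) (h0 : ∀ n, 0 ≤ f n) :
    Summable fun k : Fin d → ℤ => ∏ i, f (k i) := by
  classical
  refine summable_of_sum_le (c := ∏ _i : Fin d, ∑' n, f n)
    (fun k => Finset.prod_nonneg fun i _ => h0 _) (fun u => ?_)
  have hsub : u ⊆ Fintype.piFinset fun i => u.image fun k => k i := by
    intro k hk
    rw [Fintype.mem_piFinset]
    intro i
    exact Finset.mem_image_of_mem (fun k : Fin d → ℤ => k i) hk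
  refine (Finset.sum_le_sum_of_subset_of_nonneg hsub
    (fun k _ _ => Finset.prod_nonneg fun i _ => h0 _)).trans ?_
  rw [← Finset.prod_univ_sum (fun i => u.image fun k => k i) (fun _ n => f n)]
  refine Finset.prod_le_prod (fun i _ => Finset.sum_nonneg fun n _ => h0 n) (fun i _ => ?_)
  exact hf.sum_le_tsum _ (fun n _ => h0 n)

lemma summable_wt_neg : Summable fun k : Fin d → ℤ => wt (-(d : ℝ)) k := by
  refine Summable.of_nonneg_of_le (fun k => (wt_pos _ k).le) (fun k => ?_)
    (summable_pi (d := d) summable_int (fun n => by positivity))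
  rw [wt_eq, Real.rpow_neg (q_pos k).le, Real.rpow_natCast, Finset.prod_inv_distrib]
  have h1 : (0 : ℝ) < ∏ i, (1 + (k i : ℝ) ^ 2) := Finset.prod_pos fun i _ => by positivity
  gcongr
  calc ∏ i, (1 + (k i : ℝ) ^ 2) ≤ ∏ _i : Fin d, q k := by
        refine Finset.prod_le_prod (fun i _ => by positivity) (fun i _ => ?_)
        have := Finset.single_le_sum (f := fun i => ((k i : ℝ)) ^ 2) (fun _ _ => sq_nonneg _)
          (Finset.mem_univ i)
        unfold q
        linarith
    _ = q k ^ d := by simp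

lemma wt_add (s t : ℝ) (k : Fin d → ℤ) : wt (s + t) k = wt s k * wt t k :=
  Real.rpow_add (q_pos k) s t

lemma hsNorm_nonneg (s : ℝ) (c : FCd d) : 0 ≤ hsNorm s c := Real.sqrt_nonneg _

lemma hsNorm_sq (s : ℝ) (c : FCd d) : hsNorm s c ^ 2 = ∑' k, wt s k * ‖c k‖ ^ 2 :=
  Real.sq_sqrt (tsum_nonneg fun k => mul_nonneg (wt_pos s k).le (sq_nonneg _))

lemma wt_half_sq (s : ℝ) (k : Fin d → ℤ) : wt (s / 2) k ^ 2 = wt s k := by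
  rw [sq, ← wt_add, add_halves]

lemma l1_bound (N : ℝ) (c : FCd d) (h : memHs (2 * N + d) c) :
    (Summable fun k => wt N k * ‖c k‖) ∧
      ∑' k, wt N k * ‖c k‖ ≤ Real.sqrt (∑' k : Fin d → ℤ, wt (-(d : ℝ)) k) * hsNorm (2 * N + d) c := by
  have e1 : ∀ k : Fin d → ℤ, wt (-(d : ℝ) / 2) k ^ (2 : ℝ) = wt (-(d : ℝ)) k := by
    intro k
    rw [show (2 : ℝ) = ((2 : ℕ) : ℝ) by norm_num, Real.rpow_natCast]
    exact_mod_cast wt_half_sq (-(d : ℝ)) k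
  have e2 : ∀ k : Fin d → ℤ, (wt ((2 * N + d) / 2) k * ‖c k‖) ^ (2 : ℝ)
      = wt (2 * N + d) k * ‖c k‖ ^ 2 := by
    intro k
    rw [show (2 : ℝ) = ((2 : ℕ) : ℝ) by norm_num, Real.rpow_natCast, mul_pow]
    congr 1
    exact_mod_cast wt_half_sq (2 * N + d) k
  have e3 : ∀ k : Fin d → ℤ, wt (-(d : ℝ) / 2) k * (wt ((2 * N + d) / 2) k * ‖c k‖) = wt N k * ‖c k‖ := by
    intro k
    rw [← mul_assoc, ← wt_add]
    congr 2
    ring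
  have key := Real.summable_and_inner_le_Lp_mul_Lq_tsum_of_nonneg (p := 2) (q := 2)
    (f := fun k : Fin d → ℤ => wt (-(d : ℝ) / 2) k)
    (g := fun k => wt ((2 * N + d) / 2) k * ‖c k‖)
    (by constructor <;> norm_num) (fun k => (wt_pos _ k).le)
    (fun k => mul_nonneg (wt_pos _ k).le (norm_nonneg _))
    (by simp only [e1]; exact summable_wt_neg) (by simp only [e2]; exact h)
  simp only [e1, e2, e3] at key
  refine ⟨key.1, ?_⟩
  have := key.2
  rwa [← Real.sqrt_eq_rpow, ← Real.sqrt_eq_rpow] at this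

lemma hsNorm_le_vecNorm (σ : ℝ) (ξ : Fin d → FCd d) (i : Fin d) : hsNorm σ (ξ i) ≤ vecNorm σ ξ := by
  unfold vecNorm
  apply Real.le_sqrt_of_sq_le
  exact Finset.single_le_sum (f := fun i => hsNorm σ (ξ i) ^ 2) (fun _ _ => sq_nonneg _) (Finset.mem_univ i)

lemma summable_g (N : ℝ) (hN : 0 ≤ N) (ξ : ℕ → Fin d → FCd d)
    (hξmem : ∀ σ : ℝ, 0 ≤ σ → ∀ k : ℕ, ∀ i, memHs σ (ξ k i))
    (hξsum : ∀ σ : ℝ, 0 ≤ σ → Summable fun k : ℕ => vecNorm σ (ξ k)) :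
    Summable fun p : ℕ × (Fin d → ℤ) => wt N p.2 * nm (fun i => ξ p.1 i p.2) := by
  have hσ : 0 ≤ 2 * N + (d : ℝ) := by positivity
  have hl := fun k i => l1_bound N (ξ k i) (hξmem _ hσ k i)
  have hs : ∀ k, HasSum (fun α => wt N α * nm (fun i => ξ k i α)) (∑ i, ∑' α, wt N α * ‖ξ k i α‖) := by
    intro k
    have := hasSum_sum (s := Finset.univ) fun i _ => (hl k i).1.hasSum
    simpa [nm, Finset.mul_sum] using this
  rw [summable_prod_of_nonneg (fun p => mul_nonneg (wt_pos _ _).le (nm_nonneg _))]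
  refine ⟨fun k => (hs k).summable, ?_⟩
  simp only [(hs _).tsum_eq]
  refine Summable.of_nonneg_of_le
    (fun k => Finset.sum_nonneg fun i _ => tsum_nonneg fun α => mul_nonneg (wt_pos _ _).le (norm_nonneg _))
    (fun k => ?_)
    ((hξsum _ hσ).mul_left ((d : ℝ) * Real.sqrt (∑' k : Fin d → ℤ, wt (-(d : ℝ)) k)))
  calc ∑ i, ∑' α, wt N α * ‖ξ k i α‖
      ≤ ∑ _i : Fin d, Real.sqrt (∑' k : Fin d → ℤ, wt (-(d : ℝ)) k) * vecNorm (2 * N + d) (ξ k) := by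
        refine Finset.sum_le_sum fun i _ => (hl k i).2.trans ?_
        exact mul_le_mul_of_nonneg_left (hsNorm_le_vecNorm _ _ i) (Real.sqrt_nonneg _)
    _ = _ := by simp; ring

lemma summable_gg {g : ℕ × (Fin d → ℤ) → ℝ} (hg : Summable g) (h0 : ∀ p, 0 ≤ g p) :
    Summable fun κ : ℕ × (Fin d → ℤ) × (Fin d → ℤ) => g (κ.1, κ.2.1) * g (κ.1, κ.2.2) := by
  have h := hg.mul_of_nonneg hg h0 h0
  have hi : Function.Injective fun κ : ℕ × (Fin d → ℤ) × (Fin d → ℤ) =>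
      (((κ.1, κ.2.1), (κ.1, κ.2.2)) : (ℕ × (Fin d → ℤ)) × (ℕ × (Fin d → ℤ))) := by
    rintro ⟨a, b, c⟩ ⟨a', b', c'⟩ h
    simp only [Prod.mk.injEq] at h ⊢
    tauto
  exact h.comp_injective hi

lemma master {κ : Type*} {g : κ → ℝ} (hg : Summable g) (h0 : ∀ p, 0 ≤ g p) (τ : κ → Fin d → ℤ)
    {E : (Fin d → ℤ) → ℝ} (hE : Summable fun m => E m ^ 2) (hE0 : ∀ m, 0 ≤ E m) :
    (Summable fun p : κ × (Fin d → ℤ) => g p.1 * (E (p.2 + τ p.1) * E p.2)) ∧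
      ∑' p : κ × (Fin d → ℤ), g p.1 * (E (p.2 + τ p.1) * E p.2) ≤ (∑' k, g k) * ∑' m, E m ^ 2 := by
  have hsh : ∀ t : Fin d → ℤ, HasSum (fun m => E (m + t) ^ 2) (∑' m, E m ^ 2) := fun t =>
    ((Equiv.addRight t).hasSum_iff (f := fun m => E m ^ 2)).mpr hE.hasSum
  have hs1 : ∀ k, HasSum (fun m => g k * ((E (m + τ k) ^ 2 + E m ^ 2) / 2)) (g k * ∑' m, E m ^ 2) := by
    intro k
    have := (((hsh (τ k)).add hE.hasSum).div_const 2).mul_left (g k)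
    rwa [add_self_div_two] at this
  have hS : Summable fun p : κ × (Fin d → ℤ) => g p.1 * ((E (p.2 + τ p.1) ^ 2 + E p.2 ^ 2) / 2) := by
    rw [summable_prod_of_nonneg (fun p => mul_nonneg (h0 _) (by positivity))]
    refine ⟨fun k => (hs1 k).summable, ?_⟩
    simp only [(hs1 _).tsum_eq]
    exact hg.mul_right _
  have hle : ∀ p : κ × (Fin d → ℤ), g p.1 * (E (p.2 + τ p.1) * E p.2)
      ≤ g p.1 * ((E (p.2 + τ p.1) ^ 2 + E p.2 ^ 2) / 2) := fun p =>
    mul_le_mul_of_nonneg_left (by nlinarith [sq_nonneg (E (p.2 + τ p.1) - E p.2)]) (h0 _)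
  have hS' := Summable.of_nonneg_of_le
    (fun p => mul_nonneg (h0 p.1) (mul_nonneg (hE0 (p.2 + τ p.1)) (hE0 p.2))) hle hS
  refine ⟨hS', (hS'.tsum_le_tsum hle hS).trans ?_⟩
  rw [hS.tsum_prod]
  simp only [(hs1 _).tsum_eq]
  rw [tsum_mul_right]


lemma sqrt_q_eq (k : Fin d → ℤ) : Real.sqrt (q k) = wt (1 / 2) k := Real.sqrt_eq_rpow _

lemma int_le_sqrt_q (k : Fin d → ℤ) (i : Fin d) : ‖((k i : ℤ) : ℂ)‖ ≤ Real.sqrt (q k) := by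
  rw [Complex.norm_intCast]
  apply Real.abs_le_sqrt
  have := Finset.single_le_sum (f := fun i => ((k i : ℝ)) ^ 2) (fun _ _ => sq_nonneg _) (Finset.mem_univ i)
  unfold q
  linarith

lemma lie_eq (ξ : Fin d → FCd d) (c : FCd d) (B : ℝ) (hc : ∀ m, Real.sqrt (q m) * ‖c m‖ ≤ B)
    (hξ : ∀ i, Summable fun α => wt (1 / 2) α * ‖ξ i α‖) (n : Fin d → ℤ) :
    lie ξ c n = ∑' α, Complex.I * dot n (fun i => ξ i α) * c (n - α) := by
  have hB : 0 ≤ B := le_trans (by positivity) (hc 0)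
  have hc' : ∀ m, ‖c m‖ ≤ B := fun m => by
    have h1 : 1 ≤ Real.sqrt (q m) := Real.one_le_sqrt.mpr (one_le_q m)
    have := hc m
    nlinarith [norm_nonneg (c m)]
  have s1 : ∀ i, Summable fun j => ξ i j * (Complex.I * (((n - j) i : ℤ) : ℂ) * c (n - j)) := by
    intro i
    refine Summable.of_norm_bounded ((hξ i).mul_right B) (fun j => ?_)
    rw [norm_mul, norm_mul, norm_mul, Complex.norm_I, one_mul]
    have h1 : ‖(((n - j) i : ℤ) : ℂ)‖ * ‖c (n - j)‖ ≤ B :=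
      (mul_le_mul_of_nonneg_right (int_le_sqrt_q (n - j) i) (norm_nonneg _)).trans (hc _)
    have h2 : 1 ≤ wt (1 / 2) j := by rw [← sqrt_q_eq]; exact Real.one_le_sqrt.mpr (one_le_q j)
    calc ‖ξ i j‖ * (‖(((n - j) i : ℤ) : ℂ)‖ * ‖c (n - j)‖) ≤ (1 * ‖ξ i j‖) * B := by
          rw [one_mul]; gcongr
      _ ≤ _ := by gcongr
  have s2 : ∀ i, Summable fun j => Complex.I * ((j i : ℤ) : ℂ) * ξ i j * c (n - j) := by
    intro i
    refine Summable.of_norm_bounded ((hξ i).mul_right B) (fun j => ?_)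
    rw [norm_mul, norm_mul, norm_mul, Complex.norm_I, one_mul]
    have h1 := int_le_sqrt_q j i
    rw [sqrt_q_eq] at h1
    have h3 := hc' (n - j)
    have h4 := (wt_pos (1 / 2) j).le
    gcongr
  have H := ((hasSum_sum (s := Finset.univ) fun i _ => (s1 i).hasSum).add
    (hasSum_sum (s := Finset.univ) fun i _ => (s2 i).hasSum))
  have e2 : mul (∑ i, deriv i (ξ i)) c n = ∑ i, ∑' j, Complex.I * ((j i : ℤ) : ℂ) * ξ i j * c (n - j) := by
    have := (hasSum_sum (s := Finset.univ) fun i _ => (s2 i).hasSum).tsum_eq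
    rw [← this]
    unfold mul deriv
    congr 1
    funext j
    rw [Finset.sum_apply, Finset.sum_mul]
  have e1 : lie ξ c n = ∑ i, ∑' j, ξ i j * (Complex.I * (((n - j) i : ℤ) : ℂ) * c (n - j))
      + ∑ i, ∑' j, Complex.I * ((j i : ℤ) : ℂ) * ξ i j * c (n - j) := by
    rw [← e2]
    unfold lie
    rw [Pi.add_apply, Finset.sum_apply]
    rfl
  rw [e1, ← H.tsum_eq]
  congr 1
  funext j
  rw [← Finset.sum_add_distrib]
  unfold dot
  rw [Finset.mul_sum, Finset.sum_mul]
  refine Finset.sum_congr rfl fun i _ => ?_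
  simp only [Pi.sub_apply, Int.cast_sub]
  ring

lemma lie_bd (ξ : Fin d → FCd d) (c : FCd d) (B : ℝ) (hc : ∀ m, q m * ‖c m‖ ≤ B)
    (hξ : ∀ i, Summable fun α => wt 1 α * ‖ξ i α‖)
    (hL : ∀ n, lie ξ c n = ∑' α, Complex.I * dot n (fun i => ξ i α) * c (n - α)) :
    ∃ B', ∀ m, Real.sqrt (q m) * ‖lie ξ c m‖ ≤ B' := by
  have hB : 0 ≤ B := le_trans (mul_nonneg (q_pos _).le (norm_nonneg _)) (hc 0)
  have hs : Summable fun α => wt 1 α * nm (fun i => ξ i α) := by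
    have := summable_sum (s := Finset.univ) fun i _ => hξ i
    simpa [nm, Finset.mul_sum] using this
  refine ⟨∑' α, 2 * B * (wt 1 α * nm (fun i => ξ i α)), fun p => ?_⟩
  · have e : Real.sqrt (q p) * ‖lie ξ c p‖
        = ‖∑' α, (Real.sqrt (q p) : ℂ) * (Complex.I * dot p (fun i => ξ i α) * c (p - α))‖ := by
      rw [tsum_mul_left, ← hL, norm_mul, Complex.norm_real, Real.norm_of_nonneg (Real.sqrt_nonneg _)]
    rw [e]
    refine tsum_of_norm_bounded (hs.mul_left (2 * B)).hasSum (fun α => ?_)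
    rw [norm_mul, norm_mul, norm_mul, Complex.norm_I, one_mul, Complex.norm_real,
      Real.norm_of_nonneg (Real.sqrt_nonneg _)]
    have h1 := norm_dot_le p (fun i => ξ i α)
    have h2 : q p ≤ 2 * q (p - α) * q α := by
      have := q_add_le (p - α) α
      rwa [sub_add_cancel] at this
    have h3 := Real.mul_self_sqrt (q_pos p).le
    have h4 := nm_nonneg (fun i => ξ i α)
    have h5 := hc (p - α)
    have h6 : wt 1 α = q α := Real.rpow_one _
    have h7 := (q_pos α).le
    rw [h6]
    calc _ ≤ Real.sqrt (q p) * (Real.sqrt (q p) * nm (fun i => ξ i α) * ‖c (p - α)‖) := by gcongr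
      _ = q p * (nm (fun i => ξ i α) * ‖c (p - α)‖) := by
          rw [← mul_assoc, ← mul_assoc, h3, mul_assoc]
      _ ≤ (2 * q (p - α) * q α) * (nm (fun i => ξ i α) * ‖c (p - α)‖) := by gcongr
      _ = (q (p - α) * ‖c (p - α)‖) * (2 * (q α * nm (fun i => ξ i α))) := by ring
      _ ≤ B * (2 * (q α * nm (fun i => ξ i α))) := by gcongr
      _ = _ := by ring

lemma w1 {s a b c M : ℝ} (hs : 0 ≤ s) (ha : 1 ≤ a) (hc : 1 ≤ c) (hM : 1 ≤ M)
    (hba : b ≤ M * a) (hac : a ≤ M * c) :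
    a ^ s * (Real.sqrt a * Real.sqrt b) ≤ M ^ (s + 2) * (a ^ (s / 2 + 1) * c ^ (s / 2 + 1)) := by
  have ha0 : 0 < a := by linarith
  have hM0 : 0 < M := by linarith
  have hc0 : 0 < c := by linarith
  have h1 : Real.sqrt a * Real.sqrt b ≤ M * a := by
    calc Real.sqrt a * Real.sqrt b ≤ Real.sqrt (M * a) * Real.sqrt (M * a) := by
          gcongr
          nlinarith
      _ = M * a := Real.mul_self_sqrt (by positivity)
  calc a ^ s * (Real.sqrt a * Real.sqrt b) ≤ a ^ s * (M * a) := by gcongr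
    _ = M * (a ^ (s / 2 + 1) * a ^ (s / 2)) := by
        rw [← Real.rpow_add ha0, show s / 2 + 1 + s / 2 = s + 1 by ring, Real.rpow_add_one ha0.ne']
        ring
    _ ≤ M * (a ^ (s / 2 + 1) * (M * c) ^ (s / 2)) := by gcongr
    _ = M ^ (s / 2 + 1) * (a ^ (s / 2 + 1) * c ^ (s / 2)) := by
        rw [Real.mul_rpow hM0.le hc0.le, Real.rpow_add_one hM0.ne']
        ring
    _ ≤ _ := by
        have h2 : M ^ (s / 2 + 1) ≤ M ^ (s + 2) := Real.rpow_le_rpow_of_exponent_le hM (by linarith)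
        have h3 : c ^ (s / 2) ≤ c ^ (s / 2 + 1) := Real.rpow_le_rpow_of_exponent_le hc (by linarith)
        gcongr

lemma w2 {s a b c M : ℝ} (hs : 0 ≤ s) (ha : 1 ≤ a) (hb : 1 ≤ b) (hc : 1 ≤ c) (hM : 1 ≤ M)
    (hba : b ≤ M * a) (hbc : b ≤ M * c) :
    b ^ s * (Real.sqrt b * Real.sqrt b) ≤ M ^ (s + 2) * (a ^ (s / 2 + 1) * c ^ (s / 2 + 1)) := by
  have ha0 : 0 < a := by linarith
  have hb0 : 0 < b := by linarith
  have hM0 : 0 < M := by linarith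
  have hc0 : 0 < c := by linarith
  rw [Real.mul_self_sqrt hb0.le, ← Real.rpow_add_one hb0.ne']
  calc b ^ (s + 1) ≤ b ^ (s / 2 + 1 + (s / 2 + 1)) := by
        exact Real.rpow_le_rpow_of_exponent_le hb (by linarith)
    _ = b ^ (s / 2 + 1) * b ^ (s / 2 + 1) := Real.rpow_add hb0 _ _
    _ ≤ (M * a) ^ (s / 2 + 1) * (M * c) ^ (s / 2 + 1) := by gcongr
    _ = _ := by
        have h : M ^ (s + 2) = M ^ (s / 2 + 1) * M ^ (s / 2 + 1) := by
          rw [← Real.rpow_add hM0]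
          congr 1
          ring
        rw [Real.mul_rpow hM0.le hc0.le, Real.mul_rpow hM0.le ha0.le, h]
        ring


/-- index type of the master sums: `((k, α, β), m)` -/
abbrev Idx (d : ℕ) := (ℕ × (Fin d → ℤ) × (Fin d → ℤ)) × (Fin d → ℤ)

/-- `conj f(n) f(m)` -/
def FF (f : FCd d) (z : Idx d) : ℂ :=
  (starRingEnd ℂ) (f (z.2 + z.1.2.2 + z.1.2.1)) * f z.2

/-- slice of the vector field at the first frequency -/
def xx (ξ : ℕ → Fin d → FCd d) (z : Idx d) : Fin d → ℂ := fun i => ξ z.1.1 i z.1.2.1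

/-- slice of the vector field at the second frequency -/
def yy (ξ : ℕ → Fin d → FCd d) (z : Idx d) : Fin d → ℂ := fun i => ξ z.1.1 i z.1.2.2

lemma xx_mk (ξ : ℕ → Fin d → FCd d) (k : ℕ) (α β m : Fin d → ℤ) :
    xx ξ ((k, α, β), m) = fun i => ξ k i α := rfl

lemma yy_mk (ξ : ℕ → Fin d → FCd d) (k : ℕ) (α β m : Fin d → ℤ) :
    yy ξ ((k, α, β), m) = fun i => ξ k i β := rfl

/-- summand of the inner product -/
def Ph1 (s : ℝ) (ξ : ℕ → Fin d → FCd d) (f : FCd d) (z : Idx d) : ℂ :=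
  -(FF f z * (dot (z.2 + z.1.2.2 + z.1.2.1) (xx ξ z) * dot (z.2 + z.1.2.2) (yy ξ z)
    * (wt s (z.2 + z.1.2.2 + z.1.2.1) : ℂ)))

/-- summand of the norms -/
def Ph2 (s : ℝ) (ξ : ℕ → Fin d → FCd d) (f : FCd d) (z : Idx d) : ℂ :=
  FF f z * (dot (z.2 + z.1.2.2) (xx ξ z) * dot (z.2 + z.1.2.2) (yy ξ z)
    * (wt s (z.2 + z.1.2.2) : ℂ))

/-- involution exchanging `n` and `m` -/
def eConj : Idx d ≃ Idx d where
  toFun z := ((z.1.1, -z.1.2.2, -z.1.2.1), z.2 + z.1.2.2 + z.1.2.1)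
  invFun z := ((z.1.1, -z.1.2.2, -z.1.2.1), z.2 + z.1.2.2 + z.1.2.1)
  left_inv := by
    rintro ⟨⟨k, α, β⟩, m⟩
    simp
  right_inv := by
    rintro ⟨⟨k, α, β⟩, m⟩
    simp

/-- swap of the two field frequencies -/
def eSwap : Idx d ≃ Idx d where
  toFun z := ((z.1.1, z.1.2.2, z.1.2.1), z.2)
  invFun z := ((z.1.1, z.1.2.2, z.1.2.1), z.2)
  left_inv := by
    rintro ⟨⟨k, α, β⟩, m⟩
    rfl
  right_inv := by
    rintro ⟨⟨k, α, β⟩, m⟩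
    rfl

/-- reindexing for the inner product -/
def eIn : (Fin d → ℤ) × ℕ × (Fin d → ℤ) × (Fin d → ℤ) ≃ Idx d where
  toFun u := ((u.2.1, u.2.2.1, u.2.2.2), u.1 - u.2.2.1 - u.2.2.2)
  invFun z := (z.2 + z.1.2.2 + z.1.2.1, z.1.1, z.1.2.1, z.1.2.2)
  left_inv := by
    rintro ⟨n, k, α, β⟩
    simp
  right_inv := by
    rintro ⟨⟨k, α, β⟩, m⟩
    simp

/-- reindexing for the norms -/
def eNo : ℕ × (Fin d → ℤ) × (Fin d → ℤ) × (Fin d → ℤ) ≃ Idx d where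
  toFun u := ((u.1, u.2.2.2, u.2.2.1), u.2.1 - u.2.2.1)
  invFun z := (z.1.1, z.2 + z.1.2.2, z.1.2.2, z.1.2.1)
  left_inv := by
    rintro ⟨k, p, β, α⟩
    simp
  right_inv := by
    rintro ⟨⟨k, α, β⟩, m⟩
    simp

lemma dot_conj (k : Fin d → ℤ) (x : Fin d → ℂ) :
    (starRingEnd ℂ) (dot k x) = dot k (fun i => (starRingEnd ℂ) (x i)) := by
  simp [dot]

lemma quad_eq (s : ℝ) (ξ : ℕ → Fin d → FCd d) (hξreal : ∀ k : ℕ, ∀ i, isReal (ξ k i)) (f : FCd d)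
    (z : Idx d) :
    Ph1 s ξ f z + (starRingEnd ℂ) (Ph1 s ξ f (eConj z)) + 2 * Ph2 s ξ f z
      = -(FF f z * G s z.2 z.1.2.1 z.1.2.2 (xx ξ z) (yy ξ z)) := by
  obtain ⟨⟨k, α, β⟩, m⟩ := z
  have h : ∀ γ i, ξ k i (-γ) = (starRingEnd ℂ) (ξ k i γ) := fun γ i => hξreal k i γ
  simp only [Ph1, Ph2, FF, eConj, Equiv.coe_fn_mk, xx_mk, yy_mk, G, h, map_neg, map_mul, dot_conj,
    Complex.conj_conj, Complex.conj_ofReal, add_neg_cancel_right]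
  ring

lemma G_swap (s : ℝ) (ξ : ℕ → Fin d → FCd d) (f : FCd d) (z : Idx d) :
    FF f z * G s z.2 z.1.2.1 z.1.2.2 (xx ξ z) (yy ξ z)
      + FF f (eSwap z) * G s (eSwap z).2 (eSwap z).1.2.1 (eSwap z).1.2.2 (xx ξ (eSwap z)) (yy ξ (eSwap z))
      = FF f z * (G s z.2 z.1.2.1 z.1.2.2 (xx ξ z) (yy ξ z)
        + G s z.2 z.1.2.2 z.1.2.1 (yy ξ z) (xx ξ z)) := by
  obtain ⟨⟨k, α, β⟩, m⟩ := z
  simp only [FF, eSwap, Equiv.coe_fn_mk, xx_mk, yy_mk]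
  rw [add_right_comm m α β]
  ring

/-- weighted field size -/
def gN (N : ℝ) (ξ : ℕ → Fin d → FCd d) (p : ℕ × (Fin d → ℤ)) : ℝ :=
  wt N p.2 * nm (fun i => ξ p.1 i p.2)

/-- product weight -/
def ggN (N : ℝ) (ξ : ℕ → Fin d → FCd d) (κ : ℕ × (Fin d → ℤ) × (Fin d → ℤ)) : ℝ :=
  gN N ξ (κ.1, κ.2.1) * gN N ξ (κ.1, κ.2.2)

lemma gN_nonneg (N : ℝ) (ξ : ℕ → Fin d → FCd d) (p) : 0 ≤ gN N ξ p :=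
  mul_nonneg (wt_pos _ _).le (nm_nonneg _)

lemma ggN_nonneg (N : ℝ) (ξ : ℕ → Fin d → FCd d) (κ) : 0 ≤ ggN N ξ κ :=
  mul_nonneg (gN_nonneg _ _ _) (gN_nonneg _ _ _)

lemma ggN_eq (N : ℝ) (ξ : ℕ → Fin d → FCd d) (z : Idx d) :
    ggN N ξ z.1 = (q z.1.2.1 * q z.1.2.2) ^ N * (nm (xx ξ z) * nm (yy ξ z)) := by
  unfold ggN gN xx yy
  rw [Real.mul_rpow (q_pos _).le (q_pos _).le, wt_eq, wt_eq]
  ring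

lemma four_bds (m α β : Fin d → ℤ) :
    1 ≤ 4 * (q α * q β) ∧ q (m + β) ≤ 4 * (q α * q β) * q (m + β + α) ∧
    q (m + β) ≤ 4 * (q α * q β) * q m ∧ q (m + β + α) ≤ 4 * (q α * q β) * q m ∧
    q m ≤ 4 * (q α * q β) * q (m + β + α) := by
  have hα := one_le_q α
  have hβ := one_le_q β
  have h1 := q_le_add (m + β) α
  have h2 := q_add_le m β
  have h3 := q_add_le (m + β) α
  have h4 := q_le_add m β
  have p1 := q_pos m
  have p2 := q_pos (m + β)
  have p3 := q_pos (m + β + α)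
  have hQ : q α ≤ q α * q β := by nlinarith
  have hQ' : q β ≤ q α * q β := by nlinarith
  have hQ1 : 1 ≤ q α * q β := by linarith
  refine ⟨by linarith, ?_, ?_, ?_, ?_⟩
  · nlinarith [mul_le_mul_of_nonneg_right hQ p3.le, mul_pos (q_pos α) p3]
  · nlinarith [mul_le_mul_of_nonneg_right hQ' p1.le, mul_pos (q_pos β) p1]
  · nlinarith [mul_le_mul_of_nonneg_right h2 (q_pos α).le]
  · nlinarith [mul_le_mul_of_nonneg_right h1 (q_pos β).le]

lemma Ph_bound {s : ℝ} (hs : 0 ≤ s) (ξ : ℕ → Fin d → FCd d) (f : FCd d) (z : Idx d) :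
    ‖Ph1 s ξ f z‖ ≤ (4 : ℝ) ^ (s + 2) * (ggN (s + 2) ξ z.1 *
      ((wt (s / 2 + 1) (z.2 + (z.1.2.2 + z.1.2.1)) * ‖f (z.2 + (z.1.2.2 + z.1.2.1))‖)
        * (wt (s / 2 + 1) z.2 * ‖f z.2‖))) ∧
    ‖Ph2 s ξ f z‖ ≤ (4 : ℝ) ^ (s + 2) * (ggN (s + 2) ξ z.1 *
      ((wt (s / 2 + 1) (z.2 + (z.1.2.2 + z.1.2.1)) * ‖f (z.2 + (z.1.2.2 + z.1.2.1))‖)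
        * (wt (s / 2 + 1) z.2 * ‖f z.2‖))) := by
  rw [ggN_eq, ← add_assoc]
  have hx := nm_nonneg (xx ξ z)
  have hy := nm_nonneg (yy ξ z)
  unfold Ph1 Ph2 FF
  generalize xx ξ z = x at *
  generalize yy ξ z = y at *
  obtain ⟨⟨k, α, β⟩, m⟩ := z
  dsimp only
  obtain ⟨hM, ba, bc, ac, -⟩ := four_bds m α β
  have dn := norm_dot_le (m + β + α) x
  have dpy := norm_dot_le (m + β) y
  have dpx := norm_dot_le (m + β) x
  have k1 := w1 hs (one_le_q (m + β + α)) (one_le_q m) hM ba ac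
  have k2 := w2 hs (one_le_q (m + β + α)) (one_le_q (m + β)) (one_le_q m) hM ba bc
  have hMe : (4 * (q α * q β)) ^ (s + 2) = 4 ^ (s + 2) * (q α * q β) ^ (s + 2) :=
    Real.mul_rpow (by norm_num) (mul_pos (q_pos α) (q_pos β)).le
  rw [hMe] at k1 k2
  simp only [wt_eq]
  have hw1 : 0 ≤ q (m + β + α) ^ s := (Real.rpow_pos_of_pos (q_pos _) _).le
  have hw2 : 0 ≤ q (m + β) ^ s := (Real.rpow_pos_of_pos (q_pos _) _).le
  constructor
  · rw [norm_neg, norm_mul, norm_mul, norm_mul, norm_mul, Complex.norm_real, Real.norm_of_nonneg hw1,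
      RCLike.norm_conj]
    calc _ ≤ ‖f (m + β + α)‖ * ‖f m‖ * ((Real.sqrt (q (m + β + α)) * nm x) * (Real.sqrt (q (m + β)) * nm y)
          * q (m + β + α) ^ s) := by gcongr
      _ = (‖f (m + β + α)‖ * ‖f m‖ * (nm x * nm y)) *
          (q (m + β + α) ^ s * (Real.sqrt (q (m + β + α)) * Real.sqrt (q (m + β)))) := by ring
      _ ≤ _ := mul_le_mul_of_nonneg_left k1 (by positivity)
      _ = _ := by ring
  · rw [norm_mul, norm_mul, norm_mul, norm_mul, Complex.norm_real, Real.norm_of_nonneg hw2,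
      RCLike.norm_conj]
    calc _ ≤ ‖f (m + β + α)‖ * ‖f m‖ * ((Real.sqrt (q (m + β)) * nm x) * (Real.sqrt (q (m + β)) * nm y)
          * q (m + β) ^ s) := by gcongr
      _ = (‖f (m + β + α)‖ * ‖f m‖ * (nm x * nm y)) *
          (q (m + β) ^ s * (Real.sqrt (q (m + β)) * Real.sqrt (q (m + β)))) := by ring
      _ ≤ _ := mul_le_mul_of_nonneg_left k2 (by positivity)
      _ = _ := by ring

lemma Kc_nonneg {s : ℝ} (hs : 0 ≤ s) : 0 ≤ Kc s := by
  unfold Kc; positivity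

lemma FG_bound {s : ℝ} (hs : 0 ≤ s) (ξ : ℕ → Fin d → FCd d) (f : FCd d) (z : Idx d) :
    ‖FF f z * (G s z.2 z.1.2.1 z.1.2.2 (xx ξ z) (yy ξ z)
        + G s z.2 z.1.2.2 z.1.2.1 (yy ξ z) (xx ξ z))‖
      ≤ (24 * Kc s * (4 : ℝ) ^ (s / 2)) * (ggN (s + 4 + 2 + s / 2) ξ z.1 *
      ((wt (s / 2) (z.2 + (z.1.2.2 + z.1.2.1)) * ‖f (z.2 + (z.1.2.2 + z.1.2.1))‖)
        * (wt (s / 2) z.2 * ‖f z.2‖))) := by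
  rw [ggN_eq, ← add_assoc, norm_mul]
  have hG := G_sym_le hs z.2 z.1.2.1 z.1.2.2 (xx ξ z) (yy ξ z)
  have hx := nm_nonneg (xx ξ z)
  have hy := nm_nonneg (yy ξ z)
  unfold FF
  generalize xx ξ z = x at *
  generalize yy ξ z = y at *
  obtain ⟨⟨k, α, β⟩, m⟩ := z
  dsimp only at *
  obtain ⟨hM, -, -, -, ca⟩ := four_bds m α β
  rw [norm_mul, RCLike.norm_conj]
  have hQ : 0 < q α * q β := mul_pos (q_pos α) (q_pos β)
  have hK := Kc_nonneg hs
  have hw : wt s m ≤ 4 ^ (s / 2) * (q α * q β) ^ (s / 2) * (wt (s / 2) (m + β + α) * wt (s / 2) m) := by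
    rw [← wt_half_sq s m, sq, ← mul_assoc]
    refine mul_le_mul_of_nonneg_right ?_ (wt_pos _ m).le
    simp only [wt_eq]
    rw [← Real.mul_rpow (by norm_num) hQ.le, ← Real.mul_rpow (by positivity) (q_pos _).le]
    exact Real.rpow_le_rpow (q_pos m).le ca (by positivity)
  have hQe : (q α * q β) ^ (s + 4 + 2 + s / 2)
      = (q α * q β) ^ (s + 4) * (q α * q β) ^ 2 * (q α * q β) ^ (s / 2) := by
    rw [Real.rpow_add hQ, Real.rpow_add hQ]
    norm_num
  rw [hQe]
  calc _ ≤ ‖f (m + β + α)‖ * ‖f m‖ * (24 * (Kc s * (q α * q β) ^ (s + 4)) * (q α * q β) ^ 2 * nm x * nm y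
        * (4 ^ (s / 2) * (q α * q β) ^ (s / 2) * (wt (s / 2) (m + β + α) * wt (s / 2) m))) := by
        refine mul_le_mul_of_nonneg_left (hG.trans ?_) (by positivity)
        exact mul_le_mul_of_nonneg_left hw (by positivity)
    _ = _ := by ring


lemma decay {s : ℝ} (hs : 0 ≤ s) (f : FCd d) (hf : memHs (s + 2) f) (m : Fin d → ℤ) :
    q m * ‖f m‖ ≤ hsNorm (s + 2) f := by
  refine Real.le_sqrt_of_sq_le ?_
  have h1 := hf.le_tsum m (fun j _ => mul_nonneg (wt_pos _ j).le (sq_nonneg _))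
  refine le_trans ?_ h1
  rw [mul_pow]
  refine mul_le_mul_of_nonneg_right ?_ (sq_nonneg _)
  rw [wt_eq, ← Real.rpow_natCast]
  exact Real.rpow_le_rpow_of_exponent_le (one_le_q m) (by push_cast; linarith)

lemma inner_eq {s : ℝ} (ξ : ℕ → Fin d → FCd d) (f : FCd d) (hS : Summable (Ph1 s ξ f))
    (h2 : ∀ k n, lie2 (ξ k) f n = ∑' α, Complex.I * dot n (fun i => ξ k i α) *
      ∑' β, Complex.I * dot (n - α) (fun i => ξ k i β) * f (n - α - β)) :
    hsInner s (tsumFCd fun k => lie2 (ξ k) f) f = (∑' z, Ph1 s ξ f z).re := by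
  unfold hsInner
  congr 1
  rw [← eIn.tsum_eq]
  have hS' : Summable fun u => Ph1 s ξ f (eIn u) := eIn.summable_iff.mpr hS
  rw [hS'.tsum_prod]
  congr 1
  funext n
  have hn := hS'.prod_factor n
  rw [hn.tsum_prod]
  unfold tsumFCd
  rw [← tsum_mul_right, ← tsum_mul_left]
  congr 1
  funext k
  have hk := hn.prod_factor k
  rw [hk.tsum_prod]
  dsimp only
  rw [h2, ← tsum_mul_right, ← tsum_mul_left]
  congr 1
  funext α
  rw [← tsum_mul_left, ← tsum_mul_right, ← tsum_mul_left]
  congr 1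
  funext β
  simp only [Ph1, FF, eIn, Equiv.coe_fn_mk, xx_mk, yy_mk, sub_add_cancel]
  linear_combination (wt s n : ℂ) * (starRingEnd ℂ) (f n) * dot n (fun i => ξ k i α)
    * dot (n - α) (fun i => ξ k i β) * f (n - α - β) * Complex.I_sq

lemma norm_eq {s : ℝ} (ξ : ℕ → Fin d → FCd d) (hξreal : ∀ k : ℕ, ∀ i, isReal (ξ k i))
    (f : FCd d) (hS : Summable (Ph2 s ξ f))
    (h1 : ∀ k n, lie (ξ k) f n = ∑' α, Complex.I * dot n (fun i => ξ k i α) * f (n - α)) :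
    (Summable fun k => hsNorm s (lie (ξ k) f) ^ 2) ∧
    ∑' k, hsNorm s (lie (ξ k) f) ^ 2 = (∑' z, Ph2 s ξ f z).re := by
  have hS' : Summable fun u => Ph2 s ξ f (eNo u) := eNo.summable_iff.mpr hS
  have key : ∀ k, ((hsNorm s (lie (ξ k) f) ^ 2 : ℝ) : ℂ) = ∑' u, Ph2 s ξ f (eNo (k, u)) := by
    intro k
    have hk := hS'.prod_factor k
    rw [hk.tsum_prod, hsNorm_sq, Complex.ofReal_tsum]
    congr 1
    funext p
    have hp := hk.prod_factor p
    rw [hp.tsum_prod]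
    have e1 : ((‖lie (ξ k) f p‖ ^ 2 : ℝ) : ℂ)
        = lie (ξ k) f p * (starRingEnd ℂ) (lie (ξ k) f p) := by
      rw [Complex.mul_conj, Complex.normSq_eq_norm_sq]
    have e2 : (starRingEnd ℂ) (lie (ξ k) f p)
        = ∑' α, -(Complex.I * dot p (fun i => ξ k i α)) * (starRingEnd ℂ) (f (p + α)) := by
      rw [h1, ← (Equiv.neg (Fin d → ℤ)).tsum_eq, Complex.conj_tsum]
      congr 1
      funext α
      have h : ∀ i, ξ k i (-α) = (starRingEnd ℂ) (ξ k i α) := fun i => hξreal k i α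
      simp only [Equiv.neg_apply, map_mul, dot_conj, h, Complex.conj_conj, Complex.conj_I,
        sub_neg_eq_add]
      ring
    rw [Complex.ofReal_mul, e1, e2, h1, ← tsum_mul_right, ← tsum_mul_left]
    congr 1
    funext β
    rw [← tsum_mul_left, ← tsum_mul_left]
    congr 1
    funext α
    simp only [Ph2, FF, eNo, Equiv.coe_fn_mk, xx_mk, yy_mk, sub_add_cancel]
    linear_combination -((wt s p : ℂ) * (starRingEnd ℂ) (f (p + α)) * dot p (fun i => ξ k i α)
      * dot p (fun i => ξ k i β) * f (p - β)) * Complex.I_sq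
  have hsum : Summable fun k => ((hsNorm s (lie (ξ k) f) ^ 2 : ℝ) : ℂ) := by
    simp only [key]
    exact hS'.prod
  refine ⟨Complex.summable_ofReal.mp hsum, ?_⟩
  rw [← eNo.tsum_eq, hS'.tsum_prod]
  simp only [← key]
  rw [← Complex.ofReal_tsum, Complex.ofReal_re]

end FCd

/-- Let `d ≥ 1`, `s > d/2 + 1` and let `(ξ_k)` be vector fields on `𝕋^d`
with `Σ_k ‖ξ_k‖_{H^σ} < ∞` for every `σ ≥ 0`.  Then there is `C > 0` such that for every
scalar `f ∈ H^{s+2}(𝕋^d)`: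
`(D^s Σ_k 𝓛²_{ξ_k} f, D^s f)_{L²} + Σ_k ‖D^s 𝓛_{ξ_k} f‖²_{L²} ≤ C ‖f‖²_{H^s}`. -/
theorem statement7 (d : ℕ) (hd : 1 ≤ d) (s : ℝ) (hs : (d : ℝ) / 2 + 1 < s)
    (ξ : ℕ → Fin d → FCd d)
    (hξmem : ∀ σ : ℝ, 0 ≤ σ → ∀ k : ℕ, ∀ i, FCd.memHs σ (ξ k i))
    (hξreal : ∀ k : ℕ, ∀ i, FCd.isReal (ξ k i))
    (hξsum : ∀ σ : ℝ, 0 ≤ σ → Summable fun k : ℕ => FCd.vecNorm σ (ξ k)) :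
    ∃ C > (0 : ℝ), ∀ f : FCd d, FCd.memHs (s + 2) f → FCd.isReal f →
      Summable (fun k : ℕ => FCd.hsNorm s (FCd.lie (ξ k) f) ^ 2) ∧
      FCd.hsInner s (FCd.tsumFCd fun k => FCd.lie2 (ξ k) f) f
          + ∑' k : ℕ, FCd.hsNorm s (FCd.lie (ξ k) f) ^ 2
        ≤ C * FCd.hsNorm s f ^ 2 := by
  have hs0 : 0 ≤ s := by
    have : (0 : ℝ) ≤ (d : ℝ) / 2 := by positivity
    linarith
  have hgg : ∀ N : ℝ, 0 ≤ N → Summable (FCd.ggN N ξ) := fun N hN =>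
    FCd.summable_gg (FCd.summable_g N hN ξ hξmem hξsum) (fun p => FCd.gN_nonneg N ξ p)
  have hN : 0 ≤ s + 4 + 2 + s / 2 := by positivity
  have hK := FCd.Kc_nonneg hs0
  have hl1 : ∀ N : ℝ, 0 ≤ N → ∀ k i, Summable fun α => FCd.wt N α * ‖ξ k i α‖ := fun N hN k i =>
    (FCd.l1_bound N (ξ k i) (hξmem _ (by positivity) k i)).1
  have hC0 : 0 ≤ ∑' κ, FCd.ggN (s + 4 + 2 + s / 2) ξ κ := tsum_nonneg fun κ => FCd.ggN_nonneg _ ξ κ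
  refine ⟨24 * FCd.Kc s * (4 : ℝ) ^ (s / 2) * (∑' κ, FCd.ggN (s + 4 + 2 + s / 2) ξ κ) + 1,
    by positivity, ?_⟩
  intro f hf _
  have hdec := FCd.decay hs0 f hf
  have hdec' : ∀ m, Real.sqrt (FCd.q m) * ‖f m‖ ≤ FCd.hsNorm (s + 2) f := fun m =>
    (mul_le_mul_of_nonneg_right (Real.sqrt_le_self_iff.mpr (Or.inr (FCd.one_le_q m)))
      (norm_nonneg _)).trans (hdec m)
  have hL1 : ∀ k n, FCd.lie (ξ k) f n
      = ∑' α, Complex.I * FCd.dot n (fun i => ξ k i α) * f (n - α) := fun k n =>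
    FCd.lie_eq (ξ k) f _ hdec' (hl1 _ (by norm_num) k) n
  have hL2 : ∀ k n, FCd.lie2 (ξ k) f n = ∑' α, Complex.I * FCd.dot n (fun i => ξ k i α) *
      ∑' β, Complex.I * FCd.dot (n - α) (fun i => ξ k i β) * f (n - α - β) := by
    intro k n
    obtain ⟨B', hB'⟩ := FCd.lie_bd (ξ k) f _ hdec (hl1 _ (by norm_num) k) (hL1 k)
    have := FCd.lie_eq (ξ k) (FCd.lie (ξ k) f) B' hB' (hl1 _ (by norm_num) k) n
    unfold FCd.lie2
    rw [this]
    simp only [hL1]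
  have hE1 : Summable fun m => (FCd.wt (s / 2 + 1) m * ‖f m‖) ^ 2 := by
    refine hf.congr fun m => ?_
    rw [mul_pow, ← FCd.wt_half_sq (s + 2) m]
    congr 3
    ring
  have hE2' : ∀ m, (FCd.wt (s / 2) m * ‖f m‖) ^ 2 = FCd.wt s m * ‖f m‖ ^ 2 := fun m => by
    rw [mul_pow, FCd.wt_half_sq]
  have hE2 : Summable fun m => (FCd.wt (s / 2) m * ‖f m‖) ^ 2 := by
    refine Summable.of_nonneg_of_le (fun m => sq_nonneg _) (fun m => ?_) hE1
    have := FCd.wt_pos (s / 2) m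
    gcongr
    exact Real.rpow_le_rpow_of_exponent_le (FCd.one_le_q m) (by linarith)
  have M1 := (FCd.master (hgg (s + 2) (by positivity)) (fun κ => FCd.ggN_nonneg _ ξ κ)
    (fun κ => κ.2.2 + κ.2.1) hE1 (fun m => mul_nonneg (FCd.wt_pos _ m).le (norm_nonneg _))).1
  have M2 := FCd.master (hgg _ hN) (fun κ => FCd.ggN_nonneg _ ξ κ)
    (fun κ => κ.2.2 + κ.2.1) hE2 (fun m => mul_nonneg (FCd.wt_pos _ m).le (norm_nonneg _))
  have S1 : Summable (FCd.Ph1 s ξ f) :=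
    Summable.of_norm_bounded (M1.mul_left _) (fun z => (FCd.Ph_bound hs0 ξ f z).1)
  have S2 : Summable (FCd.Ph2 s ξ f) :=
    Summable.of_norm_bounded (M1.mul_left _) (fun z => (FCd.Ph_bound hs0 ξ f z).2)
  obtain ⟨hsum, hnorm⟩ := FCd.norm_eq ξ hξreal f S2 hL1
  refine ⟨hsum, ?_⟩
  rw [FCd.inner_eq ξ f S1 hL2, hnorm]
  obtain ⟨A, hA⟩ : ∃ A, A = ∑' z, FCd.Ph1 s ξ f z := ⟨_, rfl⟩
  obtain ⟨B, hB⟩ : ∃ B, B = ∑' z, FCd.Ph2 s ξ f z := ⟨_, rfl⟩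
  have H1 : HasSum (FCd.Ph1 s ξ f) A := hA ▸ S1.hasSum
  have H2 : HasSum (FCd.Ph2 s ξ f) B := hB ▸ S2.hasSum
  have H1' : HasSum (fun z => (starRingEnd ℂ) (FCd.Ph1 s ξ f (FCd.eConj z))) ((starRingEnd ℂ) A) :=
    Complex.hasSum_conj'.mpr (by
      have h := FCd.eConj.hasSum_iff.mpr H1
      exact h)
  have H3 := (H1.add H1').add (H2.mul_left 2)
  simp only [FCd.quad_eq s ξ hξreal f] at H3
  have H4 := FCd.eSwap.hasSum_iff.mpr H3
  have H5 := H3.add H4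
  have hb : ‖A + (starRingEnd ℂ) A + 2 * B + (A + (starRingEnd ℂ) A + 2 * B)‖
      ≤ ∑' z : FCd.Idx d, (24 * FCd.Kc s * (4 : ℝ) ^ (s / 2)) * (FCd.ggN (s + 4 + 2 + s / 2) ξ z.1 *
      ((FCd.wt (s / 2) (z.2 + (z.1.2.2 + z.1.2.1)) * ‖f (z.2 + (z.1.2.2 + z.1.2.1))‖)
        * (FCd.wt (s / 2) z.2 * ‖f z.2‖))) := by
    rw [← H5.tsum_eq]
    refine tsum_of_norm_bounded (M2.1.mul_left _).hasSum (fun z => ?_)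
    refine le_trans (le_of_eq ?_) (FCd.FG_bound hs0 ξ f z)
    rw [← FCd.G_swap, ← norm_neg]
    congr 1
    simp only [Function.comp]
    ring
  rw [tsum_mul_left] at hb
  have h6 := M2.2
  simp only [hE2'] at h6
  rw [← FCd.hsNorm_sq] at h6
  have h7 : 4 * (A.re + B.re) ≤ ‖A + (starRingEnd ℂ) A + 2 * B + (A + (starRingEnd ℂ) A + 2 * B)‖ := by
    refine le_trans (le_of_eq ?_) (Complex.re_le_norm _)
    simp only [Complex.add_re, Complex.mul_re, Complex.conj_re, Complex.re_ofNat, Complex.im_ofNat]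
    ring
  have hc : 0 ≤ 24 * FCd.Kc s * (4 : ℝ) ^ (s / 2) := by positivity
  have h8 := hb.trans (mul_le_mul_of_nonneg_left h6 hc)
  rw [← hA, ← hB]
  have hf0 : 0 ≤ FCd.hsNorm s f ^ 2 := sq_nonneg _
  have h9 : 0 ≤ 24 * FCd.Kc s * (4 : ℝ) ^ (s / 2) * ((∑' κ, FCd.ggN (s + 4 + 2 + s / 2) ξ κ)
    * FCd.hsNorm s f ^ 2) := by positivity
  rw [add_mul, one_mul, mul_assoc]
  linarith
end
end

section
/- Let s > 7/2. There is a constant C = C(s) > 0 such that for all θ, ρ ∈ H^s(𝕋): |((𝓗ρ) ∂_x ρ − (𝓗θ) ∂_x θ, θ − ρ)_{H^{s-2}}| ≤ C (‖θ‖_{H^s} + ‖ρ‖_{H^s}) ‖θ − ρ‖²_{H^{s-2}}. -/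
noncomputable section
open scoped BigOperators

namespace FC

lemma base_pos (k : ℤ) : (0:ℝ) < 1 + (k : ℝ) ^ 2 := by positivity

lemma base_one (k : ℤ) : (1:ℝ) ≤ 1 + (k : ℝ) ^ 2 := by nlinarith [sq_nonneg (k:ℝ)]

lemma wt_pos (s : ℝ) (k : ℤ) : 0 < wt s k := Real.rpow_pos_of_pos (base_pos k) s

lemma wt_add (a b : ℝ) (k : ℤ) : wt (a + b) k = wt a k * wt b k :=
  Real.rpow_add (base_pos k) a b

lemma wt_mono {a b : ℝ} (h : a ≤ b) (k : ℤ) : wt a k ≤ wt b k :=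
  Real.rpow_le_rpow_of_exponent_le (base_one k) h

lemma abs_le_wt (k : ℤ) : |(k:ℝ)| ≤ wt (1/2) k := by
  unfold wt
  rw [← Real.sqrt_eq_rpow]
  apply Real.abs_le_sqrt
  linarith

lemma wt_half_sq (a : ℝ) (k : ℤ) : wt (a/2) k ^ 2 = wt a k := by
  rw [sq, ← wt_add]; congr 1; ring

lemma peetre {a : ℝ} (ha : 0 ≤ a) (k m : ℤ) :
    wt a k ≤ 2 ^ a * (wt a m * wt a (k - m)) := by
  unfold wt
  rw [← Real.mul_rpow (base_pos _).le (base_pos _).le,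
    ← Real.mul_rpow (by norm_num) (mul_pos (base_pos _) (base_pos _)).le]
  apply Real.rpow_le_rpow (base_pos _).le _ ha
  push_cast
  nlinarith [sq_nonneg ((k:ℝ) - 2 * m), sq_nonneg ((m:ℝ) * (k - m)), sq_nonneg ((k:ℝ)-m),
    sq_nonneg (m:ℝ)]

lemma rpow_diff {r : ℝ} (hr : 1 ≤ r) {u v : ℝ} (hv : 0 < v) (h : v ≤ u) :
    u ^ r - v ^ r ≤ r * u ^ (r - 1) * (u - v) := by
  have hu : 0 < u := lt_of_lt_of_le hv h
  -- Bernoulli at `v / u`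
  have hb := one_add_mul_self_le_rpow_one_add (s := v / u - 1)
    (by have := div_pos hv hu; linarith) hr
  have e1 : 1 + (v / u - 1) = v / u := by ring
  rw [e1, Real.div_rpow hv.le hu.le] at hb
  have hur : 0 < u ^ r := Real.rpow_pos_of_pos hu r
  rw [le_div_iff₀ hur] at hb
  have e2 : u ^ r = u ^ (r - 1) * u := by
    rw [← Real.rpow_add_one hu.ne']; congr 1; ring
  have e3 : (1 + r * (v / u - 1)) * u ^ r = u ^ r - r * u ^ (r-1) * (u - v) := by
    rw [e2]; field_simp; ring
  linarith

lemma wt_symm_sub (a : ℝ) (k m : ℤ) : wt a (k - m) = wt a (m - k) := by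
  unfold wt; congr 1; push_cast; ring

lemma kernel_aux {r : ℝ} (hr : 1 ≤ r) (k m : ℤ) (h : 1 + (m:ℝ)^2 ≤ 1 + (k:ℝ)^2) :
    |(m:ℝ) * wt r k - k * wt r m| ≤
      (2 * r * 2 ^ ((r-1)/2) + 1) * (wt (r/2) k * wt (r/2) m * wt (r/2) (k - m)) := by
  have h0 : 0 ≤ wt r k - wt r m := by
    have := Real.rpow_le_rpow (base_pos m).le h (by linarith : 0 ≤ r)
    unfold wt; linarith
  have hd : wt r k - wt r m ≤ r * wt (r-1) k * (|((k - m : ℤ) : ℝ)| * (2 * wt (1/2) k)) := by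
    have h1 := rpow_diff hr (base_pos m) h
    refine h1.trans ?_
    apply mul_le_mul_of_nonneg_left
    · have e : 1 + (k:ℝ)^2 - (1 + (m:ℝ)^2) = ((k - m : ℤ) : ℝ) * (k + m) := by push_cast; ring
      rw [e]
      refine (le_abs_self _).trans ?_
      rw [abs_mul]
      apply mul_le_mul_of_nonneg_left _ (abs_nonneg _)
      have hm : |(m:ℝ)| ≤ wt (1/2) k := by
        unfold wt; rw [← Real.sqrt_eq_rpow]; apply Real.abs_le_sqrt; linarith
      linarith [abs_add_le (k:ℝ) m, abs_le_wt k]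
    · have := wt_pos (r-1) k
      unfold wt at this; positivity
  have hW := wt_pos r m
  have e : (m:ℝ) * wt r k - k * wt r m
      = m * (wt r k - wt r m) - ((k - m : ℤ) : ℝ) * wt r m := by push_cast; ring
  rw [e]
  refine (abs_sub _ _).trans ?_
  rw [abs_mul, abs_mul, abs_of_nonneg h0, abs_of_pos hW, add_mul]
  have p1 := wt_pos (1/2) m
  have hn := abs_le_wt (k - m)
  have q : ∀ a (j : ℤ), 0 < wt a j := wt_pos
  apply add_le_add
  · have hp := peetre (a := (r-1)/2) (by linarith) k m
    calc |(m:ℝ)| * (wt r k - wt r m)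
        ≤ wt (1/2) m * (r * wt (r-1) k * (wt (1/2) (k-m) * (2 * wt (1/2) k))) := by
          apply mul_le_mul (abs_le_wt m) _ h0 p1.le
          refine hd.trans ?_
          have := q (r-1) k
          have := q (1/2) k
          gcongr
      _ = 2 * r * wt (1/2) m * wt (1/2) (k-m) * (wt (r/2) k) * wt ((r-1)/2) k := by
          have : wt (r/2) k * wt ((r-1)/2) k = wt (r-1) k * wt (1/2) k := by
            rw [← wt_add, ← wt_add]; congr 1; ring
          linear_combination (-2 * r * wt (1/2) m * wt (1/2) (k-m)) * this
      _ ≤ 2 * r * wt (1/2) m * wt (1/2) (k-m) * (wt (r/2) k) *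
            (2 ^ ((r-1)/2) * (wt ((r-1)/2) m * wt ((r-1)/2) (k - m))) := by
          have := q (1/2) (k-m)
          have := q (r/2) k
          gcongr
      _ = _ := by
          have e1 : ∀ j, wt (r/2) j = wt (1/2) j * wt ((r-1)/2) j := by
            intro j; rw [← wt_add]; congr 1; ring
          rw [e1 m, e1 (k-m)]; ring
  · have hmk : wt (r/2) m ≤ wt (r/2) k := Real.rpow_le_rpow (base_pos m).le h (by linarith)
    have e1 : wt r m = wt (r/2) m * wt (r/2) m := by rw [← wt_add]; congr 1; ring
    have hn2 : |((k-m : ℤ) : ℝ)| ≤ wt (r/2) (k-m) := hn.trans (wt_mono (by linarith) _)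
    rw [e1]
    have := q (r/2) m
    have := q (r/2) (k-m)
    calc _ ≤ wt (r/2) (k-m) * (wt (r/2) k * wt (r/2) m) := by gcongr
      _ = _ := by ring

lemma kernel {r : ℝ} (hr : 1 ≤ r) (k m : ℤ) :
    |(m:ℝ) * wt r k - k * wt r m| ≤
      (2 * r * 2 ^ ((r-1)/2) + 1) * (wt (r/2) k * wt (r/2) m * wt (r/2) (k - m)) := by
  rcases le_total (1 + (m:ℝ)^2) (1 + (k:ℝ)^2) with h | h
  · exact kernel_aux hr k m h
  · have := kernel_aux hr m k h
    rw [abs_sub_comm, wt_symm_sub, mul_comm (wt (r/2) k)]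
    exact this

/-- The shear `(k, m) ↦ (k - m, k)`. -/
def shear : ℤ × ℤ ≃ ℤ × ℤ where
  toFun p := (p.1 - p.2, p.1)
  invFun q := (q.2, q.2 - q.1)
  left_inv p := by ext <;> simp
  right_inv q := by ext <;> simp

/-- The shear `(k, m) ↦ (k - m, m)`. -/
def shear' : ℤ × ℤ ≃ ℤ × ℤ where
  toFun p := (p.1 - p.2, p.2)
  invFun q := (q.1 + q.2, q.2)
  left_inv p := by ext <;> simp
  right_inv q := by ext <;> simp

lemma young {g x : ℤ → ℝ} (hg : ∀ n, 0 ≤ g n) (hx : ∀ n, 0 ≤ x n) (sg : Summable g)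
    (sx : Summable fun n => x n ^ 2) :
    Summable (fun p : ℤ × ℤ => g (p.1 - p.2) * (x p.1 * x p.2)) ∧
    ∑' p : ℤ × ℤ, g (p.1 - p.2) * (x p.1 * x p.2) ≤ (∑' n, g n) * ∑' n, x n ^ 2 := by
  have s0 : Summable (fun q : ℤ × ℤ => g q.1 * x q.2 ^ 2) :=
    sg.mul_of_nonneg sx hg (fun n => sq_nonneg _)
  have t0 : ∑' q : ℤ × ℤ, g q.1 * x q.2 ^ 2 = (∑' n, g n) * ∑' n, x n ^ 2 :=
    (sg.tsum_mul_tsum sx s0).symm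
  have s1 : Summable (fun p : ℤ × ℤ => g (p.1 - p.2) * x p.1 ^ 2) :=
    (shear.summable_iff (f := fun q : ℤ × ℤ => g q.1 * x q.2 ^ 2)).2 s0
  have s2 : Summable (fun p : ℤ × ℤ => g (p.1 - p.2) * x p.2 ^ 2) :=
    (shear'.summable_iff (f := fun q : ℤ × ℤ => g q.1 * x q.2 ^ 2)).2 s0
  have t1 : ∑' p : ℤ × ℤ, g (p.1 - p.2) * x p.1 ^ 2 = (∑' n, g n) * ∑' n, x n ^ 2 :=
    (shear.tsum_eq (fun q : ℤ × ℤ => g q.1 * x q.2 ^ 2)).trans t0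
  have t2 : ∑' p : ℤ × ℤ, g (p.1 - p.2) * x p.2 ^ 2 = (∑' n, g n) * ∑' n, x n ^ 2 :=
    (shear'.tsum_eq (fun q : ℤ × ℤ => g q.1 * x q.2 ^ 2)).trans t0
  have s3 := (s1.add s2).mul_left (1/2)
  have hle : ∀ p : ℤ × ℤ, g (p.1 - p.2) * (x p.1 * x p.2) ≤
      1/2 * (g (p.1 - p.2) * x p.1 ^ 2 + g (p.1 - p.2) * x p.2 ^ 2) := fun p => by
    nlinarith [mul_nonneg (hg (p.1 - p.2)) (sq_nonneg (x p.1 - x p.2))]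
  have s4 : Summable (fun p : ℤ × ℤ => g (p.1 - p.2) * (x p.1 * x p.2)) :=
    Summable.of_nonneg_of_le (fun p => mul_nonneg (hg _) (mul_nonneg (hx _) (hx _))) hle s3
  refine ⟨s4, (s4.tsum_le_tsum hle s3).trans ?_⟩
  rw [tsum_mul_left, s1.tsum_add s2, t1, t2]
  apply le_of_eq; ring

lemma summable_wt : Summable (wt (-1)) := by
  have h : Summable fun n : ℤ => 1 / (n:ℝ)^2 := by
    exact_mod_cast Real.summable_one_div_int_pow.2 (by norm_num : 1 < 2)
  refine Summable.of_norm_bounded_eventually h ?_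
  have : {x : ℤ | ¬ ‖wt (-1) x‖ ≤ 1 / (x:ℝ)^2} ⊆ {0} := by
    intro x hx
    by_contra hx0
    apply hx
    have hx0 : x ≠ 0 := hx0
    rw [Real.norm_of_nonneg (wt_pos _ _).le, wt, Real.rpow_neg_one, ← one_div]
    have : (0:ℝ) < (x:ℝ)^2 := by positivity
    apply one_div_le_one_div_of_le this; linarith
  exact (Set.finite_singleton 0).subset this

/-- The weighted `ℓ¹` sequence. -/
def gw (s : ℝ) (c : FC) (n : ℤ) : ℝ := wt ((s-1)/2) n * ‖c n‖

lemma gw_nonneg (s : ℝ) (c : FC) (n : ℤ) : 0 ≤ gw s c n :=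
  mul_nonneg (wt_pos _ _).le (norm_nonneg _)

lemma gw_sum (s : ℝ) (c : FC) (hc : memHs s c) :
    Summable (gw s c) ∧ ∑' n, gw s c n ≤ Real.sqrt (∑' n, wt (-1) n) * hsNorm s c := by
  have e : ∀ n, gw s c n = wt (-1/2) n * (wt (s/2) n * ‖c n‖) := fun n => by
    unfold gw; rw [← mul_assoc, ← wt_add]; congr 2; ring
  have e1 : ∀ n, wt (-1/2) n ^ (2:ℝ) = wt (-1) n := fun n => by
    rw [Real.rpow_two, wt_half_sq]
  have e2 : ∀ n, (wt (s/2) n * ‖c n‖) ^ (2:ℝ) = wt s n * ‖c n‖^2 := fun n => by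
    rw [Real.rpow_two, mul_pow, wt_half_sq]
  have h' := Real.summable_mul_of_Lp_Lq_of_nonneg (p := 2) (q := 2)
    (f := fun n => wt (-1/2) n) (g := fun n => wt (s/2) n * ‖c n‖)
    (by constructor <;> norm_num) (fun n => (wt_pos _ _).le)
    (fun n => mul_nonneg (wt_pos _ _).le (norm_nonneg _))
    (by simp_rw [e1]; exact summable_wt) (by simp_rw [e2]; exact hc)
  have h := Real.inner_le_Lp_mul_Lq_tsum_of_nonneg (p := 2) (q := 2)
    (f := fun n => wt (-1/2) n) (g := fun n => wt (s/2) n * ‖c n‖)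
    (by constructor <;> norm_num) (fun n => (wt_pos _ _).le)
    (fun n => mul_nonneg (wt_pos _ _).le (norm_nonneg _))
    (by simp_rw [e1]; exact summable_wt) (by simp_rw [e2]; exact hc)
  simp_rw [e1, e2, ← e] at h
  simp_rw [← e] at h'
  rw [hsNorm, Real.sqrt_eq_rpow, Real.sqrt_eq_rpow]
  exact ⟨h', h⟩

lemma memHs_mono {a b : ℝ} (h : a ≤ b) {c : FC} (hc : memHs b c) : memHs a c :=
  Summable.of_nonneg_of_le (fun k => mul_nonneg (wt_pos _ _).le (sq_nonneg _))
    (fun k => mul_le_mul_of_nonneg_right (wt_mono h k) (sq_nonneg _)) hc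

lemma memHs_sub {a : ℝ} {c d : FC} (hc : memHs a c) (hd : memHs a d) : memHs a (c - d) := by
  refine Summable.of_nonneg_of_le (fun k => mul_nonneg (wt_pos _ _).le (sq_nonneg _)) ?_
    ((hc.add hd).mul_left 2)
  intro k
  have h1 : ‖(c - d) k‖ ≤ ‖c k‖ + ‖d k‖ := norm_sub_le _ _
  have h2 : ‖(c - d) k‖^2 ≤ 2 * (‖c k‖^2 + ‖d k‖^2) := by
    nlinarith [norm_nonneg ((c-d) k), sq_nonneg (‖c k‖ - ‖d k‖)]
  have := wt_pos a k
  nlinarith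

lemma norm_hilbert (c : FC) (k : ℤ) : ‖hilbert c k‖ ≤ ‖c k‖ := by
  unfold hilbert
  rw [norm_mul, norm_mul, norm_neg, Complex.norm_I, one_mul]
  refine mul_le_of_le_one_left (norm_nonneg _) ?_
  rcases lt_trichotomy k 0 with h | h | h
  · simp [Int.sign_eq_neg_one_of_neg h]
  · simp [h]
  · simp [Int.sign_eq_one_of_pos h]

lemma norm_D1 (c : FC) (k : ℤ) : ‖D1 c k‖ = |(k:ℝ)| * ‖c k‖ := by
  unfold D1
  rw [norm_mul, norm_mul, Complex.norm_I, one_mul, Complex.norm_intCast]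

lemma hilbert_real {c : FC} (h : isReal c) (k : ℤ) :
    hilbert c (-k) = (starRingEnd ℂ) (hilbert c k) := by
  unfold hilbert
  rw [h k]; simp

lemma memHs_hilbert {a : ℝ} {c : FC} (hc : memHs a c) : memHs a (hilbert c) :=
  Summable.of_nonneg_of_le (fun k => mul_nonneg (wt_pos _ _).le (sq_nonneg _))
    (fun k => mul_le_mul_of_nonneg_left
      (pow_le_pow_left₀ (norm_nonneg _) (norm_hilbert c k) 2) (wt_pos _ _).le) hc

lemma memHs_D1 {a : ℝ} {c : FC} (hc : memHs (a+1) c) : memHs a (D1 c) := by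
  refine Summable.of_nonneg_of_le (fun k => mul_nonneg (wt_pos _ _).le (sq_nonneg _)) ?_ hc
  intro k
  rw [norm_D1, wt_add, mul_assoc, mul_pow, sq_abs]
  have : (k:ℝ)^2 ≤ wt 1 k := by unfold wt; rw [Real.rpow_one]; linarith
  have := wt_pos a k
  gcongr

lemma conv_summable {c d : FC} (hc : memHs 0 c) (hd : memHs 0 d) (k : ℤ) :
    Summable fun j : ℤ => c j * d (k - j) := by
  have z : ∀ j, wt 0 j = 1 := fun j => Real.rpow_zero _
  simp only [memHs, z, one_mul] at hc hd
  have hd' := (Equiv.subLeft k).summable_iff.2 hd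
  refine Summable.of_norm_bounded (hc.add hd') fun j => ?_
  simp only [Function.comp, Equiv.subLeft_apply]
  rw [norm_mul]
  nlinarith [sq_nonneg (‖c j‖ - ‖d (k-j)‖), sq_nonneg ‖c j‖, sq_nonneg ‖d (k-j)‖]

lemma term1_bound {s : ℝ} (hs : 2 ≤ s) (θ w : FC) (k m : ℤ) :
    ‖(wt (s-2) k : ℂ) * ((hilbert w m * D1 θ (k - m)) * (starRingEnd ℂ) (w k))‖ ≤
      2 ^ ((s-2)/2) * (gw s θ (k - m) *
        ((wt ((s-2)/2) k * ‖w k‖) * (wt ((s-2)/2) m * ‖w m‖))) := by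
  rw [norm_mul, norm_mul, norm_mul, RCLike.norm_conj, norm_D1, Complex.norm_real,
    Real.norm_of_nonneg (wt_pos _ _).le]
  have e1 : wt (s-2) k = wt ((s-2)/2) k * wt ((s-2)/2) k := by rw [← wt_add]; congr 1; ring
  have e2 : wt ((s-1)/2) (k-m) = wt ((s-2)/2) (k-m) * wt (1/2) (k-m) := by
    rw [← wt_add]; congr 1; ring
  have hp := peetre (a := (s-2)/2) (by linarith) k m
  have q := wt_pos
  have h1 := q ((s-2)/2) k
  have h2 := q ((s-2)/2) m
  have h3 := q ((s-2)/2) (k-m)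
  have h4 := q (1/2) (k-m)
  calc _ ≤ wt ((s-2)/2) k * (2 ^ ((s-2)/2) * (wt ((s-2)/2) m * wt ((s-2)/2) (k - m))) *
        ((‖w m‖ * (wt (1/2) (k-m) * ‖θ (k-m)‖)) * ‖w k‖) := by
        rw [e1]
        have := norm_hilbert w m
        have := abs_le_wt (k-m)
        gcongr
    _ = _ := by unfold gw; rw [e2]; ring

lemma term2_bound {s : ℝ} (hs : 2 ≤ s) (ρ w : FC) (k m : ℤ) :
    ‖(wt (s-2) k : ℂ) * ((hilbert ρ (k - m) * D1 w m) * (starRingEnd ℂ) (w k))‖ ≤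
      2 ^ ((s-2)/2) * (gw s ρ (k - m) *
        ((wt (s/2) k * ‖w k‖) * (wt (s/2) m * ‖w m‖))) := by
  rw [norm_mul, norm_mul, norm_mul, RCLike.norm_conj, norm_D1, Complex.norm_real,
    Real.norm_of_nonneg (wt_pos _ _).le]
  have e1 : wt (s-2) k = wt ((s-2)/2) k * wt ((s-2)/2) k := by rw [← wt_add]; congr 1; ring
  have l1 : wt ((s-2)/2) (k-m) ≤ wt ((s-1)/2) (k-m) := wt_mono (by linarith) _
  have l2 : wt ((s-2)/2) k ≤ wt (s/2) k := wt_mono (by linarith) _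
  have l3 : wt ((s-2)/2) m * wt (1/2) m ≤ wt (s/2) m := by
    rw [← wt_add]; exact wt_mono (by linarith) _
  have hp := peetre (a := (s-2)/2) (by linarith) k m
  have q := wt_pos
  have h1 := q ((s-2)/2) k
  have h2 := q ((s-2)/2) m
  have h3 := q ((s-2)/2) (k-m)
  have h4 := q (1/2) m
  have h5 := q ((s-1)/2) (k-m)
  have h6 := q (s/2) k
  calc _ ≤ wt ((s-2)/2) k * (2 ^ ((s-2)/2) * (wt ((s-2)/2) m * wt ((s-2)/2) (k - m))) *
        ((‖ρ (k-m)‖ * (wt (1/2) m * ‖w m‖)) * ‖w k‖) := by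
        rw [e1]
        have := norm_hilbert ρ (k-m)
        have := abs_le_wt m
        gcongr
    _ = 2 ^ ((s-2)/2) * ((wt ((s-2)/2) (k-m) * ‖ρ (k-m)‖) *
          ((wt ((s-2)/2) k * ‖w k‖) * ((wt ((s-2)/2) m * wt (1/2) m) * ‖w m‖))) := by ring
    _ ≤ _ := by unfold gw; gcongr

lemma term2_symm {s : ℝ} (hs : 3 ≤ s) (ρ w : FC) (hρ : isReal ρ) (k m : ℤ) :
    ‖(wt (s-2) k : ℂ) * ((hilbert ρ (k - m) * D1 w m) * (starRingEnd ℂ) (w k)) +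
      (starRingEnd ℂ) ((wt (s-2) m : ℂ) *
        ((hilbert ρ (m - k) * D1 w k) * (starRingEnd ℂ) (w m)))‖ ≤
      (2 * (s-2) * 2 ^ ((s-2-1)/2) + 1) * (gw s ρ (k - m) *
        ((wt ((s-2)/2) k * ‖w k‖) * (wt ((s-2)/2) m * ‖w m‖))) := by
  have e : (wt (s-2) k : ℂ) * ((hilbert ρ (k - m) * D1 w m) * (starRingEnd ℂ) (w k)) +
      (starRingEnd ℂ) ((wt (s-2) m : ℂ) *
        ((hilbert ρ (m - k) * D1 w k) * (starRingEnd ℂ) (w m))) =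
      (((m:ℝ) * wt (s-2) k - k * wt (s-2) m : ℝ) : ℂ) *
        (Complex.I * hilbert ρ (k-m) * w m * (starRingEnd ℂ) (w k)) := by
    have h1 : hilbert ρ (k - m) = (starRingEnd ℂ) (hilbert ρ (m - k)) := by
      rw [← hilbert_real hρ]; congr 1; ring
    simp only [map_mul, ← h1, D1, Complex.conj_conj, Complex.conj_ofReal, Complex.conj_I,
      map_intCast]
    push_cast
    ring
  rw [e, norm_mul, norm_mul, norm_mul, norm_mul, RCLike.norm_conj, Complex.norm_I,
    Complex.norm_real, Real.norm_eq_abs, one_mul]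
  have hk := kernel (r := s-2) (by linarith) k m
  have l1 : wt ((s-2)/2) (k-m) ≤ wt ((s-1)/2) (k-m) := wt_mono (by linarith) _
  have q := wt_pos
  have h1 := q ((s-2)/2) k
  have h2 := q ((s-2)/2) m
  have h3 := q ((s-2)/2) (k-m)
  have h4 := q ((s-1)/2) (k-m)
  have hc : 0 < 2 * (s-2) * 2 ^ ((s-2-1)/2) + 1 := by
    have : (0:ℝ) < 2 ^ ((s-2-1)/2) := by positivity
    have : 0 < s - 2 := by linarith
    positivity
  calc _ ≤ (2 * (s-2) * 2 ^ ((s-2-1)/2) + 1) *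
        (wt ((s-2)/2) k * wt ((s-2)/2) m * wt ((s-1)/2) (k - m)) *
        (‖ρ (k-m)‖ * ‖w m‖ * ‖w k‖) := by
        have := norm_hilbert ρ (k-m)
        refine mul_le_mul (hk.trans ?_) ?_ (by positivity) (by positivity)
        · gcongr
        · gcongr
    _ = _ := by unfold gw; ring

lemma sum_sq (a : ℝ) (w : FC) : (fun n => (wt (a/2) n * ‖w n‖) ^ 2) =
    fun n => wt a n * ‖w n‖ ^ 2 := by
  funext n; rw [mul_pow, wt_half_sq]

lemma hsNorm_sq (a : ℝ) (w : FC) : hsNorm a w ^ 2 = ∑' n, wt a n * ‖w n‖ ^ 2 :=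
  Real.sq_sqrt (tsum_nonneg fun n => mul_nonneg (wt_pos _ _).le (sq_nonneg _))

lemma norm_tsum_bound {s : ℝ} {c w : FC} (hc : memHs s c) (hw : memHs (s-2) w)
    {F : ℤ × ℤ → ℂ} {A : ℝ} (hA : 0 ≤ A)
    (h : ∀ p : ℤ × ℤ, ‖F p‖ ≤ A * (gw s c (p.1 - p.2) *
        ((wt ((s-2)/2) p.1 * ‖w p.1‖) * (wt ((s-2)/2) p.2 * ‖w p.2‖)))) :
    Summable F ∧ ‖∑' p, F p‖ ≤
      A * (Real.sqrt (∑' n, wt (-1) n) * hsNorm s c) * hsNorm (s-2) w ^ 2 := by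
  obtain ⟨g1, g2⟩ := gw_sum s c hc
  obtain ⟨y1, y2⟩ := young (g := gw s c) (x := fun n => wt ((s-2)/2) n * ‖w n‖)
    (gw_nonneg s c) (fun n => mul_nonneg (wt_pos _ _).le (norm_nonneg _)) g1
    (by rw [sum_sq]; exact hw)
  rw [sum_sq, ← hsNorm_sq] at y2
  have y3 := y1.mul_left A
  refine ⟨Summable.of_norm_bounded y3 h, (tsum_of_norm_bounded y3.hasSum h).trans ?_⟩
  rw [tsum_mul_left, mul_assoc]
  refine mul_le_mul_of_nonneg_left (y2.trans ?_) hA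
  exact mul_le_mul_of_nonneg_right g2 (sq_nonneg _)

lemma D1_sub (c d : FC) : D1 (c - d) = D1 c - D1 d := by
  funext k; simp only [D1, Pi.sub_apply]; ring

lemma hilbert_sub (c d : FC) : hilbert (c - d) = hilbert c - hilbert d := by
  funext k; simp only [hilbert, Pi.sub_apply]; ring

lemma mul_diff {s : ℝ} (hs : 1 ≤ s) {θ ρ : FC} (hθ : memHs s θ) (hρ : memHs s ρ) (k : ℤ) :
    (mul (hilbert ρ) (D1 ρ) - mul (hilbert θ) (D1 θ)) k =
      -((∑' m, hilbert (θ - ρ) m * D1 θ (k - m)) + ∑' m, hilbert ρ (k - m) * D1 (θ - ρ) m) := by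
  have hw := memHs_sub hθ hρ
  have a : ∀ {c : FC}, memHs s c → memHs 0 (hilbert c) := fun h =>
    memHs_mono (by linarith) (memHs_hilbert h)
  have b : ∀ {c : FC}, memHs s c → memHs 0 (D1 c) := fun h =>
    memHs_D1 (memHs_mono (by linarith) h)
  have e : ∑' m, hilbert ρ (k - m) * D1 (θ - ρ) m = ∑' j, hilbert ρ j * D1 (θ - ρ) (k - j) := by
    rw [← (Equiv.subLeft k).tsum_eq]
    simp
  rw [e, ← (conv_summable (a hw) (b hθ) k).tsum_add (conv_summable (a hρ) (b hw) k), ← tsum_neg]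
  simp only [Pi.sub_apply, mul]
  rw [← (conv_summable (a hρ) (b hρ) k).tsum_sub (conv_summable (a hθ) (b hθ) k)]
  congr 1; funext j
  rw [D1_sub, hilbert_sub]
  simp only [Pi.sub_apply]
  ring

end FC


/-- Let `s > 7/2`.  There is `C = C(s) > 0` such that for all
`θ, ρ ∈ H^s(𝕋)`:
`|((𝓗ρ) ∂ₓρ − (𝓗θ) ∂ₓθ, θ − ρ)_{H^{s-2}}| ≤ C (‖θ‖_{H^s} + ‖ρ‖_{H^s}) ‖θ − ρ‖²_{H^{s-2}}`. -/
theorem statement11 (s : ℝ) (hs : 7 / 2 < s) :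
    ∃ C > (0 : ℝ), ∀ θ ρ : FC,
      FC.memHs s θ → FC.memHs s ρ → FC.isReal θ → FC.isReal ρ →
      |FC.hsInner (s - 2)
          (FC.mul (FC.hilbert ρ) (FC.D1 ρ) - FC.mul (FC.hilbert θ) (FC.D1 θ)) (θ - ρ)|
        ≤ C * (FC.hsNorm s θ + FC.hsNorm s ρ) * FC.hsNorm (s - 2) (θ - ρ) ^ 2 := by
  set K := Real.sqrt (∑' n, FC.wt (-1) n) with hK
  have hK0 : 0 ≤ K := Real.sqrt_nonneg _
  set A : ℝ := 2 ^ ((s-2)/2) with hA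
  have hA0 : 0 < A := by positivity
  set B : ℝ := 2 * (s-2) * 2 ^ ((s-2-1)/2) + 1 with hB
  have hB0 : 0 < B := by
    have : 0 < s - 2 := by linarith
    positivity
  refine ⟨(A + B) * K + 1, by positivity, ?_⟩
  intro θ ρ hθ hρ _ rρ
  have hw := FC.memHs_sub hθ hρ
  set w : FC := θ - ρ with hwdef
  have hw2 : FC.memHs (s-2) w := FC.memHs_mono (by linarith) hw
  let F1 : ℤ × ℤ → ℂ := fun p => (FC.wt (s-2) p.1 : ℂ) *
    ((FC.hilbert w p.2 * FC.D1 θ (p.1 - p.2)) * (starRingEnd ℂ) (w p.1))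
  let F2 : ℤ × ℤ → ℂ := fun p => (FC.wt (s-2) p.1 : ℂ) *
    ((FC.hilbert ρ (p.1 - p.2) * FC.D1 w p.2) * (starRingEnd ℂ) (w p.1))
  obtain ⟨s1, b1⟩ := FC.norm_tsum_bound (F := F1) hθ hw2 hA0.le
    (fun p => FC.term1_bound (by linarith) θ w p.1 p.2)
  have s2 : Summable F2 := by
    refine Summable.of_norm_bounded (Summable.mul_left A (FC.young (g := FC.gw s ρ)
      (x := fun n => FC.wt (s/2) n * ‖w n‖) (FC.gw_nonneg s ρ)
      (fun n => mul_nonneg (FC.wt_pos _ _).le (norm_nonneg _)) (FC.gw_sum s ρ hρ).1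
      (by rw [FC.sum_sq]; exact hw)).1)
      (fun p => FC.term2_bound (by linarith) ρ w p.1 p.2)
  obtain ⟨_, b2⟩ := FC.norm_tsum_bound
    (F := fun p => F2 p + (starRingEnd ℂ) (F2 p.swap)) hρ hw2 hB0.le
    (fun p => FC.term2_symm (by linarith) ρ w rρ p.1 p.2)
  have s2' : Summable fun p : ℤ × ℤ => F2 p.swap := (Equiv.prodComm ℤ ℤ).summable_iff.2 s2
  have t2' : ∑' p : ℤ × ℤ, F2 p.swap = ∑' p, F2 p := (Equiv.prodComm ℤ ℤ).tsum_eq F2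
  have s2'' : Summable fun p : ℤ × ℤ => (starRingEnd ℂ) (F2 p.swap) :=
    (Complex.hasSum_conj'.2 (by simpa using s2'.hasSum)).summable
  have t2'' : ∑' p : ℤ × ℤ, (F2 p + (starRingEnd ℂ) (F2 p.swap)) =
      ((2 * (∑' p, F2 p).re : ℝ) : ℂ) := by
    rw [s2.tsum_add s2'', ← Complex.conj_tsum, t2', Complex.add_conj]
  rw [t2'', Complex.norm_real, Real.norm_eq_abs, abs_mul, abs_two] at b2
  have key : FC.hsInner (s - 2)
      (FC.mul (FC.hilbert ρ) (FC.D1 ρ) - FC.mul (FC.hilbert θ) (FC.D1 θ)) w =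
      -((∑' p, F1 p).re + (∑' p, F2 p).re) := by
    unfold FC.hsInner
    rw [← Complex.add_re, ← Complex.neg_re]
    congr 1
    rw [s1.tsum_prod, s2.tsum_prod, ← s1.prod.tsum_add s2.prod, ← tsum_neg]
    congr 1; funext k
    rw [FC.mul_diff (by linarith) hθ hρ k]
    simp only [F1, F2]
    rw [tsum_mul_left, tsum_mul_left, tsum_mul_right, tsum_mul_right]
    ring
  rw [key, abs_neg]
  have h1 : |(∑' p, F1 p).re| ≤ ‖∑' p, F1 p‖ := Complex.abs_re_le_norm _
  have h2 := abs_add_le (∑' p, F1 p).re (∑' p, F2 p).re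
  have n1 : 0 ≤ FC.hsNorm s θ := Real.sqrt_nonneg _
  have n2 : 0 ≤ FC.hsNorm s ρ := Real.sqrt_nonneg _
  have n3 : 0 ≤ FC.hsNorm (s-2) w ^ 2 := sq_nonneg _
  have h3 : |(∑' p, F2 p).re| ≤ B * (K * FC.hsNorm s ρ) * FC.hsNorm (s-2) w ^ 2 := by
    have := abs_nonneg (∑' p, F2 p).re
    linarith
  have p1 : 0 ≤ A * K * FC.hsNorm s ρ * FC.hsNorm (s-2) w ^ 2 := by positivity
  have p2 : 0 ≤ B * K * FC.hsNorm s θ * FC.hsNorm (s-2) w ^ 2 := by positivity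
  have p3 : 0 ≤ (FC.hsNorm s θ + FC.hsNorm s ρ) * FC.hsNorm (s-2) w ^ 2 := by positivity
  calc _ ≤ A * (K * FC.hsNorm s θ) * FC.hsNorm (s-2) w ^ 2 +
        B * (K * FC.hsNorm s ρ) * FC.hsNorm (s-2) w ^ 2 := by linarith
    _ ≤ _ := by nlinarith
end
end
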